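/- arXiv:1309.4620 — 2 statements merged into one kernel-verified Lean document; each statement's English description precedes it below -/
import Mathlib

section
/- Let K be a field, let B be a reduced finitely generated commutative K-algebra, let M ⊆ B be a maximal ideal, let A = B_M be the localization, and let Â denote the completion of A at its maximal ideal. Then Â is reduced, and the extension C_A·Â of the conductor of A equals the conductor C_Â = Ann_Â(closure of Â in Q(Â)/Â) of Â; that is, the conductor commutes with completion: C_A·Â = C_Â. -/
set_option synthInstance.maxHeartbeats 1000000
set_option maxHeartbeats 1000000

open scoped nonZeroDivisors

noncomputable section

/-- The conductor of a reduced ring `A` in its integral closure inside `Q(A)`: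
`C_A = {a : A | a · Ā ⊆ A}`. -/
def conductorIdeal (A : Type*) [CommRing A] : Ideal A where
  carrier := {a : A | ∀ x ∈ integralClosure A (FractionRing A),
      algebraMap A (FractionRing A) a * x ∈ (algebraMap A (FractionRing A)).range}
  add_mem' := by
    intro a b ha hb x hx
    rw [map_add, add_mul]
    exact add_mem (ha x hx) (hb x hx)
  zero_mem' := by
    intro x hx
    rw [map_zero, zero_mul]
    exact zero_mem _
  smul_mem' := by
    intro c a ha x hx
    obtain ⟨y, hy⟩ := ha x hx
    refine ⟨c * y, ?_⟩
    rw [map_mul, hy, smul_eq_mul, map_mul, mul_assoc]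


set_option linter.style.haveILetI false
open TensorProduct

-- Part PA
/-- divisibility form of complete integral closedness -/
def CICd (R : Type*) [CommRing R] : Prop :=
  ∀ d a b : R, d ≠ 0 → b ≠ 0 → (∀ n : ℕ, b ^ n ∣ d * a ^ n) → b ∣ a

lemma CICd.of_field (K : Type*) [Field K] : CICd K := by
  intro d a b _ hb _
  exact (isUnit_iff_ne_zero.mpr hb).dvd

lemma CICd.of_ringEquiv {R S : Type*} [CommRing R] [CommRing S] (e : R ≃+* S) (h : CICd R) :
    CICd S := by
  intro d a b hd hb H
  have := h (e.symm d) (e.symm a) (e.symm b) (by simpa using hd) (by simpa using hb) (fun n => by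
    have := map_dvd e.symm (H n)
    simpa using this)
  simpa using map_dvd e this

lemma dvd_mul_sub_pow {R : Type*} [CommRing R] (d a b c : R)
    (H : ∀ n : ℕ, b ^ n ∣ d * a ^ n) (n : ℕ) : b ^ n ∣ d * (a - b * c) ^ n := by
  rw [sub_eq_add_neg, add_pow, Finset.mul_sum]
  refine Finset.dvd_sum fun i hi => ?_
  have hi' : i ≤ n := by simpa [Nat.lt_succ_iff] using hi
  have h1 : b ^ n = b ^ i * b ^ (n - i) := by rw [← pow_add]; congr 1; omega
  rw [h1]
  have h2 : d * (a ^ i * (-(b * c)) ^ (n - i) * (n.choose i : R)) =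
    (d * a ^ i) * (b ^ (n - i) * ((- c) ^ (n - i) * (n.choose i : R))) := by
    rw [show -(b * c) = b * (-c) by ring, mul_pow]; ring
  rw [h2]
  exact mul_dvd_mul (H i) (dvd_mul_right _ _)

open PowerSeries in
lemma CICd.powerSeries_aux {R : Type*} [CommRing R] [IsDomain R] (h : CICd R)
    (d a b : PowerSeries R) (hd : constantCoeff d ≠ 0) (hb : constantCoeff b ≠ 0)
    (H : ∀ n : ℕ, b ^ n ∣ d * a ^ n) : b ∣ a := by
  have hb0 : b ≠ 0 := by rintro rfl; simp at hb
  have step : ∀ a : {a : PowerSeries R // ∀ n : ℕ, b ^ n ∣ d * a ^ n},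
      ∃ c : R, ∃ a' : {a : PowerSeries R // ∀ n : ℕ, b ^ n ∣ d * a ^ n},
        a.1 = b * C c + X * a'.1 := by
    rintro ⟨a, H⟩
    obtain ⟨c, hc⟩ := h (constantCoeff d) (constantCoeff a) (constantCoeff b) hd hb (fun n => by
      have := map_dvd (constantCoeff (R := R)) (H n)
      simpa using this)
    have hX : X ∣ a - b * C c := by
      rw [X_dvd_iff]; simp [hc]
    obtain ⟨a', ha'⟩ := hX
    refine ⟨c, ⟨a', fun n => ?_⟩, by rw [← ha']; ring⟩
    have h1 := dvd_mul_sub_pow d a b (C c) H n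
    rw [ha', mul_pow] at h1
    have h2 : b ^ n ∣ X ^ n * (d * a' ^ n) := by
      convert h1 using 1; ring
    obtain ⟨g, hg⟩ := h2
    have h3 : (X : PowerSeries R) ^ n ∣ b ^ n * g := ⟨_, hg.symm⟩
    have h4 : (X : PowerSeries R) ^ n ∣ g := by
      refine (X_prime (R := R)).pow_dvd_of_dvd_mul_left n (a := b ^ n) (fun hh => ?_) h3
      have := (X_prime (R := R)).dvd_of_dvd_pow hh
      rw [X_dvd_iff] at this
      exact hb this
    obtain ⟨g', rfl⟩ := h4
    refine ⟨g', ?_⟩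
    have : (X : PowerSeries R) ^ n ≠ 0 := pow_ne_zero _ X_ne_zero
    apply mul_left_cancel₀ this
    rw [hg]; ring
  choose c nx hnx using step
  let s : ℕ → {a : PowerSeries R // ∀ n : ℕ, b ^ n ∣ d * a ^ n} := fun k => nx^[k] ⟨a, H⟩
  have hs : ∀ k, (s k).1 = b * C (c (s k)) + X * (s (k+1)).1 := by
    intro k
    have : s (k+1) = nx (s k) := by
      simp only [s, Function.iterate_succ_apply']
    rw [this]; exact hnx _
  refine ⟨PowerSeries.mk fun k => c (s k), ?_⟩
  have key : ∀ k, ∃ r : PowerSeries R, a = b * (PowerSeries.mk fun k => c (s k)) + X ^ k * r := by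
    have key' : ∀ k, ∀ j, (s j).1 - b * (PowerSeries.mk fun i => c (s (i + j))) ∈
        Ideal.span {(X : PowerSeries R) ^ k} := by
      intro k
      induction k with
      | zero => intro j; simp
      | succ k ih =>
        intro j
        have h1 := ih (j+1)
        rw [Ideal.mem_span_singleton] at h1 ⊢
        have h2 : (PowerSeries.mk fun i => c (s (i + j))) = C (c (s j)) +
            X * (PowerSeries.mk fun i => c (s (i + (j+1)))) := by
          ext i
          cases i with
          | zero => simp
          | succ i =>
            simp [coeff_succ_X_mul]
            congr 2; omega
        rw [h2, hs j, pow_succ']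
        have h3 : b * C (c (s j)) + X * (s (j+1)).1 - b * (C (c (s j)) +
          X * (PowerSeries.mk fun i => c (s (i + (j+1))))) =
          X * ((s (j+1)).1 - b * (PowerSeries.mk fun i => c (s (i + (j+1))))) := by ring
        rw [h3]
        exact mul_dvd_mul_left _ h1
    intro k
    obtain ⟨r, hr⟩ := Ideal.mem_span_singleton.mp (key' k 0)
    refine ⟨r, ?_⟩
    rw [← hr]; simp [s]
  ext n
  obtain ⟨r, hr⟩ := key (n+1)
  conv_lhs => rw [hr]
  rw [map_add, coeff_X_pow_mul', if_neg (by omega), add_zero]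


open PowerSeries in
lemma PowerSeries.exists_X_pow_mul {R : Type*} [CommRing R] (f : PowerSeries R) (hf : f ≠ 0) :
    ∃ j f', constantCoeff f' ≠ 0 ∧ f = X ^ j * f' := by
  classical
  have h : ∃ n, coeff n f ≠ 0 := by
    by_contra! hh
    exact hf (PowerSeries.ext fun n => by simpa using hh n)
  obtain ⟨f', hf'⟩ := (X_pow_dvd_iff (n := Nat.find h) (φ := f)).mpr (fun m hm => by
    simpa using Nat.find_min h hm)
  refine ⟨Nat.find h, f', ?_, hf'⟩
  have := Nat.find_spec h
  generalize Nat.find h = N at *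
  rw [hf', coeff_X_pow_mul'] at this
  simpa using this

open PowerSeries in
lemma CICd.powerSeries {R : Type*} [CommRing R] [IsDomain R] (h : CICd R) :
    CICd (PowerSeries R) := by
  intro d a b hd hb H
  by_cases ha : a = 0
  · simp [ha]
  obtain ⟨j, d', hd', rfl⟩ := d.exists_X_pow_mul hd
  obtain ⟨k, b', hb', rfl⟩ := b.exists_X_pow_mul hb
  obtain ⟨l, a', ha', rfl⟩ := a.exists_X_pow_mul ha
  have hnd : ∀ f : PowerSeries R, constantCoeff f ≠ 0 → ¬ X ∣ f := fun f hf hh => hf (X_dvd_iff.mp hh)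
  have hX := X_prime (R := R)
  have hX0 : (X : PowerSeries R) ≠ 0 := X_ne_zero
  have hkl : k ≤ l := by
    by_contra! hlt
    obtain ⟨g, hg⟩ := H (j + 1)
    have h1 : (X : PowerSeries R) ^ (k * (j+1)) ∣ X ^ (j + l * (j+1)) * (d' * a' ^ (j+1)) := by
      refine ⟨b' ^ (j+1) * g, ?_⟩
      rw [pow_add, pow_mul, pow_mul]
      rw [mul_pow, mul_pow] at hg
      linear_combination hg
    have h2 : (X : PowerSeries R) ^ (j + l * (j+1) + 1) ∣ X ^ (k * (j+1)) := pow_dvd_pow _ (by nlinarith)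
    have h3 := h2.trans h1
    rw [pow_succ] at h3
    have h4 := (mul_dvd_mul_iff_left (pow_ne_zero _ hX0)).mp h3
    rcases hX.dvd_or_dvd h4 with h5 | h5
    · exact hnd _ hd' h5
    · exact hnd _ ha' (hX.dvd_of_dvd_pow h5)
  have key : b' ∣ a' := by
    refine CICd.powerSeries_aux h d' a' b' hd' hb' (fun n => ?_)
    have h1 : b' ^ n ∣ X ^ (j + l * n) * (d' * a' ^ n) := by
      refine Dvd.dvd.trans ?_ (dvd_trans (H n) (dvd_of_eq ?_))
      · rw [mul_pow]; exact dvd_mul_left _ _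
      · rw [pow_add, pow_mul]; ring
    obtain ⟨g, hg⟩ := h1
    have h4 : (X : PowerSeries R) ^ (j + l * n) ∣ g := by
      refine hX.pow_dvd_of_dvd_mul_left _ (a := b' ^ n) (fun hh => ?_) ⟨_, hg.symm⟩
      exact hnd _ hb' (hX.dvd_of_dvd_pow hh)
    obtain ⟨g', rfl⟩ := h4
    refine ⟨g', ?_⟩
    apply mul_left_cancel₀ (pow_ne_zero (j + l * n) hX0)
    rw [hg]; ring
  exact mul_dvd_mul (pow_dvd_pow _ hkl) key

lemma CICd.mvPowerSeries (K : Type*) [Field K] (n : ℕ) : CICd (MvPowerSeries (Fin n) K) := by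
  induction n with
  | zero => exact (CICd.of_field K).of_ringEquiv (MvPowerSeries.isEmptyEquiv (σ := Fin 0) (R := K)).symm.toRingEquiv
  | succ n ih =>
    haveI : IsDomain (MvPowerSeries (Fin n) K) := NoZeroDivisors.to_isDomain _
    exact (ih.powerSeries).of_ringEquiv (MvPowerSeries.finSuccEquiv K n).symm.toRingEquiv

instance MvPowerSeries.isIntegrallyClosed_fin (K : Type*) [Field K] (n : ℕ) :
    IsIntegrallyClosed (MvPowerSeries (Fin n) K) := by
  rw [isIntegrallyClosed_iff (FractionRing (MvPowerSeries (Fin n) K))]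
  intro x hx
  obtain ⟨r, hr, H⟩ := hx.isAlmostIntegral
  obtain ⟨a, b, rfl⟩ := IsLocalization.exists_mk'_eq (nonZeroDivisors (MvPowerSeries (Fin n) K)) x
  have hb := nonZeroDivisors.coe_ne_zero b
  obtain ⟨c, hc⟩ := CICd.mvPowerSeries K n r a b (nonZeroDivisors.ne_zero hr) hb (fun m => by
    obtain ⟨c, hc⟩ := H m
    refine ⟨c, IsFractionRing.injective (MvPowerSeries (Fin n) K) (FractionRing (MvPowerSeries (Fin n) K)) ?_⟩
    rw [map_mul, map_mul, hc, map_pow, map_pow, Algebra.smul_def, mul_left_comm, ← mul_pow, mul_comm _ (IsLocalization.mk' _ _ _), IsLocalization.mk'_spec])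
  refine ⟨c, ?_⟩
  rw [IsLocalization.eq_mk'_iff_mul_eq, hc, map_mul, mul_comm]

-- Part PB
open TensorProduct in
lemma flat_colon {D E ι : Type*} [CommRing D] [CommRing E] [Algebra D E] [Module.Flat D E]
    [Finite ι] (I C : Ideal D) (b : ι → D) (hC : ∀ x, (∀ i, b i * x ∈ I) → x ∈ C)
    (w : E) (h : ∀ i, algebraMap D E (b i) * w ∈ I.map (algebraMap D E)) :
    w ∈ C.map (algebraMap D E) := by
  classical
  cases nonempty_fintype ι
  let g : D →ₗ[D] (ι → D ⧸ I) := LinearMap.pi fun i => I.mkQ ∘ₗ LinearMap.mulLeft D (b i)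
  have hex : Function.Exact (LinearMap.ker g).subtype g := by
    rw [LinearMap.exact_iff]; simp
  have hex' := Module.Flat.lTensor_exact E hex
  have h0 : LinearMap.lTensor E g (w ⊗ₜ 1) = 0 := by
    rw [LinearMap.lTensor_tmul]
    have h1 : g 1 = ∑ i, b i • (Pi.single i (1 : D ⧸ I) : ι → D ⧸ I) := by
      ext j
      simp only [g, LinearMap.pi_apply, Finset.sum_apply, Pi.smul_apply, LinearMap.comp_apply,
        LinearMap.mulLeft_apply, Pi.single_apply]
      rw [Finset.sum_eq_single j]
      · simp [Algebra.smul_def]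
      · intro i _ hij; simp [hij.symm]
      · simp
    rw [h1, tmul_sum]
    refine Finset.sum_eq_zero fun i _ => ?_
    rw [← smul_tmul, Algebra.smul_def]
    have : ∀ z ∈ I.map (algebraMap D E), z ⊗ₜ[D] (Pi.single i (1 : D ⧸ I) : ι → D ⧸ I) = 0 := by
      intro z hz
      refine Submodule.span_induction ?_ ?_ ?_ ?_ hz
      · rintro _ ⟨a, ha, rfl⟩
        rw [Algebra.algebraMap_eq_smul_one, smul_tmul]
        have : a • (Pi.single i (1 : D ⧸ I) : ι → D ⧸ I) = 0 := by
          rw [← Pi.single_smul]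
          have : a • (1 : D ⧸ I) = 0 := by
            rw [Algebra.smul_def, mul_one]; exact Ideal.Quotient.eq_zero_iff_mem.mpr ha
          rw [this]; simp
        rw [this, tmul_zero]
      · simp
      · intro x y _ _ hx hy; rw [add_tmul, hx, hy, add_zero]
      · intro a x _ hx
        rw [← smul_tmul', hx, smul_zero]
    exact this _ (h i)
  obtain ⟨t, ht⟩ := (hex' _).mp h0
  have h2 : ∀ t : E ⊗[D] LinearMap.ker g,
      TensorProduct.rid D E (LinearMap.lTensor E (LinearMap.ker g).subtype t) ∈ C.map (algebraMap D E) := by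
    intro t
    induction t with
    | zero => simp
    | add x y hx hy => rw [map_add, map_add]; exact add_mem hx hy
    | tmul e x =>
      simp only [LinearMap.lTensor_tmul, Submodule.subtype_apply, rid_tmul]
      rw [Algebra.smul_def]
      refine Ideal.mul_mem_right _ _ (Ideal.mem_map_of_mem _ (hC _ fun i => ?_))
      have := x.2
      rw [LinearMap.mem_ker] at this
      have := congrFun this i
      exact (Submodule.Quotient.mk_eq_zero _).mp (by simpa [g] using this)
  have := h2 t
  rw [ht] at this
  simpa using this

/-- element integral equation: `i x = e` with x integral implies some power of `e` in `(i)` -/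
lemma exists_pow_mem_span_of_integral {E Q : Type*} [CommRing E] [CommRing Q] [Algebra E Q]
    (hinj : Function.Injective (algebraMap E Q)) {x : Q} (hx : IsIntegral E x) (i e : E)
    (h : algebraMap E Q e = algebraMap E Q i * x) : ∃ n, e ^ n ∈ Ideal.span {i} := by
  obtain ⟨p, hp, hpx⟩ := hx
  have h1 := Polynomial.scaleRoots_eval₂_eq_zero (algebraMap E Q) (s := i) hpx
  rw [← h, Polynomial.eval₂_at_apply] at h1
  have h2 : (p.scaleRoots i).eval e = 0 := hinj (by rw [h1, map_zero])
  refine ⟨p.natDegree, ?_⟩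
  rw [Polynomial.eval_eq_sum_range, Polynomial.natDegree_scaleRoots, Finset.sum_range_succ,
    Polynomial.coeff_scaleRoots_natDegree, hp.leadingCoeff, one_mul] at h2
  rw [← neg_eq_of_add_eq_zero_right h2]
  refine neg_mem (Ideal.sum_mem _ fun k hk => ?_)
  rw [Polynomial.coeff_scaleRoots]
  rw [Finset.mem_range] at hk
  refine Ideal.mul_mem_right _ _ (Ideal.mul_mem_left _ _ ?_)
  exact Ideal.pow_mem_of_mem _ (Ideal.mem_span_singleton_self i) _ (by omega)

lemma grauert_remmert {E Q : Type*} [CommRing E] [CommRing Q] [Algebra E Q]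
    (hinj : Function.Injective (algebraMap E Q)) (d : E)
    (hd : ∀ z z' : Q, algebraMap E Q d * z = algebraMap E Q d * z' → z = z') (J : Ideal E) (hdJ : d ∈ J)
    (hJ : J.IsRadical) (N : ℕ) (hN : J ^ N ≤ Ideal.span {d})
    (hcol : ∀ w : E, (∀ j ∈ J, ∃ j' ∈ J, j * w = d * j') → d ∣ w)
    (y : Q) (hy : IsIntegral E y) (hdy : ∃ e, algebraMap E Q d * y = algebraMap E Q e) :
    ∃ e, algebraMap E Q e = y := by
  let S := Algebra.adjoin E {y}
  have hS : ∀ z ∈ S, ∃ k, ∃ e, algebraMap E Q (d ^ k) * z = algebraMap E Q e := by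
    intro z hz
    induction hz using Algebra.adjoin_induction with
    | mem x hx => rw [Set.mem_singleton_iff] at hx; subst hx; exact ⟨1, by simpa using hdy⟩
    | algebraMap r => exact ⟨0, r, by simp⟩
    | add a b _ _ ha hb =>
      obtain ⟨k, e, h⟩ := ha
      obtain ⟨k', e', h'⟩ := hb
      refine ⟨k + k', d ^ k' * e + d ^ k * e', ?_⟩
      rw [pow_add]
      simp only [map_mul, map_add, ← h, ← h']; ring
    | mul a b _ _ ha hb =>
      obtain ⟨k, e, h⟩ := ha
      obtain ⟨k', e', h'⟩ := hb
      refine ⟨k + k', e * e', ?_⟩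
      rw [pow_add]
      simp only [map_mul, ← h, ← h']; ring
  have hSi : ∀ z ∈ S, IsIntegral E z := fun z hz => adjoin_le_integralClosure hy hz
  have hfg : (Subalgebra.toSubmodule S).FG := hy.fg_adjoin_singleton
  obtain ⟨F, hF⟩ := hfg
  choose! k e hke using hS
  let m₀ := F.sup k
  have h0 : ∀ z ∈ S, ∃ e, algebraMap E Q (d ^ m₀) * z = algebraMap E Q e := by
    intro z hz
    have hz' : z ∈ Submodule.span E (F : Set Q) := by rw [hF]; exact hz
    refine Submodule.span_induction ?_ ?_ ?_ ?_ hz'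
    · intro x hx
      have hxS : x ∈ S := by
        have : x ∈ Subalgebra.toSubmodule S := by rw [← hF]; exact Submodule.subset_span hx
        exact this
      have hle : k x ≤ m₀ := Finset.le_sup (f := k) hx
      refine ⟨d ^ (m₀ - k x) * e x, ?_⟩
      rw [map_mul, ← hke x hxS, ← mul_assoc, ← map_mul, ← pow_add, Nat.sub_add_cancel hle]
    · exact ⟨0, by simp⟩
    · rintro a b _ _ ⟨u, hu⟩ ⟨v, hv⟩
      exact ⟨u + v, by rw [mul_add, hu, hv, map_add]⟩
    · rintro a x _ ⟨u, hu⟩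
      exact ⟨a * u, by rw [Algebra.smul_def, map_mul, ← hu]; ring⟩
  let PP : ℕ → Prop := fun m => ∀ z ∈ S, ∀ j ∈ J ^ m, ∃ e, algebraMap E Q j * z = algebraMap E Q e
  have hstart : PP (N * m₀) := by
    intro z hz j hj
    have h1 : j ∈ Ideal.span {d ^ m₀} := by
      rw [← Ideal.span_singleton_pow]
      rw [pow_mul] at hj
      exact Ideal.pow_right_mono hN m₀ hj
    obtain ⟨c, rfl⟩ := Ideal.mem_span_singleton'.mp h1
    obtain ⟨e, he⟩ := h0 z hz
    exact ⟨c * e, by rw [map_mul, map_mul, mul_assoc, he]⟩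
  have hstep : ∀ m, PP (m + 1) → PP m := by
    intro m hm z hz j hj
    have hxS : algebraMap E Q j * z ∈ S := mul_mem (S.algebraMap_mem j) hz
    set x := algebraMap E Q j * z with hxdef
    have h1 : ∀ i ∈ J, ∃ e ∈ J, algebraMap E Q i * x = algebraMap E Q e := by
      intro i hi
      obtain ⟨e, he⟩ := hm z hz (j * i) (by rw [pow_succ]; exact Ideal.mul_mem_mul hj hi)
      have he' : algebraMap E Q e = algebraMap E Q i * x := by
        rw [← he, hxdef, map_mul]; ring
      refine ⟨e, ?_, he'.symm⟩
      obtain ⟨n, hn⟩ := exists_pow_mem_span_of_integral hinj (hSi x hxS) i e he'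
      exact hJ ⟨n, (Ideal.span_singleton_le_iff_mem _).mpr hi hn⟩
    obtain ⟨w, -, hw⟩ := h1 d hdJ
    obtain ⟨c, hc⟩ := hcol w (fun i hi => by
      obtain ⟨e, he, hie⟩ := h1 i hi
      refine ⟨e, he, hinj ?_⟩
      rw [map_mul, map_mul, ← hw, ← hie]; ring)
    refine ⟨c, hd _ _ ?_⟩
    rw [hw, hc, map_mul]
  have hend : PP 0 := by
    have : ∀ m, PP m → PP 0 := by
      intro m
      induction m with
      | zero => exact id
      | succ m ih => exact fun h => ih (hstep m h)
    exact this _ hstart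
  obtain ⟨e, he⟩ := hend y (Algebra.subset_adjoin rfl) 1 (by simp)
  exact ⟨e, by simpa using he.symm⟩

-- Part PC
/-- In the integral closure `D` of `A` in its total ring of fractions: if `x J ⊆ d J`, then `d ∣ x`. -/
lemma colon_integralClosure {A F : Type*} [CommRing A] [CommRing F] [Algebra A F] [IsFractionRing A F]
    [IsNoetherianRing (integralClosure A F)]
    (d : A) (hd : d ∈ A⁰) (J : Ideal (integralClosure A F))
    (hdJ : algebraMap A _ d ∈ J) (x : integralClosure A F)
    (hx : ∀ j ∈ J, j * x ∈ Ideal.span {algebraMap A _ d} * J) :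
    x ∈ Ideal.span {algebraMap A (integralClosure A F) d} := by
  let D := integralClosure A F
  have hu : IsUnit (algebraMap A F d) := IsLocalization.map_units F ⟨d, hd⟩
  obtain ⟨u, hu⟩ := hu
  let J' : Submodule D F := Submodule.map (Algebra.linearMap D F) J
  let S : Subalgebra D F :=
    { carrier := {z | ∀ j ∈ J', z * j ∈ J'}
      mul_mem' := fun {a b} ha hb j hj => by
        rw [mul_assoc]; exact ha _ (hb _ hj)
      add_mem' := fun {a b} ha hb j hj => by
        rw [add_mul]; exact add_mem (ha _ hj) (hb _ hj)
      algebraMap_mem' := fun r j hj => by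
        rw [← Algebra.smul_def]; exact J'.smul_mem r hj }
  have hdJ' : algebraMap A F d ∈ J' := ⟨algebraMap A _ d, hdJ, rfl⟩
  have hfg : (Subalgebra.toSubmodule S).FG := by
    refine Submodule.fg_of_fg_map_injective (LinearMap.mulRight D (algebraMap A F d)) ?_ ?_
    · intro a b hab
      simp only [LinearMap.mulRight_apply] at hab
      rw [← hu] at hab
      exact (Units.mul_left_inj u).mp hab
    · have hJ'fg : J'.FG := Submodule.FG.map _ (IsNoetherian.noetherian J)
      have : IsNoetherian D J' := isNoetherian_of_fg_of_noetherian _ hJ'fg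
      refine Submodule.FG.of_le hJ'fg ?_
      rintro _ ⟨z, hz, rfl⟩
      exact hz _ hdJ'
  have hz : ((u⁻¹ : Fˣ) : F) * (x : F) ∈ S := by
    rintro _ ⟨j, hj, rfl⟩
    have h1 := hx j hj
    rw [Ideal.mem_span_singleton_mul] at h1
    obtain ⟨j', hj', h2⟩ := h1
    refine ⟨j', hj', ?_⟩
    have h3 := congrArg (algebraMap D F) h2
    rw [map_mul, map_mul] at h3
    have h4 : algebraMap D F (algebraMap A D d) = u := by rw [hu]; rfl
    rw [h4] at h3
    simp only [Algebra.linearMap_apply]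
    rw [show (x : F) = algebraMap D F x from rfl]
    calc algebraMap D F j' = ((u⁻¹ : Fˣ) : F) * (u * algebraMap D F j') := by simp
    _ = _ := by rw [h3]; ring
  have hint : IsIntegral D (((u⁻¹ : Fˣ) : F) * (x : F)) := IsIntegral.of_mem_of_fg S hfg _ hz
  have hint' : IsIntegral A (((u⁻¹ : Fˣ) : F) * (x : F)) := isIntegral_trans (R := A) (A := D) _ hint
  rw [Ideal.mem_span_singleton']
  refine ⟨⟨_, hint'⟩, Subtype.ext ?_⟩
  change ((u⁻¹ : Fˣ) : F) * (x : F) * algebraMap A F d = x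
  rw [← hu]
  rw [mul_right_comm]; simp

universe u v

theorem conductor_flat {A : Type u} {T : Type v} [CommRing A] [CommRing T] [Algebra A T] [IsNoetherianRing A]
    [Module.Flat A T]
    (H1 : ∀ (C : Type u) [CommRing C] [Algebra A C] [Module.Finite A C] [IsReduced C],
      IsReduced (C ⊗[A] T))
    (H2 : ∀ y : FractionRing T, IsIntegral T y → ∃ d ∈ A⁰, ∃ t : T,
      algebraMap T (FractionRing T) (algebraMap A T d) * y = algebraMap T (FractionRing T) t)
    (H3 : Module.Finite A (integralClosure A (FractionRing A))) :
    (conductorIdeal A).map (algebraMap A T) = conductorIdeal T := by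
  set F := FractionRing A with hF
  set Q := FractionRing T with hQ
  have hreg : ∀ d ∈ A⁰, algebraMap A T d ∈ T⁰ := by
    intro d hd
    have h1 : IsSMulRegular A d := Module.Flat.isSMulRegular_of_nonZeroDivisors hd
    have h2 := h1.of_flat (S := T)
    rw [mem_nonZeroDivisors_iff_right]
    intro z hz
    exact h2 (by simp [smul_eq_mul, mul_comm _ z, hz])
  letI : Algebra A Q := inferInstance
  have hunit : ∀ y : A⁰, IsUnit (Algebra.ofId A Q y) := fun y => by
    change IsUnit (algebraMap A Q y)
    rw [IsScalarTower.algebraMap_apply A T Q]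
    exact IsLocalization.map_units Q (⟨_, hreg y.1 y.2⟩ : T⁰)
  let φ : F →ₐ[A] Q := IsLocalization.liftAlgHom (M := A⁰) hunit
  have hdint : ∀ y : F, IsIntegral A y → IsIntegral T (φ y) := fun y hy =>
    (hy.map φ).tower_top
  let D := integralClosure A F
  classical
  obtain ⟨W, hW⟩ := H3.fg_top
  obtain ⟨s, hs⟩ := IsLocalization.exist_integer_multiples_of_finset A⁰ (W.image (fun z : D => (z : F)))
  have hsD : ∀ z : D, ∃ a : A, algebraMap A F a = algebraMap A F s * z := by
    intro z
    have hz : z ∈ Submodule.span A (W : Set D) := by rw [hW]; trivial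
    refine Submodule.span_induction ?_ ?_ ?_ ?_ hz
    · intro x hx
      obtain ⟨a, ha⟩ := hs (x : F) (Finset.mem_image_of_mem _ hx)
      exact ⟨a, by rw [ha, Algebra.smul_def]⟩
    · exact ⟨0, by simp⟩
    · rintro x y _ _ ⟨a, ha⟩ ⟨b, hb⟩
      exact ⟨a + b, by rw [map_add, ha, hb]; simp [mul_add]⟩
    · rintro a x _ ⟨b, hb⟩
      exact ⟨a * b, by rw [map_mul, hb, Subalgebra.coe_smul, Algebra.smul_def]; ring⟩
  apply le_antisymm
  · -- C_A T ≤ C_T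
    let E := D ⊗[A] T
    haveI : Module.Finite A D := H3
    haveI : IsNoetherianRing D := IsNoetherianRing.of_finite A D
    let ψ : E →ₐ[A] Q := Algebra.TensorProduct.lift (φ.comp D.val) (IsScalarTower.toAlgHom A T Q)
      (fun _ _ => Commute.all _ _)
    have hψ : ∀ (z : D) (t : T), ψ (z ⊗ₜ t) = φ z * algebraMap T Q t := fun z t => by
      change Algebra.TensorProduct.lift (φ.comp D.val) (IsScalarTower.toAlgHom A T Q) _ (z ⊗ₜ t) = _
      rw [Algebra.TensorProduct.lift_tmul]; rfl
    letI : Algebra E Q := ψ.toRingHom.toAlgebra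
    have hEQ : ∀ e, algebraMap E Q e = ψ e := fun e => rfl
    have hsE : ∀ e : E, ∃ t : T, algebraMap A E s * e = 1 ⊗ₜ t := by
      intro e
      induction e using TensorProduct.induction_on with
      | zero => exact ⟨0, by simp⟩
      | add x y hx hy =>
        obtain ⟨a, ha⟩ := hx
        obtain ⟨b, hb⟩ := hy
        exact ⟨a + b, by rw [mul_add, ha, hb, tmul_add]⟩
      | tmul z t =>
        obtain ⟨a, ha⟩ := hsD z
        refine ⟨a • t, ?_⟩
        rw [← smul_tmul, ← Algebra.smul_def, smul_tmul']
        congr 1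
        apply Subtype.ext
        rw [Subalgebra.coe_smul, Subalgebra.coe_smul, Algebra.smul_def, Algebra.smul_def]
        rw [← ha]; simp
    have hDreg : ∀ d ∈ A⁰, algebraMap A D d ∈ D⁰ := by
      intro d hd
      rw [mem_nonZeroDivisors_iff_right]
      intro z hz
      have hu : IsUnit (algebraMap A F d) := IsLocalization.map_units F ⟨d, hd⟩
      apply Subtype.ext
      have := congrArg (fun z : D => (z : F)) hz
      change (z : F) * algebraMap A F d = 0 at this
      simpa [hu.mul_left_eq_zero] using this
    have hEreg : ∀ d ∈ A⁰, ∀ e : E, algebraMap A E d * e = 0 → e = 0 := by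
      intro d hd e he
      have h1 : IsSMulRegular E (algebraMap A D d) :=
        Module.Flat.isSMulRegular_of_nonZeroDivisors (M := D ⊗[A] T) (hDreg d hd)
      apply h1
      simp only [smul_zero]
      rw [← he, ← Algebra.smul_def, algebraMap_smul]
    have hinj : Function.Injective (algebraMap E Q) := by
      rw [injective_iff_map_eq_zero]
      intro e he
      obtain ⟨t, ht⟩ := hsE e
      refine hEreg s s.2 e ?_
      rw [ht]
      have h1 : ψ (1 ⊗ₜ t) = 0 := by rw [← ht, map_mul, ← hEQ e, he, mul_zero]
      rw [hψ] at h1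
      simp only [OneMemClass.coe_one, map_one, one_mul] at h1
      have := (IsFractionRing.injective T Q) (h1.trans (map_zero _).symm)
      rw [this, tmul_zero]
    -- key: everything integral over T lies in E
    have key : ∀ y : Q, IsIntegral T y → ∃ e : E, ψ e = y := by
      intro y hy
      obtain ⟨d, hd, t, hdt⟩ := H2 y hy
      let dD : D := algebraMap A D d
      let J := (Ideal.span {dD}).radical
      have hdJ : dD ∈ J := Ideal.le_radical (Ideal.mem_span_singleton_self _)
      obtain ⟨N, hN⟩ := Ideal.exists_radical_pow_le_of_fg (Ideal.span {dD}) (IsNoetherian.noetherian _)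
      have hdE : algebraMap D E dD = algebraMap A E d := (IsScalarTower.algebraMap_apply A D E d).symm
      refine grauert_remmert hinj (algebraMap A E d) ?_ (J.map (algebraMap D E)) ?_ ?_ N ?_ ?_ y ?_ ?_
      · intro z z' h
        rw [hEQ, AlgHom.commutes] at h
        exact (hunit ⟨d, hd⟩).mul_left_cancel h
      · rw [← hdE]; exact Ideal.mem_map_of_mem _ hdJ
      · -- radical
        have hred : IsReduced (D ⧸ J) := (Ideal.isRadical_iff_quotient_reduced _).mp (Ideal.radical_isRadical _)
        have hred' : IsReduced ((D ⧸ J) ⊗[A] T) := H1 (D ⧸ J)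
        have hker := Algebra.TensorProduct.rTensor_ker (R := A) (S := A) (C := T) (Ideal.Quotient.mkₐ A J) (Ideal.Quotient.mkₐ_surjective A J)
        rw [show RingHom.ker (Ideal.Quotient.mkₐ A J) = J from Ideal.Quotient.mkₐ_ker A J] at hker
        have : J.map (algebraMap D E) = RingHom.ker (Algebra.TensorProduct.map (Ideal.Quotient.mkₐ A J) (AlgHom.id A T)) := by
          rw [hker]; rfl
        rw [this]
        rintro e ⟨k, hk⟩
        rw [RingHom.mem_ker, map_pow] at hk
        rw [RingHom.mem_ker]
        exact hred'.eq_zero _ ⟨k, hk⟩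
      · rw [← Ideal.map_pow]
        refine (Ideal.map_mono hN).trans ?_
        rw [Ideal.map_span, Set.image_singleton, hdE]
      · intro w hw
        obtain ⟨G, hG⟩ := (IsNoetherian.noetherian J : J.FG)
        have hwm : w ∈ (Ideal.span {dD}).map (algebraMap D E) := by
          refine flat_colon (ι := G) (Ideal.span {dD} * J) (Ideal.span {dD}) (fun g => g.1) ?_ w ?_
          · intro x hx
            refine colon_integralClosure d hd J hdJ x fun j hj => ?_
            rw [← hG] at hj
            refine Submodule.span_induction ?_ ?_ ?_ ?_ hj
            · intro z hz; exact hx ⟨z, hz⟩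
            · simp
            · intro a b _ _ ha hb; rw [add_mul]; exact add_mem ha hb
            · intro a b _ hb; rw [smul_eq_mul, mul_assoc]; exact Ideal.mul_mem_left _ _ hb
          · intro g
            have hgJ : (g : D) ∈ J := by rw [← hG]; exact Submodule.subset_span g.2
            obtain ⟨j', hj', h⟩ := hw (algebraMap D E g) (Ideal.mem_map_of_mem _ hgJ)
            rw [h, Ideal.map_mul, ← hdE]
            exact Ideal.mul_mem_mul (Ideal.mem_map_of_mem _ (Ideal.mem_span_singleton_self _)) hj'
        rw [Ideal.map_span, Set.image_singleton, hdE, Ideal.mem_span_singleton] at hwm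
        exact hwm
      · -- integral over E
        letI : Algebra T E := (Algebra.TensorProduct.includeRight : T →ₐ[A] E).toRingHom.toAlgebra
        haveI : IsScalarTower T E Q := IsScalarTower.of_algebraMap_eq fun t => by
          change _ = ψ (1 ⊗ₜ t)
          rw [hψ]; simp
        exact hy.tower_top
      · refine ⟨1 ⊗ₜ t, ?_⟩
        rw [hEQ, hEQ, AlgHom.commutes, hψ, IsScalarTower.algebraMap_apply A T Q, hdt]; simp; rfl
    rw [Ideal.map_le_iff_le_comap]
    intro c hc y hy
    obtain ⟨e, rfl⟩ := key y hy
    clear hy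
    induction e using TensorProduct.induction_on with
    | zero => exact ⟨0, by simp⟩
    | add x y hx hy => rw [map_add, mul_add]; exact add_mem hx hy
    | tmul z t =>
      obtain ⟨a, ha⟩ := hc z z.2
      refine ⟨algebraMap A T a * t, ?_⟩
      rw [hψ, map_mul, ← mul_assoc]
      congr 1
      have := congrArg φ ha
      rw [map_mul, AlgHom.commutes, AlgHom.commutes] at this
      rw [← IsScalarTower.algebraMap_apply, ← IsScalarTower.algebraMap_apply, this]
  · intro c hc
    choose a ha using hsD
    refine flat_colon (ι := W) (Ideal.span {(s : A)}) _ (fun w => a w.1) ?_ c ?_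
    · intro x hx z hz
      have h1 : (⟨z, hz⟩ : D) ∈ Submodule.span A (W : Set D) := by rw [hW]; trivial
      have h2 : ∀ z : D, z ∈ Submodule.span A (W : Set D) → algebraMap A F x * z ∈ (algebraMap A F).range := by
        intro z hz
        refine Submodule.span_induction ?_ ?_ ?_ ?_ hz
        · intro w hw
          obtain ⟨r, hr⟩ := Ideal.mem_span_singleton'.mp (hx ⟨w, hw⟩)
          refine ⟨r, (IsLocalization.map_units F s).mul_left_cancel ?_⟩
          rw [← map_mul, mul_comm, hr, map_mul, ha]; ring
        · simp
        · intro p q _ _ hp hq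
          rw [Subalgebra.coe_add, mul_add]; exact add_mem hp hq
        · rintro p q _ ⟨r, hr⟩
          exact ⟨p * r, by rw [Subalgebra.coe_smul, Algebra.smul_def, map_mul, hr]; ring⟩
      exact h2 _ h1
    · rintro ⟨w, hw⟩
      obtain ⟨t, ht⟩ := hc (φ w) (hdint w w.2)
      rw [Ideal.map_span, Set.image_singleton, Ideal.mem_span_singleton']
      refine ⟨t, IsFractionRing.injective T Q ?_⟩
      have := congrArg φ (ha w)
      rw [map_mul, AlgHom.commutes, AlgHom.commutes] at this
      rw [map_mul, map_mul, ht, ← IsScalarTower.algebraMap_apply, ← IsScalarTower.algebraMap_apply, this]; ring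

-- Part PD
/-- `T` behaves as the `M`-adic completion of `B`. -/
structure AdicCompl (B : Type*) [CommRing B] (M : Ideal B) (T : Type*) [CommRing T] [Algebra B T] :
    Prop where
  complete : IsAdicComplete M T
  comap_le : ∀ (n : ℕ) (b : B), algebraMap B T b ∈ (M ^ n).map (algebraMap B T) → b ∈ M ^ n
  dense : ∀ (n : ℕ) (t : T), ∃ b, t - algebraMap B T b ∈ (M ^ n).map (algebraMap B T)

lemma AlgHom.map_ideal_map {P S T : Type*} [CommRing P] [CommRing S] [CommRing T] [Algebra P S]
    [Algebra P T] (f : S →ₐ[P] T) (I : Ideal P) :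
    (I.map (algebraMap P S)).map f = I.map (algebraMap P T) := by
  rw [show Ideal.map f (I.map (algebraMap P S)) = Ideal.map (f : S →+* T) (I.map (algebraMap P S)) from rfl,
    Ideal.map_map, AlgHom.comp_algebraMap]

namespace AdicCompl

lemma eq_zero {B : Type*} [CommRing B] {M : Ideal B} {T : Type*} [CommRing T] [Algebra B T]
    (h : AdicCompl B M T) (t : T) (ht : ∀ n, t ∈ (M ^ n).map (algebraMap B T)) : t = 0 := by
  have := h.complete
  refine IsHausdorff.haus (I := M) inferInstance t fun n => ?_
  rw [SModEq.zero, Ideal.smul_top_eq_map]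
  exact ht n

lemma isUnit_of_notMem {B : Type*} [CommRing B] {M : Ideal B} [M.IsMaximal] {T : Type*} [CommRing T]
    [Algebra B T] (h : AdicCompl B M T) (t : T) (ht : t ∉ M.map (algebraMap B T)) : IsUnit t := by
  obtain ⟨b, hb⟩ := h.dense 1 t
  rw [pow_one] at hb
  have hbM : b ∉ M := by
    intro hh
    apply ht
    have := add_mem hb (Ideal.mem_map_of_mem (algebraMap B T) hh)
    simpa using this
  obtain ⟨c, m, hm, hc⟩ := Ideal.IsMaximal.exists_inv ‹M.IsMaximal› hbM
  have hcomp := h.complete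
  rw [← IsAdicComplete.map_algebraMap_iff (S := T)] at hcomp
  have hjac := IsAdicComplete.le_jacobson_bot (M.map (algebraMap B T))
  have h1 : algebraMap B T c * t - 1 ∈ M.map (algebraMap B T) := by
    have e : algebraMap B T c * t - 1 = algebraMap B T c * (t - algebraMap B T b) - algebraMap B T m := by
      have := congrArg (algebraMap B T) hc
      rw [map_add, map_mul, map_one] at this
      rw [← this]; ring
    rw [e]
    exact sub_mem (Ideal.mul_mem_left _ _ hb) (Ideal.mem_map_of_mem _ hm)
  have h2 := hjac h1
  rw [Ideal.mem_jacobson_bot] at h2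
  have h3 := h2 1
  rw [mul_one, sub_add_cancel] at h3
  exact isUnit_of_mul_isUnit_right h3

lemma isUnit_algebraMap {B : Type*} [CommRing B] {M : Ideal B} [M.IsMaximal] {T : Type*} [CommRing T]
    [Algebra B T] (h : AdicCompl B M T) (b : B) (hb : b ∉ M) : IsUnit (algebraMap B T b) :=
  h.isUnit_of_notMem _ fun hh => hb (by simpa using h.comap_le 1 b (by simpa using hh))

lemma map_ne_top {B : Type*} [CommRing B] {M : Ideal B} [M.IsMaximal] {T : Type*} [CommRing T]
    [Algebra B T] (h : AdicCompl B M T) : M.map (algebraMap B T) ≠ ⊤ := by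
  intro hh
  have := h.comap_le 1 1 (by rw [pow_one, hh]; trivial)
  rw [pow_one] at this
  exact (Ideal.ne_top_iff_one M).mp (Ideal.IsMaximal.ne_top ‹_›) this

lemma isMaximal_map {B : Type*} [CommRing B] {M : Ideal B} [M.IsMaximal] {T : Type*} [CommRing T]
    [Algebra B T] (h : AdicCompl B M T) : (M.map (algebraMap B T)).IsMaximal := by
  refine Ideal.isMaximal_iff.mpr ⟨(Ideal.ne_top_iff_one _).mp h.map_ne_top, ?_⟩
  intro J x _ hx hxJ
  exact (Ideal.eq_top_iff_one J).mp (Ideal.eq_top_of_isUnit_mem _ hxJ (h.isUnit_of_notMem x hx))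

end AdicCompl

lemma isPrecomplete_pi {R : Type*} [CommRing R] (I : Ideal R) {N : Type*} [AddCommGroup N] [Module R N]
    {ι : Type*} [Finite ι] [IsPrecomplete I N] : IsPrecomplete I (ι → N) := by
  classical
  cases nonempty_fintype ι
  refine ⟨fun {f} hf => ?_⟩
  have h1 : ∀ i, ∃ L : N, ∀ n, f n i ≡ L [SMOD (I ^ n • ⊤ : Submodule R N)] := by
    intro i
    refine IsPrecomplete.prec (I := I) inferInstance (f := fun n => f n i) fun {m n} hmn => ?_
    have h2 := hf hmn
    rw [SModEq.sub_mem] at h2 ⊢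
    have h3 := Submodule.mem_map_of_mem (f := LinearMap.proj (R := R) (φ := fun _ : ι => N) i) h2
    rw [Submodule.map_smul''] at h3
    exact Submodule.smul_mono le_rfl le_top h3
  choose L hL using h1
  refine ⟨L, fun n => ?_⟩
  rw [SModEq.sub_mem]
  have h4 : f n - L = ∑ i, LinearMap.single R (fun _ : ι => N) i (f n i - L i) := by
    ext j
    simp [Pi.single_apply, Finset.sum_apply]
  rw [h4]
  refine Submodule.sum_mem _ fun i _ => ?_
  have h5 := hL i n
  rw [SModEq.sub_mem] at h5
  have h6 := Submodule.mem_map_of_mem (f := LinearMap.single R (fun _ : ι => N) i) h5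
  rw [Submodule.map_smul''] at h6
  exact Submodule.smul_mono le_rfl le_top h6

/-- some power of `M` is, up to an element outside `M`, in `I`, if `B/I` is artinian. -/
lemma exists_pow_le_of_artinian {B : Type*} [CommRing B] [IsNoetherianRing B] (I M : Ideal B)
    [IsArtinianRing (B ⧸ I)] : ∃ N : ℕ, ∃ r ∈ M, ∀ x ∈ M ^ N, (1 - r) * x ∈ I := by
  let M' := M.map (Ideal.Quotient.mk I)
  obtain ⟨N, hN⟩ := IsArtinian.monotone_stabilizes (R := B ⧸ I) (M := B ⧸ I)
    ⟨fun k => OrderDual.toDual (M' ^ k), fun a b hab => Ideal.pow_le_pow_right hab⟩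
  have h1 : M' ^ N = M' ^ (N + 1) := congrArg OrderDual.ofDual (hN (N+1) (by omega))
  obtain ⟨r, hr, hr'⟩ := Submodule.exists_mem_and_smul_eq_self_of_fg_of_le_smul M' (M' ^ N)
    (IsNoetherian.noetherian _) (by rw [smul_eq_mul, ← pow_succ', ← h1])
  obtain ⟨r, hrM, rfl⟩ := (Ideal.mem_map_iff_of_surjective _ Ideal.Quotient.mk_surjective).mp hr
  refine ⟨N, r, hrM, fun x hx => ?_⟩
  have h2 := hr' (Ideal.Quotient.mk I x) (by
    rw [← Ideal.map_pow]; exact Ideal.mem_map_of_mem _ hx)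
  rw [← Ideal.Quotient.eq_zero_iff_mem, map_mul, map_sub, map_one, sub_mul, one_mul]
  rw [smul_eq_mul] at h2
  rw [h2, sub_self]

/-- the natural map. -/
def locMap (P O B T : Type*) [CommRing P] [CommRing O] [CommRing B] [CommRing T]
  [Algebra P O] [Algebra P B] [Algebra B T] [Algebra P T] [Algebra O T] [IsScalarTower P B T]
  [IsScalarTower P O T] : B ⊗[P] O →ₐ[P] T :=
  Algebra.TensorProduct.lift (IsScalarTower.toAlgHom P B T) (IsScalarTower.toAlgHom P O T)
    (fun _ _ => Commute.all _ _)

lemma locMap_tmul {P O B T : Type*} [CommRing P] [CommRing O] [CommRing B] [CommRing T]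
    [Algebra P O] [Algebra P B] [Algebra B T] [Algebra P T] [Algebra O T] [IsScalarTower P B T]
    [IsScalarTower P O T] (b : B) (o : O) : locMap P O B T (b ⊗ₜ o) = algebraMap B T b * algebraMap O T o := by
  simp [locMap]

theorem locMap_surjective {P O B T : Type*} [CommRing P] [CommRing O] [CommRing B] [CommRing T]
    [Algebra P O] [Algebra P B] [Algebra B T] [Algebra P T] [Algebra O T] [IsScalarTower P B T]
    [IsScalarTower P O T] [IsNoetherianRing P] [Module.Finite P B]
    (m : Ideal P) [m.IsMaximal] (M : Ideal B) [M.IsMaximal]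
    (hO : AdicCompl P m O) (hT : AdicCompl B M T)
    (hmM : m.map (algebraMap P B) ≤ M) : Function.Surjective (locMap P O B T) := by
  classical
  haveI : IsNoetherianRing B := IsNoetherianRing.of_finite P B
  -- B / mB is artinian
  letI : Field (P ⧸ m) := Ideal.Quotient.field m
  haveI : IsArtinianRing (B ⧸ m.map (algebraMap P B)) := by
    haveI : Module.Finite (P ⧸ m) (B ⧸ m.map (algebraMap P B)) :=
      Module.Finite.of_restrictScalars_finite P _ _
    exact IsArtinianRing.of_finite (P ⧸ m) _
  obtain ⟨N, r, hr, hN⟩ := exists_pow_le_of_artinian (m.map (algebraMap P B)) M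
  have hu : IsUnit (algebraMap B T (1 - r)) := hT.isUnit_algebraMap _ fun hh => by
    have := add_mem hh hr
    rw [sub_add_cancel] at this
    exact (Ideal.ne_top_iff_one M).mp (Ideal.IsMaximal.ne_top ‹_›) this
  have hle : (M ^ N).map (algebraMap B T) ≤ m.map (algebraMap P T) := by
    rw [Ideal.map_le_iff_le_comap]
    intro x hx
    have h1 := Ideal.mem_map_of_mem (algebraMap B T) (hN x hx)
    rw [Ideal.map_map, ← IsScalarTower.algebraMap_eq, map_mul] at h1
    exact (Ideal.unit_mul_mem_iff_mem _ hu).mp h1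
  obtain ⟨k, g, hg⟩ := Module.Finite.exists_fin' P B
  let f : (Fin k → O) →ₗ[P] T := LinearMap.lsum P (fun _ => O) P fun i =>
    (LinearMap.mulLeft P (algebraMap B T (g (Pi.single i 1)))) ∘ₗ (IsScalarTower.toAlgHom P O T).toLinearMap
  have hf : ∀ c, f c = ∑ i, algebraMap B T (g (Pi.single i 1)) * algebraMap O T (c i) := by
    intro c; simp [f]
  haveI := hO.complete
  haveI : IsPrecomplete m O := inferInstance
  haveI : IsPrecomplete m (Fin k → O) := isPrecomplete_pi m
  haveI : IsHausdorff m T := by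
    haveI := hT.complete
    refine ⟨fun x hx => ?_⟩
    refine hT.eq_zero x fun n => ?_
    have := hx n
    rw [SModEq.zero, Ideal.smul_top_eq_map] at this
    have h2 : (m ^ n).map (algebraMap P T) ≤ (M ^ n).map (algebraMap B T) := by
      rw [IsScalarTower.algebraMap_eq P B T, ← Ideal.map_map]
      refine Ideal.map_mono ?_
      rw [Ideal.map_pow]
      exact Ideal.pow_right_mono hmM n
    exact h2 this
  have hsurj : Function.Surjective f := by
    refine surjective_of_mkQ_comp_surjective (I := m) (f := f) ?_
    intro q
    obtain ⟨t, rfl⟩ := Submodule.mkQ_surjective _ q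
    obtain ⟨b, hb⟩ := hT.dense N t
    obtain ⟨c, rfl⟩ := hg b
    refine ⟨fun i => algebraMap P O (c i), ?_⟩
    rw [LinearMap.comp_apply, hf]
    have h1 : ∑ i, algebraMap B T (g (Pi.single i 1)) * algebraMap O T (algebraMap P O (c i)) =
        algebraMap B T (g c) := by
      have h2 : g c = ∑ i, c i • g (Pi.single i 1) := by
        conv_lhs => rw [← Finset.univ_sum_single c]
        rw [map_sum]
        refine Finset.sum_congr rfl fun i _ => ?_
        rw [← map_smul, ← Pi.single_smul, smul_eq_mul, mul_one]
      rw [h2, map_sum]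
      refine Finset.sum_congr rfl fun i _ => ?_
      rw [Algebra.smul_def, map_mul, ← IsScalarTower.algebraMap_apply, ← IsScalarTower.algebraMap_apply, mul_comm]
    rw [h1, ← sub_eq_zero, ← map_sub, Submodule.mkQ_apply, Submodule.Quotient.mk_eq_zero, Ideal.smul_top_eq_map]
    rw [← neg_sub]
    exact neg_mem (hle hb)
  intro t
  obtain ⟨c, rfl⟩ := hsurj t
  refine ⟨∑ i, (g (Pi.single i 1)) ⊗ₜ c i, ?_⟩
  rw [map_sum, hf]
  exact Finset.sum_congr rfl fun i _ => locMap_tmul _ _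

theorem locMap_eq_zero {P O B T : Type*} [CommRing P] [CommRing O] [CommRing B] [CommRing T]
    [Algebra P O] [Algebra P B] [Algebra B T] [Algebra P T] [Algebra O T] [IsScalarTower P B T]
    [IsScalarTower P O T] [IsNoetherianRing P] [IsNoetherianRing O] [Module.Finite P B]
    (m : Ideal P) [m.IsMaximal] (M : Ideal B) [M.IsMaximal]
    (hO : AdicCompl P m O) (hT : AdicCompl B M T)
    (hmM : m.map (algebraMap P B) ≤ M) (s : B ⊗[P] O) (hs : locMap P O B T s = 0) :
    ∃ t : B ⊗[P] O, IsUnit (locMap P O B T t) ∧ t * s = 0 := by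
  classical
  haveI : IsNoetherianRing B := IsNoetherianRing.of_finite P B
  let S := B ⊗[P] O
  haveI : Module.Finite O (O ⊗[P] B) := inferInstance
  haveI : IsNoetherianRing (O ⊗[P] B) := IsNoetherianRing.of_finite O _
  haveI : IsNoetherianRing S := isNoetherianRing_of_ringEquiv (O ⊗[P] B)
    (Algebra.TensorProduct.comm P O B).toRingEquiv
  -- step: approximations
  have step : ∀ k : ℕ, ∃ t : S, IsUnit (locMap P O B T t) ∧ t * s ∈ (m ^ k).map (algebraMap P S) := by
    intro k
    -- s = b ⊗ 1 mod m^k S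
    have h1 : ∀ s : S, ∃ b : B, s - b ⊗ₜ 1 ∈ (m ^ k).map (algebraMap P S) := by
      intro s
      induction s using TensorProduct.induction_on with
      | zero => exact ⟨0, by simp⟩
      | add x y hx hy =>
        obtain ⟨a, ha⟩ := hx
        obtain ⟨b, hb⟩ := hy
        refine ⟨a + b, ?_⟩
        rw [add_tmul, add_sub_add_comm]
        exact add_mem ha hb
      | tmul b o =>
        obtain ⟨p, hp⟩ := hO.dense k o
        refine ⟨p • b, ?_⟩
        have h2 : b ⊗ₜ[P] o - (p • b) ⊗ₜ[P] (1 : O) = (b ⊗ₜ 1) * (1 ⊗ₜ (o - algebraMap P O p)) := by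
          rw [Algebra.TensorProduct.tmul_mul_tmul, one_mul, mul_one, tmul_sub, smul_tmul,
            Algebra.algebraMap_eq_smul_one]
        rw [h2]
        refine Ideal.mul_mem_left _ _ ?_
        have h3 := Ideal.mem_map_of_mem (Algebra.TensorProduct.includeRight : O →ₐ[P] S) hp
        rw [AlgHom.map_ideal_map] at h3
        exact h3
    obtain ⟨b, hb⟩ := h1 s
    have hb1 : algebraMap B T b ∈ (m ^ k).map (algebraMap P T) := by
      have h2 := Ideal.mem_map_of_mem (locMap P O B T) hb
      rw [map_sub, hs, zero_sub, locMap_tmul, map_one, mul_one, AlgHom.map_ideal_map] at h2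
      rw [← neg_mem_iff]
      exact h2
    have hb2 : ∀ j : ℕ, ∃ b' ∈ (m ^ k).map (algebraMap P B), b - b' ∈ M ^ j := by
      intro j
      have h3 : ∀ x ∈ (m ^ k).map (algebraMap P T), ∃ b' ∈ (m ^ k).map (algebraMap P B),
          x - algebraMap B T b' ∈ (M ^ j).map (algebraMap B T) := by
        intro x hx
        refine Submodule.span_induction ?_ ?_ ?_ ?_ hx
        · rintro _ ⟨p, hp, rfl⟩
          exact ⟨algebraMap P B p, Ideal.mem_map_of_mem _ hp, by
            rw [← IsScalarTower.algebraMap_apply, sub_self]; exact zero_mem _⟩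
        · exact ⟨0, zero_mem _, by simp⟩
        · rintro x y _ _ ⟨a, ha, ha'⟩ ⟨b, hb, hb'⟩
          refine ⟨a + b, add_mem ha hb, ?_⟩
          rw [map_add, add_sub_add_comm]
          exact add_mem ha' hb'
        · rintro t x _ ⟨a, ha, ha'⟩
          obtain ⟨c, hc⟩ := hT.dense j t
          refine ⟨c * a, Ideal.mul_mem_left _ _ ha, ?_⟩
          have : t • x - algebraMap B T (c * a) = t * (x - algebraMap B T a) +
            algebraMap B T a * (t - algebraMap B T c) := by
            rw [smul_eq_mul, map_mul]; ring
          rw [this]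
          exact add_mem (Ideal.mul_mem_left _ _ ha') (Ideal.mul_mem_left _ _ hc)
      obtain ⟨b', hb', h⟩ := h3 _ hb1
      rw [← map_sub] at h
      exact ⟨b', hb', hT.comap_le j _ h⟩
    have hK := (Ideal.mem_iInf_smul_pow_eq_bot_iff M
      (Ideal.Quotient.mk ((m ^ k).map (algebraMap P B)) b)).mp (by
        rw [Submodule.mem_iInf]
        intro j
        obtain ⟨b', hb', h⟩ := hb2 j
        have : Ideal.Quotient.mk ((m ^ k).map (algebraMap P B)) b =
            (b - b') • (1 : B ⧸ (m ^ k).map (algebraMap P B)) := by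
          rw [Algebra.smul_def, mul_one]
          change _ = Ideal.Quotient.mk _ (b - b')
          rw [map_sub, Ideal.Quotient.eq_zero_iff_mem.mpr hb', sub_zero]
        rw [this]
        exact Submodule.smul_mem_smul h trivial)
    obtain ⟨⟨r, hr⟩, hrb⟩ := hK
    have hrb' : (1 - r) * b ∈ (m ^ k).map (algebraMap P B) := by
      rw [← Ideal.Quotient.eq_zero_iff_mem, map_mul, map_sub, map_one, sub_mul, one_mul, sub_eq_zero]
      exact hrb.symm
    refine ⟨(1 - r) ⊗ₜ 1, ?_, ?_⟩
    · rw [locMap_tmul, map_one, mul_one]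
      exact hT.isUnit_algebraMap _ fun hh => by
        have := add_mem hh hr
        rw [sub_add_cancel] at this
        exact (Ideal.ne_top_iff_one M).mp (Ideal.IsMaximal.ne_top ‹_›) this
    · have e : ((1 - r) ⊗ₜ[P] (1:O)) * s = ((1 - r) ⊗ₜ 1) * (s - b ⊗ₜ 1) + (((1 - r) * b) ⊗ₜ 1) := by
        rw [mul_sub, Algebra.TensorProduct.tmul_mul_tmul, one_mul, sub_add_cancel]
      rw [e]
      refine add_mem (Ideal.mul_mem_left _ _ hb) ?_
      have h3 := Ideal.mem_map_of_mem (Algebra.TensorProduct.includeLeft : B →ₐ[P] S) hrb'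
      rw [AlgHom.map_ideal_map] at h3
      exact h3
  -- Krull
  let n : Ideal S := (M.map (algebraMap B T)).comap (locMap P O B T)
  haveI := hT.isMaximal_map
  haveI hn : n.IsPrime := Ideal.comap_isPrime _ _
  let L := Localization.AtPrime n
  have hLu : ∀ t : S, IsUnit (locMap P O B T t) → IsUnit (algebraMap S L t) := by
    intro t ht
    refine IsLocalization.map_units L (⟨t, fun hh => ?_⟩ : n.primeCompl)
    exact hT.map_ne_top (Ideal.eq_top_of_isUnit_mem _ hh ht)
  have hz : algebraMap S L s = 0 := by
    have hbot := Ideal.iInf_pow_eq_bot_of_isLocalRing (IsLocalRing.maximalIdeal L) (Ideal.IsPrime.ne_top')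
    rw [← Ideal.mem_bot, ← hbot, Ideal.mem_iInf]
    intro k
    obtain ⟨t, ht, hts⟩ := step k
    have h1 := Ideal.mem_map_of_mem (algebraMap S L) hts
    rw [map_mul, Ideal.unit_mul_mem_iff_mem _ (hLu t ht)] at h1
    rw [← Localization.AtPrime.map_eq_maximalIdeal, ← Ideal.map_pow]
    refine Ideal.map_mono ?_ h1
    rw [Ideal.map_pow]
    refine Ideal.pow_right_mono ?_ k
    rw [Ideal.map_le_iff_le_comap]
    intro p hp
    change locMap P O B T (algebraMap P S p) ∈ M.map (algebraMap B T)
    rw [AlgHom.commutes, IsScalarTower.algebraMap_apply P B T]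
    exact Ideal.mem_map_of_mem _ (hmM (Ideal.mem_map_of_mem _ hp))
  obtain ⟨⟨t, ht⟩, hts⟩ := (IsLocalization.map_eq_zero_iff n.primeCompl L s).mp hz
  exact ⟨t, hT.isUnit_of_notMem _ ht, hts⟩


-- Part PE
lemma AdicCompl.adicCompletion {R : Type*} [CommRing R] (I : Ideal R) (hI : I.FG) :
    AdicCompl R I (AdicCompletion I R) := by
  have key : ∀ n (x : AdicCompletion I R), x ∈ (I ^ n).map (algebraMap R (AdicCompletion I R)) ↔
      AdicCompletion.evalₐ I n x = 0 := by
    intro n x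
    have h1 := AdicCompletion.pow_smul_top_eq_ker_eval (I := I) (M := R) (n := n) hI
    have h2 : x ∈ (I ^ n).map (algebraMap R (AdicCompletion I R)) ↔
      x ∈ (I ^ n • ⊤ : Submodule R (AdicCompletion I R)) := by
      rw [Ideal.smul_top_eq_map]; rfl
    rw [h2, h1, LinearMap.mem_ker]
    constructor
    · intro h
      rw [← AdicCompletion.factor_eval_eq_evalₐ I x (by simp), h, map_zero]
    · intro h
      rw [← AdicCompletion.factor_evalₐ_eq_eval I x (by simp), h, map_zero]
  refine ⟨AdicCompletion.isAdicComplete hI, ?_, ?_⟩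
  · intro n b hb
    rw [key] at hb
    have h3 := AdicCompletion.evalₐ_of I n b
    rw [← Ideal.Quotient.eq_zero_iff_mem, ← h3]
    exact hb
  · intro n t
    obtain ⟨b, hb⟩ := Ideal.Quotient.mk_surjective (AdicCompletion.evalₐ I n t)
    refine ⟨b, ?_⟩
    rw [key, map_sub, ← hb, sub_eq_zero]
    exact (AdicCompletion.evalₐ_of I n b).symm

lemma AdicCompl.congr {B : Type*} [CommRing B] {M : Ideal B} {T T' : Type*} [CommRing T]
    [CommRing T'] [Algebra B T] [Algebra B T'] (e : T' ≃ₐ[B] T) (h : AdicCompl B M T) :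
    AdicCompl B M T' := by
  have hmap : ∀ (J : Ideal B) (x : T'), x ∈ J.map (algebraMap B T') ↔ e x ∈ J.map (algebraMap B T) := by
    intro J x
    rw [← AlgHom.map_ideal_map (e : T' →ₐ[B] T) J]
    constructor
    · intro hx; exact Ideal.mem_map_of_mem _ hx
    · intro hx
      obtain ⟨y, hy, hye⟩ := (Ideal.mem_map_iff_of_surjective (e : T' →ₐ[B] T) e.surjective).mp hx
      have : y = x := e.injective hye
      exact this ▸ hy
  refine ⟨?_, ?_, ?_⟩
  · rw [← IsAdicComplete.map_algebraMap_iff (S := T')]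
    rw [← IsAdicComplete.congr_ringEquiv (Ideal.map (algebraMap B T') M) e.toRingEquiv]
    have := h.complete
    rw [← IsAdicComplete.map_algebraMap_iff (S := T)] at this
    convert this using 1
    rw [← AlgHom.map_ideal_map (e : T' →ₐ[B] T)]
    rfl
  · intro n b hb
    rw [hmap] at hb
    exact h.comap_le n b (by simpa using hb)
  · intro n t
    obtain ⟨b, hb⟩ := h.dense n (e t)
    refine ⟨b, ?_⟩
    rw [hmap]; simpa using hb

lemma AdicCompl.mvPowerSeries (n : ℕ) (K : Type*) [CommRing K] :
    AdicCompl (MvPolynomial (Fin n) K) (MvPolynomial.idealOfVars (Fin n) K) (MvPowerSeries (Fin n) K) :=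
  AdicCompl.congr (MvPowerSeries.toAdicCompletionAlgEquiv (Fin n) K)
    (AdicCompl.adicCompletion _ (MvPolynomial.idealOfVars_fg _ _))

lemma AdicCompl.exists_lift {P O B T : Type*} [CommRing P] [CommRing O] [CommRing B] [CommRing T]
    [Algebra P O] [Algebra P T] [Algebra B T] {m : Ideal P} {M : Ideal B}
    (hO : AdicCompl P m O) (hT : AdicCompl B M T) (hmM : m.map (algebraMap P T) ≤ M.map (algebraMap B T)) :
    Nonempty (O →ₐ[P] T) := by
  let J := M.map (algebraMap B T)
  have hc := hT.complete
  rw [← IsAdicComplete.map_algebraMap_iff (S := T)] at hc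
  have hpow : ∀ n, (m ^ n).map (algebraMap P T) ≤ J ^ n := by
    intro n; rw [Ideal.map_pow]; exact Ideal.pow_right_mono hmM n
  -- key existence
  have hle : ∀ n, m ^ n ≤ ((m ^ n).map (algebraMap P O)).comap (algebraMap P O) :=
    fun n => Ideal.le_comap_map
  let g : ∀ n, P ⧸ m ^ n →+* O ⧸ (m ^ n).map (algebraMap P O) :=
    fun n => Ideal.quotientMap _ (algebraMap P O) (hle n)
  have hg : ∀ n, Function.Bijective (g n) := by
    intro n
    constructor
    · rw [injective_iff_map_eq_zero]
      intro x hx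
      obtain ⟨x, rfl⟩ := Ideal.Quotient.mk_surjective x
      rw [Ideal.quotientMap_mk, Ideal.Quotient.eq_zero_iff_mem] at hx
      exact Ideal.Quotient.eq_zero_iff_mem.mpr (hO.comap_le n x hx)
    · intro x
      obtain ⟨x, rfl⟩ := Ideal.Quotient.mk_surjective x
      obtain ⟨b, hb⟩ := hO.dense n x
      refine ⟨Ideal.Quotient.mk _ b, ?_⟩
      rw [Ideal.quotientMap_mk, eq_comm, Ideal.Quotient.eq]
      exact hb
  let ge : ∀ n, P ⧸ m ^ n ≃+* O ⧸ (m ^ n).map (algebraMap P O) := fun n => RingEquiv.ofBijective (g n) (hg n)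
  let k : ∀ n, P ⧸ m ^ n →+* T ⧸ J ^ n := fun n =>
    Ideal.quotientMap _ (algebraMap P T) (Ideal.map_le_iff_le_comap.mp (hpow n))
  let f : ∀ n, O →+* T ⧸ J ^ n := fun n =>
    ((k n).comp (ge n).symm.toRingHom).comp (Ideal.Quotient.mk _)
  have hf : ∀ n (o : O) (b : P), o - algebraMap P O b ∈ (m ^ n).map (algebraMap P O) →
      f n o = Ideal.Quotient.mk _ (algebraMap P T b) := by
    intro n o b hb
    have h1 : Ideal.Quotient.mk ((m ^ n).map (algebraMap P O)) o = ge n (Ideal.Quotient.mk _ b) := by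
      show Ideal.Quotient.mk ((m ^ n).map (algebraMap P O)) o = g n (Ideal.Quotient.mk _ b)
      rw [Ideal.quotientMap_mk, Ideal.Quotient.eq]; exact hb
    show k n ((ge n).symm (Ideal.Quotient.mk _ o)) = _
    rw [h1, RingEquiv.symm_apply_apply, Ideal.quotientMap_mk]
  let F : O →+* T := IsAdicComplete.liftRingHom J f (by
    intro a b hab
    ext o
    obtain ⟨p, hp⟩ := hO.dense b o
    rw [RingHom.comp_apply, hf b o p hp, hf a o p (Ideal.map_mono (Ideal.pow_le_pow_right hab) hp)]
    rfl)
  refine ⟨{ F with commutes' := ?_ }⟩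
  intro p
  show F (algebraMap P O p) = _
  rw [← sub_eq_zero]
  refine IsHausdorff.haus (I := J) inferInstance _ fun n => ?_
  rw [SModEq.zero, smul_eq_mul, Ideal.mul_top, ← Ideal.Quotient.eq_zero_iff_mem, map_sub, sub_eq_zero]
  rw [IsAdicComplete.mk_liftRingHom]
  exact hf n _ p (by simp)

lemma AdicCompl.of_localization {B A T : Type*} [CommRing B] [CommRing A] [CommRing T]
    (M : Ideal B) [M.IsMaximal] [Algebra B A] [IsLocalization.AtPrime A M] [IsLocalRing A]
    [Algebra A T] [Algebra B T] [IsScalarTower B A T]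
    (h : AdicCompl A (IsLocalRing.maximalIdeal A) T) : AdicCompl B M T := by
  have hm : M.map (algebraMap B A) = IsLocalRing.maximalIdeal A :=
    IsLocalization.AtPrime.map_eq_maximalIdeal M A
  have hmap : ∀ n, (M ^ n).map (algebraMap B T) = ((IsLocalRing.maximalIdeal A) ^ n).map (algebraMap A T) := by
    intro n
    rw [← hm, ← Ideal.map_pow, Ideal.map_map, ← IsScalarTower.algebraMap_eq]
  have hinv : ∀ n, ∀ s ∉ M, ∃ c, 1 - s * c ∈ M ^ n := by
    intro n s hs
    obtain ⟨y, i, hi, hy⟩ := Ideal.IsMaximal.exists_inv_pow M hs (n := n)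
    exact ⟨y, by rw [← hy, mul_comm y, add_sub_cancel_left]; exact hi⟩
  refine ⟨?_, ?_, ?_⟩
  · have := h.complete
    rw [← IsAdicComplete.map_algebraMap_iff (S := T)] at this ⊢
    have h1 := hmap 1
    rw [pow_one, pow_one] at h1
    rwa [h1]
  · intro n b hb
    rw [hmap, IsScalarTower.algebraMap_apply B A T] at hb
    have h1 := h.comap_le n _ hb
    rw [← hm, ← Ideal.map_pow, IsLocalization.mem_map_algebraMap_iff M.primeCompl] at h1
    obtain ⟨⟨x, s⟩, hx⟩ := h1
    dsimp only at hx
    rw [← map_mul, IsLocalization.eq_iff_exists M.primeCompl] at hx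
    obtain ⟨c, hc⟩ := hx
    obtain ⟨d, hd⟩ := hinv n (c * s) (M.primeCompl.mul_mem c.2 s.2)
    have e : b = b * (1 - c * s * d) + d * (c * x) := by rw [← hc]; ring
    rw [e]
    exact add_mem (Ideal.mul_mem_left _ _ hd) (Ideal.mul_mem_left _ _ (Ideal.mul_mem_left _ _ x.2))
  · intro n t
    obtain ⟨a, ha⟩ := h.dense n t
    obtain ⟨b, s, rfl⟩ := IsLocalization.exists_mk'_eq M.primeCompl a
    obtain ⟨c, hc⟩ := hinv n s s.2
    refine ⟨b * c, ?_⟩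
    rw [hmap]
    have e : t - algebraMap B T (b * c) = (t - algebraMap A T (IsLocalization.mk' A b s)) +
      algebraMap A T (IsLocalization.mk' A b s * algebraMap B A (1 - s * c)) := by
      have : IsLocalization.mk' A b s * algebraMap B A (1 - s * c) =
          IsLocalization.mk' A b s - algebraMap B A (b * c) := by
        rw [map_sub, map_one, mul_sub, mul_one, map_mul, ← mul_assoc, IsLocalization.mk'_spec, map_mul]
      rw [this, map_sub, ← IsScalarTower.algebraMap_apply]; ring
    rw [e]
    refine add_mem ha (Ideal.mem_map_of_mem _ (Ideal.mul_mem_left _ _ ?_))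
    rw [← hm, ← Ideal.map_pow]
    exact Ideal.mem_map_of_mem _ hc

-- Part PE2
lemma AdicCompl.quotient {B T B' T' : Type*} [CommRing B] [CommRing T] [CommRing B'] [CommRing T']
    [IsNoetherianRing T] [Algebra B T] [Algebra B B'] [Algebra B T'] [Algebra B' T'] [Algebra T T']
    [IsScalarTower B T T'] [IsScalarTower B B' T'] {M : Ideal B}
    (h : AdicCompl B M T) (hB : Function.Surjective (algebraMap B B'))
    (hT : Function.Surjective (algebraMap T T'))
    (hker : RingHom.ker (algebraMap T T') = (RingHom.ker (algebraMap B B')).map (algebraMap B T)) :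
    AdicCompl B' (M.map (algebraMap B B')) T' := by
  have hmap : ∀ n, ((M.map (algebraMap B B')) ^ n).map (algebraMap B' T') =
      ((M ^ n).map (algebraMap B T)).map (algebraMap T T') := by
    intro n
    rw [← Ideal.map_pow, Ideal.map_map, Ideal.map_map, ← IsScalarTower.algebraMap_eq,
      ← IsScalarTower.algebraMap_eq]
  have happrox : ∀ (I : Ideal B) n (y : T), y ∈ I.map (algebraMap B T) →
      ∃ i ∈ I, y - algebraMap B T i ∈ (M ^ n).map (algebraMap B T) := by
    intro I n y hy
    refine Submodule.span_induction ?_ ?_ ?_ ?_ hy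
    · rintro _ ⟨i, hi, rfl⟩
      exact ⟨i, hi, by simp⟩
    · exact ⟨0, zero_mem _, by simp⟩
    · rintro x y _ _ ⟨i, hi, hx⟩ ⟨j, hj, hy⟩
      refine ⟨i + j, add_mem hi hj, ?_⟩
      have := add_mem hx hy
      rwa [show x + y - algebraMap B T (i + j) = x - algebraMap B T i + (y - algebraMap B T j) by
        rw [map_add]; ring]
    · rintro t x _ ⟨i, hi, hx⟩
      obtain ⟨b, hb⟩ := h.dense n t
      refine ⟨b * i, Ideal.mul_mem_left _ _ hi, ?_⟩
      rw [show t • x - algebraMap B T (b * i) = t * (x - algebraMap B T i) +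
        algebraMap B T i * (t - algebraMap B T b) by rw [map_mul, smul_eq_mul]; ring]
      exact add_mem (Ideal.mul_mem_left _ _ hx) (Ideal.mul_mem_left _ _ hb)
  refine ⟨?_, ?_, ?_⟩
  · rw [← IsAdicComplete.map_algebraMap_iff (S := T')]
    have h1 := hmap 1
    rw [pow_one, pow_one] at h1
    rw [h1, IsAdicComplete.map_algebraMap_iff]
    have hc := h.complete
    rw [← IsAdicComplete.map_algebraMap_iff (S := T)] at hc
    haveI : Module.Finite T T' := Module.Finite.of_surjective (Algebra.linearMap T T') hT
    have hh : IsHausdorff (M.map (algebraMap B T)) T' :=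
      IsHausdorff.of_le_jacobson _ T' (IsAdicComplete.le_jacobson_bot _)
    have hp : IsPrecomplete (M.map (algebraMap B T)) T' := by
      rw [← AdicCompletion.of_surjective_iff]
      intro y
      obtain ⟨x, rfl⟩ := AdicCompletion.map_surjective (M.map (algebraMap B T))
        (f := Algebra.linearMap T T') hT y
      obtain ⟨x, rfl⟩ := AdicCompletion.of_surjective (M.map (algebraMap B T)) T x
      exact ⟨Algebra.linearMap T T' x, by rw [AdicCompletion.map_of]⟩
    exact { hh, hp with }
  · intro n b' hb
    obtain ⟨b, rfl⟩ := hB b'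
    rw [hmap, ← IsScalarTower.algebraMap_apply, IsScalarTower.algebraMap_apply B T T',
      Ideal.mem_map_iff_of_surjective _ hT] at hb
    obtain ⟨x, hx, hxb⟩ := hb
    have h1 : algebraMap B T b - x ∈ RingHom.ker (algebraMap T T') := by
      rw [RingHom.mem_ker, map_sub, hxb, sub_self]
    rw [hker] at h1
    obtain ⟨i, hi, hi'⟩ := happrox _ n _ h1
    have h2 : b - i ∈ M ^ n := by
      refine h.comap_le n _ ?_
      rw [show algebraMap B T (b - i) = (algebraMap B T b - x - algebraMap B T i) + x by
        rw [map_sub]; ring]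
      exact add_mem hi' hx
    have h3 := Ideal.mem_map_of_mem (algebraMap B B') h2
    rwa [map_sub, (RingHom.mem_ker).mp hi, sub_zero, Ideal.map_pow] at h3
  · intro n t'
    obtain ⟨t, rfl⟩ := hT t'
    obtain ⟨b, hb⟩ := h.dense n t
    refine ⟨algebraMap B B' b, ?_⟩
    rw [hmap, ← IsScalarTower.algebraMap_apply, IsScalarTower.algebraMap_apply B T T', ← map_sub]
    exact Ideal.mem_map_of_mem _ hb

/-- uniqueness of a completion : `P' ⊗ O → O'` bijective if locality holds. -/
lemma locMap_bijective_of_local {P O B T : Type*} [CommRing P] [CommRing O] [CommRing B] [CommRing T]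
  [Algebra P O] [Algebra P B] [Algebra B T] [Algebra P T] [Algebra O T] [IsScalarTower P B T]
  [IsScalarTower P O T] [IsNoetherianRing P] [IsNoetherianRing O] [Module.Finite P B]
  (m : Ideal P) [m.IsMaximal] (M : Ideal B) [M.IsMaximal] (hO : AdicCompl P m O) (hT : AdicCompl B M T)
    (hmM : m.map (algebraMap P B) ≤ M) (N : ℕ) (hN : M ^ N ≤ m.map (algebraMap P B)) :
    Function.Bijective (locMap P O B T) := by
  refine ⟨?_, locMap_surjective m M hO hT hmM⟩
  rw [injective_iff_map_eq_zero]
  intro s hs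
  obtain ⟨t, ht, hts⟩ := locMap_eq_zero m M hO hT hmM s hs
  suffices IsUnit t by exact (this.mul_right_eq_zero).mp hts
  have happ : ∀ t : B ⊗[P] O, ∃ b : B, t - b ⊗ₜ 1 ∈ m.map (algebraMap P (B ⊗[P] O)) := by
    intro t
    induction t using TensorProduct.induction_on with
    | zero => exact ⟨0, by simp⟩
    | add x y hx hy =>
      obtain ⟨b, hb⟩ := hx
      obtain ⟨c, hc⟩ := hy
      refine ⟨b + c, ?_⟩
      have := add_mem hb hc
      rwa [show x + y - (b + c) ⊗ₜ[P] (1 : O) = x - b ⊗ₜ[P] 1 + (y - c ⊗ₜ[P] 1) by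
        rw [TensorProduct.add_tmul]; ring]
    | tmul b o =>
      obtain ⟨p, hp⟩ := hO.dense 1 o
      rw [pow_one] at hp
      refine ⟨p • b, ?_⟩
      have h3 := Ideal.mem_map_of_mem (Algebra.TensorProduct.includeRight : O →ₐ[P] B ⊗[P] O) hp
      rw [AlgHom.map_ideal_map] at h3
      have h4 := Ideal.mul_mem_left _ (b ⊗ₜ[P] (1 : O)) h3
      convert h4 using 1
      rw [Algebra.TensorProduct.includeRight_apply, Algebra.TensorProduct.tmul_mul_tmul, mul_one, one_mul,
        TensorProduct.tmul_sub, Algebra.algebraMap_eq_smul_one, TensorProduct.tmul_smul, TensorProduct.smul_tmul']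
  obtain ⟨b, hb⟩ := happ t
  have hbM : b ∉ M := by
    intro hh
    have h1 := Ideal.mem_map_of_mem (locMap P O B T) hb
    rw [AlgHom.map_ideal_map, map_sub, locMap_tmul, map_one, mul_one] at h1
    have h2 : m.map (algebraMap P T) ≤ M.map (algebraMap B T) := by
      rw [IsScalarTower.algebraMap_eq P B T, ← Ideal.map_map]; exact Ideal.map_mono hmM
    have h3 := add_mem (h2 h1) (Ideal.mem_map_of_mem (algebraMap B T) hh)
    rw [sub_add_cancel] at h3
    exact hT.map_ne_top (Ideal.eq_top_of_isUnit_mem _ h3 ht)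
  obtain ⟨c, i, hi, hci⟩ := Ideal.IsMaximal.exists_inv_pow M hbM N
  have hmem : c ⊗ₜ[P] (1:O) * t - 1 ∈ m.map (algebraMap P (B ⊗[P] O)) := by
    have h1 := Ideal.mem_map_of_mem (Algebra.TensorProduct.includeLeft : B →ₐ[P] B ⊗[P] O) (hN hi)
    rw [AlgHom.map_ideal_map] at h1
    have h2 := sub_mem (Ideal.mul_mem_left _ (c ⊗ₜ[P] (1:O)) hb) h1
    convert h2 using 1
    rw [mul_sub, Algebra.TensorProduct.tmul_mul_tmul, mul_one, Algebra.TensorProduct.includeLeft_apply, sub_sub,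
      ← TensorProduct.add_tmul, hci]
    rfl
  have hint : (Algebra.TensorProduct.includeRight : O →ₐ[P] B ⊗[P] O).toRingHom.IsIntegral := by
    intro x
    induction x using TensorProduct.induction_on with
    | zero => exact RingHom.isIntegralElem_zero _
    | add x y hx hy => exact RingHom.IsIntegralElem.add _ hx hy
    | tmul b o =>
      have : b ⊗ₜ[P] o = b ⊗ₜ[P] 1 * 1 ⊗ₜ[P] o := by simp
      rw [this]
      refine RingHom.IsIntegralElem.mul _ ?_ (RingHom.isIntegralElem_map _)
      obtain ⟨q, hq, hqb⟩ := Algebra.IsIntegral.isIntegral (R := P) b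
      refine ⟨q.map (algebraMap P O), hq.map _, ?_⟩
      rw [Polynomial.eval₂_map]
      have h5 := congrArg (Algebra.TensorProduct.includeLeft : B →ₐ[P] B ⊗[P] O) hqb
      rw [map_zero] at h5
      rw [← h5]
      rw [show (Algebra.TensorProduct.includeLeft : B →ₐ[P] B ⊗[P] O) (Polynomial.eval₂ (algebraMap P B) b q) = 
        (Algebra.TensorProduct.includeLeft : B →ₐ[P] B ⊗[P] O).toRingHom (Polynomial.eval₂ (algebraMap P B) b q) from rfl,
        Polynomial.hom_eval₂]
      congr 1
      ext p
      simp
  by_contra hnu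
  obtain ⟨Q, hQ, htQ⟩ := exists_max_ideal_of_mem_nonunits hnu
  have hQm := Ideal.isMaximal_comap_of_isIntegral_of_isMaximal' _ hint Q
  have hc := hO.complete
  rw [← IsAdicComplete.map_algebraMap_iff (S := O)] at hc
  have h6 : m.map (algebraMap P O) ≤ Q.comap (Algebra.TensorProduct.includeRight : O →ₐ[P] B ⊗[P] O).toRingHom :=
    (IsAdicComplete.le_jacobson_bot (m.map (algebraMap P O))).trans (sInf_le ⟨bot_le, hQm⟩)
  have h7 : m.map (algebraMap P (B ⊗[P] O)) ≤ Q := by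
    rw [← AlgHom.map_ideal_map (Algebra.TensorProduct.includeRight : O →ₐ[P] B ⊗[P] O) m]
    exact Ideal.map_le_iff_le_comap.mpr h6
  refine hQ.ne_top ((Ideal.eq_top_iff_one _).mpr ?_)
  have := sub_mem (Ideal.mul_mem_left _ (c ⊗ₜ[P] (1:O)) htQ) (h7 hmem)
  rwa [sub_sub_cancel] at this

-- Part PF
/-- division property -/
def DivProp {S : Type*} [CommRing S] (u : S) : Prop :=
  ∀ z : S, ∀ p : Polynomial S, p.Monic → (p.scaleRoots u).eval z = 0 → u ∣ z

lemma DivProp.map {S S' : Type*} [CommRing S] [CommRing S'] (e : S ≃+* S') {u : S} (h : DivProp u) :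
    DivProp (e u) := by
  intro z p hp hz
  have h1 := h (e.symm z) (p.map e.symm.toRingHom) (hp.map _) ?_
  · have := map_dvd e h1
    simpa using this
  · have h2 : (p.map e.symm.toRingHom).scaleRoots u = (p.scaleRoots (e u)).map e.symm.toRingHom := by
      ext i
      have h3 : (p.map e.symm.toRingHom).natDegree = p.natDegree :=
        Polynomial.natDegree_map_eq_of_injective (f := e.symm.toRingHom) e.symm.injective p
      rw [Polynomial.coeff_scaleRoots, h3, Polynomial.coeff_map, Polynomial.coeff_map, Polynomial.coeff_scaleRoots,
        map_mul, map_pow]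
      simp
    rw [h2, show e.symm z = e.symm.toRingHom z from rfl, Polynomial.eval_map_apply, hz, map_zero]

lemma sep_reduced (k R L : Type*) [Field k] [CommRing R] [IsDomain R] [Field L]
    [Algebra k R] [Algebra k L] [FiniteDimensional k L] [Algebra.IsSeparable k L] :
    IsReduced (R ⊗[k] L) := by
  haveI : Algebra.FormallyEtale k L := Algebra.FormallyEtale.of_isSeparable k L
  let F := FractionRing R
  haveI : IsReduced (F ⊗[k] L) := Algebra.FormallyUnramified.isReduced_of_field F (F ⊗[k] L)
  refine isReduced_of_injective (Algebra.TensorProduct.map (IsScalarTower.toAlgHom k R F) (AlgHom.id k L)) ?_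
  exact Module.Flat.rTensor_preserves_injective_linearMap (M := L) (IsScalarTower.toAlgHom k R F).toLinearMap
    (IsFractionRing.injective R F)

lemma sep_div (k R L : Type*) [Field k] [CommRing R] [IsDomain R] [IsIntegrallyClosed R] [Field L]
    [Algebra k R] [Algebra k L] [FiniteDimensional k L] [Algebra.IsSeparable k L] (u : R) (hu : u ≠ 0) :
    DivProp (u ⊗ₜ[k] (1 : L)) := by
  haveI : Algebra.FormallyEtale k L := Algebra.FormallyEtale.of_isSeparable k L
  haveI : Algebra.FinitePresentation k L := Algebra.FinitePresentation.of_finiteType.mp inferInstance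
  haveI : Algebra.Smooth k L := ⟨inferInstance, inferInstance⟩
  let F := FractionRing R
  let S := R ⊗[k] L
  have hbij := TensorProduct.toIntegralClosure_bijective_of_smooth (R := R) (S := S) (B := F)
  intro z p hp hz
  let j : S →+* S ⊗[R] F := algebraMap S _
  have hj : Function.Injective j := by
    have h1 := Module.Flat.lTensor_preserves_injective_linearMap (M := S) (Algebra.linearMap R F)
      (IsFractionRing.injective R F)
    intro a b hab
    refine (TensorProduct.rid R S).symm.injective (h1 ?_)
    rw [TensorProduct.rid_symm_apply, TensorProduct.rid_symm_apply, LinearMap.lTensor_tmul, LinearMap.lTensor_tmul,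
      Algebra.linearMap_apply, map_one]
    exact hab
  let w : F := (algebraMap R F u)⁻¹
  have hw : j (u ⊗ₜ[k] (1 : L)) * (1 ⊗ₜ[R] w) = 1 := by
    have h3 : (u ⊗ₜ[k] (1 : L)) = u • (1 : S) := by
      rw [Algebra.TensorProduct.one_def, TensorProduct.smul_tmul', smul_eq_mul, mul_one]
    rw [h3]
    show ((u • (1 : S)) ⊗ₜ[R] (1 : F)) * (1 ⊗ₜ[R] w) = 1
    rw [TensorProduct.smul_tmul, Algebra.TensorProduct.tmul_mul_tmul, Algebra.smul_def, mul_one, mul_one,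
      mul_inv_cancel₀ (by simpa using hu)]
    rfl
  have hint : IsIntegral S (j z * (1 ⊗ₜ[R] w)) := by
    refine ⟨p, hp, ?_⟩
    have h5 := Polynomial.scaleRoots_eval₂_mul (p := p) j (j z * (1 ⊗ₜ[R] w)) (u ⊗ₜ[k] (1 : L))
    rw [mul_left_comm, hw, mul_one, Polynomial.eval₂_at_apply, hz, map_zero] at h5
    have h6 : IsUnit (j (u ⊗ₜ[k] (1 : L)) ^ p.natDegree) := (IsUnit.of_mul_eq_one _ hw).pow _
    exact (h6.mul_right_eq_zero).mp h5.symm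
  obtain ⟨x, hx⟩ := hbij.2 ⟨_, hint⟩
  have hx' := congrArg Subtype.val hx
  have hic : ∀ x : S ⊗[R] integralClosure R F, ∃ s, (TensorProduct.toIntegralClosure R S F x : S ⊗[R] F) = j s := by
    intro x
    induction x using TensorProduct.induction_on with
    | zero => exact ⟨0, by simp⟩
    | add x y hx hy =>
      obtain ⟨a, ha⟩ := hx
      obtain ⟨b, hb⟩ := hy
      exact ⟨a + b, by rw [map_add, map_add, ← ha, ← hb]; rfl⟩
    | tmul s y =>
      obtain ⟨r, hr⟩ := IsIntegrallyClosed.isIntegral_iff.mp y.2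
      refine ⟨r • s, ?_⟩
      show s ⊗ₜ[R] y.1 = (r • s) ⊗ₜ[R] 1
      rw [← hr, TensorProduct.smul_tmul, Algebra.smul_def, mul_one]
  obtain ⟨s, hs⟩ := hic x
  refine ⟨s, hj ?_⟩
  rw [map_mul, ← hs, hx', mul_left_comm, hw, mul_one]

structure IsGood (P O L : Type*) [CommRing P] [CommRing O] [CommRing L] [Algebra P O] [Algebra P L] : Prop where
  reduced : IsReduced (L ⊗[P] O)
  div : ∀ u : O, u ≠ 0 → DivProp ((1 : L) ⊗ₜ[P] u)

lemma isGood_of_separable (P O k L : Type*) [CommRing P] [IsDomain P] [CommRing O] [IsDomain O]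
    [IsIntegrallyClosed O] [Algebra P O] (hinj : Function.Injective (algebraMap P O)) [Field k] [Field L] [Algebra P k]
    [IsFractionRing P k] [Algebra k L] [Algebra P L] [IsScalarTower P k L] [FiniteDimensional k L]
    [Algebra.IsSeparable k L] : IsGood P O L := by
  letI : Algebra O (k ⊗[P] O) := Algebra.TensorProduct.rightAlgebra
  let N := Algebra.algebraMapSubmonoid O P⁰
  have hN : N ≤ O⁰ := by
    rintro _ ⟨x, hx, rfl⟩
    refine mem_nonZeroDivisors_of_ne_zero ?_
    rw [map_ne_zero_iff _ hinj]
    exact nonZeroDivisors.ne_zero hx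
  haveI : IsLocalization N (k ⊗[P] O) := IsLocalization.tensorRight k P⁰
  haveI : IsDomain (k ⊗[P] O) := IsLocalization.isDomain_of_le_nonZeroDivisors (M := N) _ hN
  haveI : IsIntegrallyClosed (k ⊗[P] O) := isIntegrallyClosed_of_isLocalization _ N hN
  let e : (k ⊗[P] O) ⊗[k] L ≃ₐ[k] L ⊗[P] O := (Algebra.TensorProduct.comm k _ L).trans
    ((Algebra.TensorProduct.cancelBaseChange P k k L O))
  refine ⟨?_, ?_⟩
  · haveI := sep_reduced k (k ⊗[P] O) L
    exact isReduced_of_injective e.symm e.symm.injective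
  · intro u hu
    have hu' : (1 : k) ⊗ₜ[P] u ≠ 0 := by
      have h1 := IsLocalization.injective (k ⊗[P] O) hN
      intro h
      exact hu (h1 (by rw [map_zero]; exact h))
    have := DivProp.map e.toRingEquiv (sep_div k (k ⊗[P] O) L _ hu')
    convert this using 1
    simp [e]

-- Part PG
lemma exists_root_poly {n : ℕ} {K Ω : Type*} [Field K] [Field Ω] [Algebra K Ω] (p e : ℕ) [ExpChar Ω p]
    (x y : Fin n → Ω) (hy : ∀ i, y i ^ p ^ e = x i)
    (ρ : K → Ω) (hρ : ∀ b, ρ b ^ p ^ e = algebraMap K Ω b) (K' : IntermediateField K Ω)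
    (f : MvPolynomial (Fin n) K) (hf : ∀ j ∈ f.support, ρ (f.coeff j) ∈ K') :
    ∃ f' : MvPolynomial (Fin n) K', (MvPolynomial.aeval y f') ^ p ^ e = MvPolynomial.aeval x f := by
  classical
  refine ⟨∑ j ∈ f.support.attach, MvPolynomial.monomial j.1 ⟨ρ (f.coeff j.1), hf _ j.2⟩, ?_⟩
  rw [← iterateFrobenius_def, map_sum, map_sum]
  conv_rhs => rw [MvPolynomial.as_sum f, map_sum, ← Finset.sum_attach]
  refine Finset.sum_congr rfl fun j _ => ?_
  rw [MvPolynomial.aeval_monomial, MvPolynomial.aeval_monomial, iterateFrobenius_def, mul_pow]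
  congr 1
  · exact hρ _
  · rw [Finsupp.prod, Finsupp.prod, ← Finset.prod_pow]
    refine Finset.prod_congr rfl fun i _ => ?_
    rw [← hy, ← pow_mul, ← pow_mul, mul_comm]

lemma exists_sep_pre (n : ℕ) (K k Ω : Type*) [Field K] [Field k] [Field Ω] [Algebra K Ω]
    [Algebra (MvPolynomial (Fin n) K) k] [IsFractionRing (MvPolynomial (Fin n) K) k]
    [Algebra (MvPolynomial (Fin n) K) Ω] [IsScalarTower K (MvPolynomial (Fin n) K) Ω]
    [Algebra k Ω] [IsScalarTower (MvPolynomial (Fin n) K) k Ω]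
    [IsAlgClosed Ω] [Algebra.IsAlgebraic k Ω] (s : Finset Ω) :
    ∃ K' : IntermediateField K Ω, FiniteDimensional K K' ∧ ∃ q : ℕ, 0 < q ∧ ∃ y : Fin n → Ω,
      (∀ i, y i ^ q = algebraMap (MvPolynomial (Fin n) K) Ω (MvPolynomial.X i)) ∧
      ∀ a ∈ s, ∃ f : Polynomial Ω, f.Monic ∧ f.Separable ∧ f.eval a = 0 ∧
        ∀ i, ∃ G H : MvPolynomial (Fin n) K', MvPolynomial.aeval y H ≠ 0 ∧
          f.coeff i = MvPolynomial.aeval y G / MvPolynomial.aeval y H := by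
  classical
  let p := ringExpChar k
  haveI : ExpChar Ω p := expChar_of_injective_algebraMap (algebraMap k Ω).injective p
  have hp : 0 < p := expChar_pos k p
  let E := perfectClosure k Ω
  haveI : Algebra.IsAlgebraic E Ω := Algebra.IsAlgebraic.tower_top (K := k) E
  haveI : Algebra.IsSeparable E Ω := inferInstance
  let F : Ω → Polynomial Ω := fun a => (minpoly E a).map (algebraMap E Ω)
  let C : Finset Ω := s.biUnion fun a => (F a).coeffs
  have h1 : ∀ c ∈ C, ∃ e : ℕ, c ^ p ^ e ∈ (algebraMap k Ω).range := by
    intro c hc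
    rw [Finset.mem_biUnion] at hc
    obtain ⟨a, _, hc⟩ := hc
    rw [Polynomial.mem_coeffs_iff] at hc
    obtain ⟨i, _, rfl⟩ := hc
    rw [← mem_perfectClosure_iff_pow_mem p]
    show (Polynomial.map _ _).coeff i ∈ perfectClosure k Ω
    rw [Polynomial.coeff_map]
    exact ((minpoly E a).coeff i).2
  choose! ee hee using h1
  let e := C.sup ee
  have h2 : ∀ c ∈ C, ∃ g h : MvPolynomial (Fin n) K, h ≠ 0 ∧ c ^ p ^ e =
      algebraMap (MvPolynomial (Fin n) K) Ω g / algebraMap (MvPolynomial (Fin n) K) Ω h := by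
    intro c hc
    have h3 : c ^ p ^ e = (c ^ p ^ ee c) ^ p ^ (e - ee c) := by
      rw [← pow_mul, ← pow_add, Nat.add_sub_cancel' (Finset.le_sup hc)]
    have h4 : c ^ p ^ e ∈ (algebraMap k Ω).range := by
      rw [h3]; exact pow_mem (hee c hc) _
    obtain ⟨x, hx⟩ := h4
    obtain ⟨g, h, hh, rfl⟩ := IsFractionRing.div_surjective (A := MvPolynomial (Fin n) K) x
    refine ⟨g, h, nonZeroDivisors.ne_zero hh, ?_⟩
    rw [← hx, map_div₀, ← IsScalarTower.algebraMap_apply, ← IsScalarTower.algebraMap_apply]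
  choose! g h hh hgh using h2
  have hq : 0 < p ^ e := pow_pos hp e
  choose ρ hρ using fun b : K => IsAlgClosed.exists_pow_nat_eq (algebraMap K Ω b) hq
  choose y hy using fun i : Fin n => IsAlgClosed.exists_pow_nat_eq
    (algebraMap (MvPolynomial (Fin n) K) Ω (MvPolynomial.X i)) hq
  let T : Finset K := C.biUnion fun c => (g c).support.image (fun j => (g c).coeff j) ∪
    (h c).support.image (fun j => (h c).coeff j)
  let K' : IntermediateField K Ω := IntermediateField.adjoin K (T.image ρ : Finset Ω)
  have hinj : Function.Injective (algebraMap (MvPolynomial (Fin n) K) Ω) := by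
    rw [IsScalarTower.algebraMap_eq _ k Ω]
    exact (algebraMap k Ω).injective.comp (IsFractionRing.injective _ k)
  refine ⟨K', ?_, p ^ e, hq, y, hy, ?_⟩
  · refine IntermediateField.finiteDimensional_adjoin fun x hx => ?_
    rw [Finset.mem_coe, Finset.mem_image] at hx
    obtain ⟨b, _, rfl⟩ := hx
    refine IsIntegral.of_pow hq ?_
    rw [hρ]
    exact isIntegral_algebraMap
  · intro a ha
    refine ⟨F a, ?_, ?_, ?_, ?_⟩
    · exact (minpoly.monic (Algebra.IsIntegral.isIntegral a)).map _
    · exact Polynomial.Separable.map (Algebra.IsSeparable.isSeparable E a)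
    · rw [Polynomial.eval_map_algebraMap, minpoly.aeval]
    · intro i
      by_cases hi : (F a).coeff i = 0
      · exact ⟨0, 1, by simp, by simp [hi]⟩
      have hc : (F a).coeff i ∈ C := by
        rw [Finset.mem_biUnion]
        refine ⟨a, ha, ?_⟩
        rw [Polynomial.mem_coeffs_iff]
        exact ⟨i, by simpa using hi, rfl⟩
      generalize (F a).coeff i = c at hc
      have hxx : ∀ f : MvPolynomial (Fin n) K, MvPolynomial.aeval
          (fun i => algebraMap (MvPolynomial (Fin n) K) Ω (MvPolynomial.X i)) f =
            algebraMap (MvPolynomial (Fin n) K) Ω f := by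
        intro f
        have : MvPolynomial.aeval
          (fun i => algebraMap (MvPolynomial (Fin n) K) Ω (MvPolynomial.X i)) =
          IsScalarTower.toAlgHom K (MvPolynomial (Fin n) K) Ω := by
          ext i; simp
        rw [this]; rfl
      have hmem : ∀ b ∈ T, ρ b ∈ K' := fun b hb =>
        IntermediateField.subset_adjoin K _ (by
          rw [Finset.mem_coe]; exact Finset.mem_image_of_mem _ hb)
      obtain ⟨G, hG⟩ := exists_root_poly p e _ y hy ρ hρ K' (g c) (fun j hj => hmem _ (by
        rw [Finset.mem_biUnion]
        exact ⟨c, hc, Finset.mem_union_left _ (Finset.mem_image_of_mem _ hj)⟩))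
      obtain ⟨H, hH⟩ := exists_root_poly p e _ y hy ρ hρ K' (h c) (fun j hj => hmem _ (by
        rw [Finset.mem_biUnion]
        exact ⟨c, hc, Finset.mem_union_right _ (Finset.mem_image_of_mem _ hj)⟩))
      rw [hxx] at hG hH
      refine ⟨G, H, ?_, ?_⟩
      · intro h0
        rw [h0, zero_pow hq.ne', eq_comm, map_eq_zero_iff _ hinj] at hH
        exact hh c hc hH
      · have := hgh c hc
        rw [← hG, ← hH, ← div_pow] at this
        exact iterateFrobenius_inj Ω p e this

-- Part PH
universe w

lemma mvPoly_finite_pow (n : ℕ) (K K' : Type*) [Field K] [Field K'] [Algebra K K'] [FiniteDimensional K K']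
    (q : ℕ) (hq : 0 < q) (φ : MvPolynomial (Fin n) K →ₐ[K] MvPolynomial (Fin n) K')
    (hφ : ∀ i, φ (MvPolynomial.X i) = MvPolynomial.X i ^ q) : φ.toRingHom.Finite := by
  have hint : φ.toRingHom.IsIntegral := by
    intro x
    induction x using MvPolynomial.induction_on with
    | C a =>
      have h1 : IsIntegral K a := Algebra.IsIntegral.isIntegral a
      have h2 : IsIntegral K (MvPolynomial.C a : MvPolynomial (Fin n) K') :=
        h1.map (IsScalarTower.toAlgHom K K' (MvPolynomial (Fin n) K'))
      obtain ⟨f, hf, hfa⟩ := h2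
      refine ⟨f.map (algebraMap K _), hf.map _, ?_⟩
      rw [Polynomial.eval₂_map]
      have h3 : φ.toRingHom.comp (algebraMap K (MvPolynomial (Fin n) K)) = algebraMap K (MvPolynomial (Fin n) K') :=
        φ.comp_algebraMap
      rw [h3]
      exact hfa
    | add x y hx hy => exact RingHom.IsIntegralElem.add _ hx hy
    | mul_X x i hx =>
      refine RingHom.IsIntegralElem.mul _ hx ?_
      refine ⟨Polynomial.X ^ q - Polynomial.C (MvPolynomial.X i), Polynomial.monic_X_pow_sub_C _ hq.ne', ?_⟩
      simp [hφ]
  have hft : φ.toRingHom.FiniteType := by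
    refine RingHom.FiniteType.of_comp_finiteType (f := algebraMap K (MvPolynomial (Fin n) K)) ?_
    have : φ.toRingHom.comp (algebraMap K (MvPolynomial (Fin n) K)) = algebraMap K (MvPolynomial (Fin n) K') :=
      φ.comp_algebraMap
    rw [this, RingHom.finiteType_algebraMap]
    exact Algebra.FiniteType.trans (S := K') inferInstance inferInstance
  exact RingHom.IsIntegral.to_finite hint hft

theorem exists_sep_data (n : ℕ) (K : Type u) (k : Type v) (L : Type w) [Field K] [Field k] [Field L]
    [Algebra (MvPolynomial (Fin n) K) k] [IsFractionRing (MvPolynomial (Fin n) K) k]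
    [Algebra (MvPolynomial (Fin n) K) L]
    [Algebra k L] [IsScalarTower (MvPolynomial (Fin n) K) k L] [FiniteDimensional k L] :
    ∃ (K' : Type w) (_ : Field K') (q : ℕ) (φ : MvPolynomial (Fin n) K →+* MvPolynomial (Fin n) K'),
      0 < q ∧ φ.Finite ∧ Function.Injective φ ∧ (∀ i, φ (MvPolynomial.X i) = MvPolynomial.X i ^ q) ∧
      ∃ (L' : Type w) (_ : Field L') (_ : Algebra (FractionRing (MvPolynomial (Fin n) K')) L'),
        FiniteDimensional (FractionRing (MvPolynomial (Fin n) K')) L' ∧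
        Algebra.IsSeparable (FractionRing (MvPolynomial (Fin n) K')) L' ∧
        ∃ j : L →+* L', ∀ x : MvPolynomial (Fin n) K, j (algebraMap (MvPolynomial (Fin n) K) L x) =
          algebraMap (FractionRing (MvPolynomial (Fin n) K')) L' (algebraMap _ _ (φ x)) := by
  classical
  letI : Algebra K L := ((algebraMap (MvPolynomial (Fin n) K) L).comp MvPolynomial.C).toAlgebra
  haveI : IsScalarTower K (MvPolynomial (Fin n) K) L := IsScalarTower.of_algebraMap_eq' rfl
  let Ω := AlgebraicClosure L
  haveI : IsScalarTower K (MvPolynomial (Fin n) K) Ω := IsScalarTower.of_algebraMap_eq fun x => by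
    rw [IsScalarTower.algebraMap_apply K L Ω, IsScalarTower.algebraMap_apply (MvPolynomial (Fin n) K) L Ω,
      IsScalarTower.algebraMap_apply K (MvPolynomial (Fin n) K) L]
  haveI : IsScalarTower (MvPolynomial (Fin n) K) k Ω := IsScalarTower.of_algebraMap_eq fun x => by
    rw [IsScalarTower.algebraMap_apply k L Ω, IsScalarTower.algebraMap_apply (MvPolynomial (Fin n) K) L Ω,
      IsScalarTower.algebraMap_apply (MvPolynomial (Fin n) K) k L]
  haveI : Algebra.IsAlgebraic k Ω := Algebra.IsAlgebraic.trans k L Ω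
  let bs := Module.finBasis k L
  let s : Finset Ω := Finset.univ.image fun i => algebraMap L Ω (bs i)
  obtain ⟨K', hK', q, hq, y, hy, hs⟩ := exists_sep_pre n K k Ω s
  let φ : MvPolynomial (Fin n) K →ₐ[K] MvPolynomial (Fin n) K' :=
    MvPolynomial.aeval fun i => MvPolynomial.X i ^ q
  have hφX : ∀ i, φ (MvPolynomial.X i) = MvPolynomial.X i ^ q := fun i => by simp [φ]
  have hfin := mvPoly_finite_pow n K K' q hq φ hφX
  let ψ : MvPolynomial (Fin n) K' →ₐ[K'] Ω := MvPolynomial.aeval y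
  have hψφ : ∀ x, ψ (φ x) = algebraMap (MvPolynomial (Fin n) K) Ω x := by
    have : (ψ.restrictScalars K).comp φ = IsScalarTower.toAlgHom K (MvPolynomial (Fin n) K) Ω := by
      ext i
      simp [φ, ψ, hy]
    intro x
    exact congrArg (fun f => f x) this
  have hinj : Function.Injective (algebraMap (MvPolynomial (Fin n) K) Ω) := by
    rw [IsScalarTower.algebraMap_eq _ k Ω]
    exact (algebraMap k Ω).injective.comp (IsFractionRing.injective _ k)
  have hφinj : Function.Injective φ := by
    intro a b hab
    apply hinj
    rw [← hψφ, ← hψφ, hab]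
  have hψinj : Function.Injective ψ := by
    letI := φ.toRingHom.toAlgebra
    haveI : Algebra.IsIntegral (MvPolynomial (Fin n) K) (MvPolynomial (Fin n) K') :=
      ⟨hfin.to_isIntegral⟩
    have h0 : RingHom.ker ψ.toRingHom = ⊥ := by
      refine Ideal.eq_bot_of_comap_eq_bot (R := MvPolynomial (Fin n) K) ?_
      rw [eq_bot_iff]
      intro x hx
      have h1 : ψ (φ x) = 0 := hx
      rw [hψφ, map_eq_zero_iff _ hinj] at h1
      exact h1
    exact (RingHom.injective_iff_ker_eq_bot ψ.toRingHom).mpr h0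
  letI : Algebra (MvPolynomial (Fin n) K') Ω := ψ.toRingHom.toAlgebra
  haveI : FaithfulSMul (MvPolynomial (Fin n) K') Ω := (faithfulSMul_iff_algebraMap_injective _ _).mpr hψinj
  letI : Algebra (FractionRing (MvPolynomial (Fin n) K')) Ω := FractionRing.liftAlgebra _ _
  haveI : IsScalarTower (MvPolynomial (Fin n) K') (FractionRing (MvPolynomial (Fin n) K')) Ω :=
    inferInstance
  let k' := FractionRing (MvPolynomial (Fin n) K')
  have hsep : ∀ a ∈ s, IsSeparable k' a := by
    intro a ha
    obtain ⟨f, hfm, hfs, hfa, hfc⟩ := hs a ha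
    have hl : f ∈ Polynomial.lifts (algebraMap k' Ω) := by
      rw [Polynomial.lifts_iff_coeff_lifts]
      intro i
      obtain ⟨G, H, hH, hGH⟩ := hfc i
      refine ⟨algebraMap _ k' G / algebraMap _ k' H, ?_⟩
      rw [hGH, map_div₀, ← IsScalarTower.algebraMap_apply, ← IsScalarTower.algebraMap_apply]
      rfl
    obtain ⟨f', hf'⟩ := (Polynomial.mem_lifts _).mp hl
    have hf's : f'.Separable := by rw [← hf', Polynomial.separable_map] at hfs; exact hfs
    refine hf's.of_dvd (minpoly.dvd _ _ ?_)
    rw [← Polynomial.eval_map_algebraMap, hf', hfa]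
  let L' := IntermediateField.adjoin k' (s : Set Ω)
  have hL' : ∀ x : L, algebraMap L Ω x ∈ L' := by
    intro x
    rw [← bs.sum_repr x, map_sum]
    refine sum_mem fun i _ => ?_
    rw [Algebra.smul_def, map_mul]
    refine mul_mem ?_ (IntermediateField.subset_adjoin _ _ ?_)
    · obtain ⟨g, h, hh, he⟩ := IsFractionRing.div_surjective (A := MvPolynomial (Fin n) K) (bs.repr x i)
      rw [← he, map_div₀, map_div₀, ← IsScalarTower.algebraMap_apply, ← IsScalarTower.algebraMap_apply,
        ← IsScalarTower.algebraMap_apply, ← IsScalarTower.algebraMap_apply, ← hψφ, ← hψφ]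
      have h5 : ∀ z, ψ z ∈ L' := by
        intro z
        have : ψ z = algebraMap k' Ω (algebraMap _ k' z) := by
          rw [← IsScalarTower.algebraMap_apply]; rfl
        rw [this]
        exact L'.algebraMap_mem _
      exact div_mem (h5 _) (h5 _)
    · simp [s]
  refine ⟨K', inferInstance, q, φ.toRingHom, hq, hfin, hφinj, hφX, L', inferInstance, inferInstance, ?_, ?_, ?_⟩
  · exact IntermediateField.finiteDimensional_adjoin fun x hx => (hsep x hx).isIntegral
  · exact (IntermediateField.isSeparable_adjoin_iff_isSeparable _ _).mpr hsep
  · refine ⟨(algebraMap L Ω).codRestrict L'.toSubfield.toSubring hL', fun x => ?_⟩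
    apply Subtype.ext
    show algebraMap L Ω (algebraMap _ L x) = algebraMap k' Ω (algebraMap _ k' (φ x))
    rw [← IsScalarTower.algebraMap_apply, ← IsScalarTower.algebraMap_apply]
    exact (hψφ x).symm

-- Part PI
lemma eval_scaleRoots_map {S S' : Type*} [CommRing S] [CommRing S'] (f : S →+* S') (p : Polynomial S)
    (hp : p.Monic) (u z : S) (h : (p.scaleRoots u).eval z = 0) :
    ((p.map f).scaleRoots (f u)).eval (f z) = 0 := by
  rcases subsingleton_or_nontrivial S' with _ | _
  · exact Subsingleton.elim _ _
  rw [← Polynomial.map_scaleRoots p u f (by rw [hp.leadingCoeff, map_one]; exact one_ne_zero),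
    Polynomial.eval_map_apply, h, map_zero]

/-- from `L'` down to a subfield `L`. -/
lemma IsGood.of_field {P O L L' : Type*} [CommRing P] [CommRing O] [Field L] [Field L'] [Algebra P O]
    [Module.Flat P O]
    [Algebra P L] [Algebra P L'] [Algebra L L'] [IsScalarTower P L L'] (h : IsGood P O L') :
    IsGood P O L := by
  let i : L →ₐ[P] L' := IsScalarTower.toAlgHom P L L'
  have hi : Function.Injective i := (algebraMap L L').injective
  let f : L ⊗[P] O →ₐ[P] L' ⊗[P] O := Algebra.TensorProduct.map i (AlgHom.id P O)
  obtain ⟨r, hr⟩ := LinearMap.exists_leftInverse_of_injective (Algebra.linearMap L L')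
    (LinearMap.ker_eq_bot.mpr (algebraMap L L').injective)
  let g : L' ⊗[P] O →ₗ[P] L ⊗[P] O := LinearMap.rTensor O (r.restrictScalars P)
  have hgf : ∀ x, g (f x) = x := by
    intro x
    induction x using TensorProduct.induction_on with
    | zero => simp
    | add x y hx hy => rw [map_add, map_add, hx, hy]
    | tmul a o =>
      show r (algebraMap L L' a) ⊗ₜ[P] o = _
      rw [show r (algebraMap L L' a) = a from congrArg (fun t => t a) hr]
  have hinj : Function.Injective f := Function.LeftInverse.injective hgf
  have hgu : ∀ (u : O) x, g ((1 : L') ⊗ₜ[P] u * x) = (1 : L) ⊗ₜ[P] u * g x := by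
    intro u x
    induction x using TensorProduct.induction_on with
    | zero => simp
    | add x y hx hy => rw [map_add, mul_add, map_add, hx, hy, mul_add]
    | tmul a o =>
      rw [Algebra.TensorProduct.tmul_mul_tmul, one_mul]
      show r a ⊗ₜ[P] (u * o) = (1 : L) ⊗ₜ[P] u * (r a ⊗ₜ[P] o)
      rw [Algebra.TensorProduct.tmul_mul_tmul, one_mul]
  refine ⟨?_, ?_⟩
  · haveI := h.reduced
    exact isReduced_of_injective f hinj
  · intro u hu z p hp hz
    have h1 := eval_scaleRoots_map f.toRingHom p hp _ _ hz
    have h2 : f.toRingHom ((1 : L) ⊗ₜ[P] u) = (1 : L') ⊗ₜ[P] u := by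
      show f ((1 : L) ⊗ₜ[P] u) = _
      simp [f]
    rw [h2] at h1
    obtain ⟨s, hs⟩ := h.div u hu (f z) (p.map f.toRingHom) (hp.map _) h1
    refine ⟨g s, ?_⟩
    rw [← hgu, ← hs, hgf]

/-- change of base from `P` to `P'`. -/
lemma IsGood.of_base {P O P' O' L : Type*} [CommRing P] [CommRing O] [CommRing P'] [CommRing O'] [CommRing L]
    [Algebra P O] [Algebra P P'] [Algebra P' O'] [Algebra P O'] [Algebra O O'] [IsScalarTower P P' O']
    [IsScalarTower P O O'] [Algebra P' L] [Algebra P L] [IsScalarTower P P' L]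
    (hb : Function.Bijective (locMap P O P' O'))
    (hinj : Function.Injective (algebraMap O O')) (h : IsGood P' O' L) : IsGood P O L := by
  let e0 : P' ⊗[P] O ≃ₐ[P'] O' := AlgEquiv.ofBijective
    (Algebra.TensorProduct.lift (Algebra.ofId P' O') (IsScalarTower.toAlgHom P O O') (fun _ _ => Commute.all _ _)) (by
      convert hb using 1
      funext x
      induction x using TensorProduct.induction_on with
      | zero => simp
      | tmul a b => simp [locMap_tmul, Algebra.ofId_apply]
      | add x y hx hy => rw [map_add, hx, hy, map_add])
  let e : L ⊗[P] O ≃ₐ[L] L ⊗[P'] O' := (Algebra.TensorProduct.cancelBaseChange P P' L L O).symm.trans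
    (Algebra.TensorProduct.congr AlgEquiv.refl e0)
  refine ⟨?_, ?_⟩
  · haveI := h.reduced
    exact isReduced_of_injective e e.injective
  · intro u hu
    have h1 := h.div (algebraMap O O' u) (by rwa [map_ne_zero_iff _ hinj])
    have := DivProp.map e.symm.toRingEquiv h1
    convert this using 1
    rw [eq_comm]
    show e.symm _ = _
    rw [AlgEquiv.symm_apply_eq]
    simp [e, e0]

lemma idealOfVars_eq_ker (n : ℕ) (K : Type*) [CommRing K] : MvPolynomial.idealOfVars (Fin n) K =
    RingHom.ker (MvPolynomial.constantCoeff : MvPolynomial (Fin n) K →+* K) := by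
  ext p
  have := MvPolynomial.mem_pow_idealOfVars_iff' (σ := Fin n) (R := K) 1 p
  rw [pow_one] at this
  rw [this, RingHom.mem_ker, MvPolynomial.constantCoeff_eq]
  constructor
  · intro h; exact h 0 (by simp)
  · intro h x hx
    have : x = 0 := by
      have h0 : Finsupp.degree x = 0 := by simpa using hx
      exact (Finsupp.degree_eq_zero_iff x).mp h0
    rw [this, h]

lemma idealOfVars_isMaximal (n : ℕ) (K : Type*) [Field K] : (MvPolynomial.idealOfVars (Fin n) K).IsMaximal := by
  rw [idealOfVars_eq_ker]
  exact RingHom.ker_isMaximal_of_surjective _ (fun a => ⟨MvPolynomial.C a, by simp⟩)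

lemma mvPowerSeries_flat (n : ℕ) (K : Type*) [Field K] :
    Module.Flat (MvPolynomial (Fin n) K) (MvPowerSeries (Fin n) K) :=
  Module.Flat.of_linearEquiv (MvPowerSeries.toAdicCompletionAlgEquiv (Fin n) K).toLinearEquiv

-- Part PJ
lemma isGood_of_data {P O P' O' k' L' L : Type*} [CommRing P] [CommRing O] [CommRing P'] [CommRing O']
    [IsDomain P'] [IsDomain O'] [IsIntegrallyClosed O'] [Field k'] [Field L'] [Field L]
    [IsNoetherianRing P] [IsNoetherianRing O] [Nontrivial O]
    [Algebra P O] [Algebra P' O'] [Algebra P P'] [Algebra P O'] [IsScalarTower P P' O']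
    [Module.Flat P O] [Module.Finite P P']
    [Algebra P' k'] [IsFractionRing P' k'] [Algebra k' L'] [Algebra P' L'] [IsScalarTower P' k' L']
    [FiniteDimensional k' L'] [Algebra.IsSeparable k' L'] [Algebra P L'] [IsScalarTower P P' L']
    [Algebra P L] (j : L →+* L') (hj : ∀ x, j (algebraMap P L x) = algebraMap P L' x)
    (m : Ideal P) [m.IsMaximal] (m' : Ideal P') [m'.IsMaximal] (hO : AdicCompl P m O)
    (hO' : AdicCompl P' m' O') (hmm : m.map (algebraMap P P') ≤ m')
    (N : ℕ) (hN : m' ^ N ≤ m.map (algebraMap P P'))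
    (hinj : Function.Injective (algebraMap P P')) (hinj' : Function.Injective (algebraMap P' O')) :
    IsGood P O L := by
  obtain ⟨f⟩ := AdicCompl.exists_lift hO hO' (by
    rw [IsScalarTower.algebraMap_eq P P' O', ← Ideal.map_map]
    exact Ideal.map_mono hmm)
  letI : Algebra O O' := f.toRingHom.toAlgebra
  haveI : IsScalarTower P O O' := IsScalarTower.of_algebraMap_eq (fun x => (f.commutes x).symm)
  have hb := locMap_bijective_of_local m m' hO hO' hmm N hN
  have hinjO : Function.Injective (algebraMap O O') := by
    have h1 : Function.Injective (LinearMap.rTensor O (Algebra.linearMap P P')) :=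
      Module.Flat.rTensor_preserves_injective_linearMap _ hinj
    intro x y hxy
    have h2 : ((1 : P') ⊗ₜ[P] x) = (1 : P') ⊗ₜ[P] y := by
      apply hb.1
      simp [locMap_tmul, hxy]
    have h3 : ((1 : P) ⊗ₜ[P] x) = (1 : P) ⊗ₜ[P] y := by
      apply h1
      simpa using h2
    simpa using congrArg (TensorProduct.lid P O) h3
  letI : Algebra L L' := j.toAlgebra
  haveI : IsScalarTower P L L' := IsScalarTower.of_algebraMap_eq (fun x => (hj x).symm)
  exact ((isGood_of_separable P' O' k' L' hinj').of_base hb hinjO).of_field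

theorem isGood_mvPowerSeries (n : ℕ) (K k L : Type*) [Field K] [Field k] [Field L]
    [Algebra (MvPolynomial (Fin n) K) k] [IsFractionRing (MvPolynomial (Fin n) K) k]
    [Algebra (MvPolynomial (Fin n) K) L]
    [Algebra k L] [IsScalarTower (MvPolynomial (Fin n) K) k L] [FiniteDimensional k L] :
    IsGood (MvPolynomial (Fin n) K) (MvPowerSeries (Fin n) K) L := by
  obtain ⟨K', _, q, φ, hq, hφ, hφi, hφX, L', _, _, _, _, j, hj⟩ := exists_sep_data n K k L
  haveI : IsDomain (MvPowerSeries (Fin n) K') := NoZeroDivisors.to_isDomain _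
  haveI := mvPowerSeries_flat n K
  haveI := idealOfVars_isMaximal n K
  haveI := idealOfVars_isMaximal n K'
  letI i1 : Algebra (MvPolynomial (Fin n) K) (MvPolynomial (Fin n) K') := φ.toAlgebra
  letI i2 : Algebra (MvPolynomial (Fin n) K) (MvPowerSeries (Fin n) K') :=
    ((algebraMap (MvPolynomial (Fin n) K') (MvPowerSeries (Fin n) K')).comp φ).toAlgebra
  letI i3 : Algebra (MvPolynomial (Fin n) K') L' :=
    ((algebraMap (FractionRing (MvPolynomial (Fin n) K')) L').comp (algebraMap _ _)).toAlgebra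
  letI i4 : Algebra (MvPolynomial (Fin n) K) L' := ((algebraMap (MvPolynomial (Fin n) K') L').comp φ).toAlgebra
  haveI t1 : @IsScalarTower (MvPolynomial (Fin n) K) (MvPolynomial (Fin n) K') (MvPowerSeries (Fin n) K')
    i1.toSMul _ i2.toSMul :=
    @IsScalarTower.of_algebraMap_eq _ _ _ _ _ _ i1 _ i2 (fun x => rfl)
  haveI t2 : IsScalarTower (MvPolynomial (Fin n) K') (FractionRing (MvPolynomial (Fin n) K')) L' :=
    .of_algebraMap_eq (fun x => rfl)
  haveI t3 : @IsScalarTower (MvPolynomial (Fin n) K) (MvPolynomial (Fin n) K') L' i1.toSMul _ _ :=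
    @IsScalarTower.of_algebraMap_eq _ _ _ _ _ _ i1 _ i4 (fun x => rfl)
  haveI : @Module.Finite (MvPolynomial (Fin n) K) (MvPolynomial (Fin n) K') _ _ i1.toModule := hφ
  have hX : ∀ i, MvPolynomial.X i ^ q ∈ (MvPolynomial.idealOfVars (Fin n) K).map φ := by
    intro i
    rw [← hφX]
    exact Ideal.mem_map_of_mem _ (Ideal.subset_span ⟨i, rfl⟩)
  have hmm : (MvPolynomial.idealOfVars (Fin n) K).map φ ≤ MvPolynomial.idealOfVars (Fin n) K' := by
    rw [MvPolynomial.idealOfVars, Ideal.map_span, Ideal.span_le]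
    rintro _ ⟨_, ⟨i, rfl⟩, rfl⟩
    rw [hφX]
    have hXi : (MvPolynomial.X i : MvPolynomial (Fin n) K') ∈ MvPolynomial.idealOfVars (Fin n) K' :=
      Ideal.subset_span ⟨i, rfl⟩
    exact Ideal.pow_mem_of_mem _ hXi _ hq
  obtain ⟨N, hN⟩ := Ideal.exists_pow_le_of_le_radical_of_fg
    (I := MvPolynomial.idealOfVars (Fin n) K') (J := (MvPolynomial.idealOfVars (Fin n) K).map φ) (by
      rw [MvPolynomial.idealOfVars, Ideal.span_le]
      rintro _ ⟨i, rfl⟩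
      exact ⟨q, hX i⟩) (MvPolynomial.idealOfVars_fg _ _)
  have hinj' : Function.Injective (algebraMap (MvPolynomial (Fin n) K') (MvPowerSeries (Fin n) K')) :=
    MvPolynomial.coe_injective (Fin n) K'
  exact @isGood_of_data (MvPolynomial (Fin n) K) (MvPowerSeries (Fin n) K) (MvPolynomial (Fin n) K')
    (MvPowerSeries (Fin n) K') (FractionRing (MvPolynomial (Fin n) K')) L' L _ _ _ _ _ _ _ _ _ _ _ _ _
    _ _ i1 i2 t1 _ _ _ _ _ i3 _ _ _ i4 t3 _ j hj _ _ _ _ (AdicCompl.mvPowerSeries n K)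
    (AdicCompl.mvPowerSeries n K') hmm N hN hφi hinj'

-- Part PK
lemma finite_intCl_of_data {P P' k' L' L : Type*} [CommRing P] [CommRing P'] 
    [IsDomain P'] [IsIntegrallyClosed P'] [Field k'] [Field L'] [Field L]
    [IsNoetherianRing P] [Algebra P P'] [Module.Finite P P']
    [Algebra P' k'] [IsFractionRing P' k'] [Algebra k' L'] [Algebra P' L'] [IsScalarTower P' k' L']
    [FiniteDimensional k' L'] [Algebra.IsSeparable k' L'] [Algebra P L'] [IsScalarTower P P' L']
    [Algebra P L] (j : L →+* L') (hj : ∀ x, j (algebraMap P L x) = algebraMap P L' x) :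
    Module.Finite P (integralClosure P L) := by
  haveI : IsNoetherianRing P' := IsNoetherianRing.of_finite P P'
  haveI : IsNoetherian P' (integralClosure P' L') := IsIntegralClosure.isNoetherian P' k' L' _
  haveI : Module.Finite P (integralClosure P' L') := Module.Finite.trans P' _
  let jj : L →ₐ[P] L' := { j with commutes' := hj }
  let f : integralClosure P L →ₗ[P] integralClosure P' L' :=
    { toFun := fun x => ⟨jj x, (x.2.map jj).tower_top⟩
      map_add' := fun x y => Subtype.ext (by simp)
      map_smul' := fun c x => Subtype.ext (by simp) }
  have hf : Function.Injective f := fun x y h => Subtype.ext (j.injective (congrArg Subtype.val h))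
  exact Module.Finite.of_injective f hf

theorem finite_intCl_mvPoly (n : ℕ) (K k L : Type*) [Field K] [Field k] [Field L]
    [Algebra (MvPolynomial (Fin n) K) k] [IsFractionRing (MvPolynomial (Fin n) K) k]
    [Algebra (MvPolynomial (Fin n) K) L]
    [Algebra k L] [IsScalarTower (MvPolynomial (Fin n) K) k L] [FiniteDimensional k L] :
    Module.Finite (MvPolynomial (Fin n) K) (integralClosure (MvPolynomial (Fin n) K) L) := by
  obtain ⟨K', _, q, φ, hq, hφ, hφi, hφX, L', _, _, _, _, j, hj⟩ := exists_sep_data n K k L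
  letI i1 : Algebra (MvPolynomial (Fin n) K) (MvPolynomial (Fin n) K') := φ.toAlgebra
  letI i3 : Algebra (MvPolynomial (Fin n) K') L' :=
    ((algebraMap (FractionRing (MvPolynomial (Fin n) K')) L').comp (algebraMap _ _)).toAlgebra
  letI i4 : Algebra (MvPolynomial (Fin n) K) L' := ((algebraMap (MvPolynomial (Fin n) K') L').comp φ).toAlgebra
  haveI t2 : IsScalarTower (MvPolynomial (Fin n) K') (FractionRing (MvPolynomial (Fin n) K')) L' :=
    .of_algebraMap_eq (fun x => rfl)
  haveI t3 : @IsScalarTower (MvPolynomial (Fin n) K) (MvPolynomial (Fin n) K') L' i1.toSMul _ _ :=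
    @IsScalarTower.of_algebraMap_eq _ _ _ _ _ _ i1 _ i4 (fun x => rfl)
  haveI : @Module.Finite (MvPolynomial (Fin n) K) (MvPolynomial (Fin n) K') _ _ i1.toModule := hφ
  exact @finite_intCl_of_data (MvPolynomial (Fin n) K) (MvPolynomial (Fin n) K')
    (FractionRing (MvPolynomial (Fin n) K')) L' L _ _ _ _ _ _ _ _
    i1 _ _ _ _ i3 _ _ _ i4 t3 _ j hj

-- Part PL
lemma exists_noether (K B : Type*) [Field K] [CommRing B] [Algebra K B] [Algebra.FiniteType K B]
    (M : Ideal B) [hM : M.IsMaximal] :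
    ∃ (n : ℕ) (g : MvPolynomial (Fin n) K →+* B), Function.Injective g ∧ g.Finite ∧
      (MvPolynomial.idealOfVars (Fin n) K).map g ≤ M := by
  haveI : Nontrivial B := ⟨⟨0, 1, fun h => hM.ne_top (by
    rw [Ideal.eq_top_iff_one, ← h]; exact M.zero_mem)⟩⟩
  obtain ⟨n, g, hg, hgf⟩ := exists_finite_inj_algHom_of_fg K B
  letI : Field (B ⧸ M) := Ideal.Quotient.field M
  haveI : Module.Finite K (B ⧸ M) := finite_of_finite_type_of_isJacobsonRing K (B ⧸ M)
  let f : Fin n → Polynomial K := fun i => minpoly K (Ideal.Quotient.mk M (g (MvPolynomial.X i)))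
  have hint : ∀ i, IsIntegral K (Ideal.Quotient.mk M (g (MvPolynomial.X i))) :=
    fun i => Algebra.IsIntegral.isIntegral _
  have hf : ∀ i, (f i).Monic := fun i => minpoly.monic (hint i)
  have hd : ∀ i, 0 < (f i).natDegree := fun i => minpoly.natDegree_pos (hint i)
  have hfM : ∀ i, Polynomial.aeval (g (MvPolynomial.X i)) (f i) ∈ M := by
    intro i
    rw [← Ideal.Quotient.eq_zero_iff_mem]
    have := minpoly.aeval K (Ideal.Quotient.mk M (g (MvPolynomial.X i)))
    rw [← Ideal.Quotient.mkₐ_eq_mk K, Polynomial.aeval_algHom_apply] at this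
    exact this
  let ψ : MvPolynomial (Fin n) K →ₐ[K] MvPolynomial (Fin n) K :=
    MvPolynomial.aeval (fun i => Polynomial.aeval (MvPolynomial.X i) (f i))
  have hψX : ∀ i, ψ (MvPolynomial.X i) = Polynomial.aeval (MvPolynomial.X i) (f i) := fun i => by
    simp [ψ]
  have hψ : Function.Injective ψ :=
    (MvPolynomial.algebraicIndependent_X (Fin n) K).polynomial_aeval_of_transcendental
      (fun i => Polynomial.transcendental (f i) (hd i).ne' (by rw [hf i]; exact one_mem _))
  have hψint : ψ.toRingHom.IsIntegral := by
    intro x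
    induction x using MvPolynomial.induction_on with
    | C a =>
      have := ψ.toRingHom.isIntegralElem_map (x := MvPolynomial.C a)
      have h2 : ψ.toRingHom (MvPolynomial.C a) = MvPolynomial.C a := ψ.commutes a
      rwa [h2] at this
    | add x y hx hy => exact RingHom.IsIntegralElem.add _ hx hy
    | mul_X x i hx =>
      refine RingHom.IsIntegralElem.mul _ hx ?_
      have hm : ((f i).map (algebraMap K (MvPolynomial (Fin n) K))).Monic := (hf i).map _
      refine ⟨(f i).map (algebraMap K (MvPolynomial (Fin n) K)) - Polynomial.C (MvPolynomial.X i),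
        hm.sub_of_left ?_, ?_⟩
      · refine lt_of_le_of_lt Polynomial.degree_C_le ?_
        rw [Polynomial.degree_eq_natDegree hm.ne_zero, (hf i).natDegree_map]
        exact_mod_cast hd i
      · rw [Polynomial.eval₂_sub, Polynomial.eval₂_C, Polynomial.eval₂_map]
        have h3 : ψ.toRingHom.comp (algebraMap K (MvPolynomial (Fin n) K)) = algebraMap K _ :=
          ψ.comp_algebraMap
        rw [h3]
        change _ - ψ (MvPolynomial.X i) = 0
        rw [hψX, Polynomial.aeval_def, sub_self]
  have hft : ψ.toRingHom.FiniteType := by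
    refine RingHom.FiniteType.of_comp_finiteType (f := algebraMap K (MvPolynomial (Fin n) K)) ?_
    have : ψ.toRingHom.comp (algebraMap K (MvPolynomial (Fin n) K)) = algebraMap K _ :=
      ψ.comp_algebraMap
    rw [this]
    exact RingHom.finiteType_algebraMap.mpr inferInstance
  refine ⟨n, g.toRingHom.comp ψ.toRingHom, hg.comp hψ, RingHom.Finite.comp hgf (hψint.to_finite hft), ?_⟩
  rw [MvPolynomial.idealOfVars, Ideal.map_span, Ideal.span_le]
  rintro _ ⟨_, ⟨i, rfl⟩, rfl⟩
  change g (ψ (MvPolynomial.X i)) ∈ M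
  rw [hψX, ← Polynomial.aeval_algHom_apply]
  exact hfM i

-- Part PM
/-- `B`-linear version of `locMap`. -/
def locMapB (P O B T : Type*) [CommRing P] [CommRing O] [CommRing B] [CommRing T]
    [Algebra P O] [Algebra P B] [Algebra B T] [Algebra P T] [Algebra O T] [IsScalarTower P B T]
    [IsScalarTower P O T] : B ⊗[P] O →ₐ[B] T :=
  Algebra.TensorProduct.lift (Algebra.ofId B T) (IsScalarTower.toAlgHom P O T) (fun _ _ => Commute.all _ _)

lemma locMapB_apply {P O B T : Type*} [CommRing P] [CommRing O] [CommRing B] [CommRing T]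
    [Algebra P O] [Algebra P B] [Algebra B T] [Algebra P T] [Algebra O T] [IsScalarTower P B T]
    [IsScalarTower P O T] (x : B ⊗[P] O) : locMapB P O B T x = locMap P O B T x := by
  induction x using TensorProduct.induction_on with
  | zero => simp
  | tmul a b => simp [locMap_tmul, locMapB, Algebra.ofId_apply]
  | add x y hx hy => rw [map_add, hx, hy, map_add]

lemma isReduced_tensor_of_loc {B C S T : Type*} [CommRing B] [CommRing C] [CommRing S] [CommRing T]
    [Algebra B C] [Algebra B S] [Algebra B T] (φ : S →ₐ[B] T) (hφ : Function.Surjective φ)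
    (hk : ∀ s, φ s = 0 → ∃ t, IsUnit (φ t) ∧ t * s = 0) (hr : IsReduced (C ⊗[B] S)) :
    IsReduced (C ⊗[B] T) := by
  let f : C ⊗[B] S →ₐ[B] C ⊗[B] T := Algebra.TensorProduct.map (AlgHom.id B C) φ
  have hf : Function.Surjective f :=
    TensorProduct.map_surjective (g := (AlgHom.id B C).toLinearMap) (g' := φ.toLinearMap)
      Function.surjective_id hφ
  have hker : ∀ x, f x = 0 → ∃ t, IsUnit (φ t) ∧ ((1 : C) ⊗ₜ[B] t) * x = 0 := by
    intro x hx
    have h1 : x ∈ RingHom.ker f := hx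
    have h2 : RingHom.ker f = (RingHom.ker φ).map (Algebra.TensorProduct.includeRight : S →ₐ[B] C ⊗[B] S) :=
      Algebra.TensorProduct.lTensor_ker (A := C) φ hφ
    rw [h2] at h1
    refine Submodule.span_induction ?_ ?_ ?_ ?_ h1
    · rintro _ ⟨s, hs, rfl⟩
      obtain ⟨t, ht, hts⟩ := hk s hs
      refine ⟨t, ht, ?_⟩
      simp [hts]
    · exact ⟨1, by simp, by simp⟩
    · rintro x y - - ⟨t, ht, hx⟩ ⟨t', ht', hy⟩
      refine ⟨t * t', by rw [map_mul]; exact ht.mul ht', ?_⟩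
      have : (1 : C) ⊗ₜ[B] (t * t') = ((1 : C) ⊗ₜ[B] t) * ((1 : C) ⊗ₜ[B] t') := by simp
      rw [this]
      linear_combination ((1 : C) ⊗ₜ[B] t') * hx + ((1 : C) ⊗ₜ[B] t) * hy
    · rintro a x - ⟨t, ht, hx⟩
      exact ⟨t, ht, by rw [smul_eq_mul, mul_left_comm, hx, mul_zero]⟩
  refine ⟨fun z hz => ?_⟩
  obtain ⟨n, hn⟩ := hz
  obtain ⟨x, rfl⟩ := hf z
  rw [← map_pow] at hn
  obtain ⟨t, ht, h⟩ := hker _ hn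
  have h3 : ((1 : C) ⊗ₜ[B] t) * x = 0 := by
    refine hr.1 _ ⟨n + 1, ?_⟩
    rw [mul_pow, pow_succ, pow_succ]
    linear_combination ((1 : C) ⊗ₜ[B] t) ^ n * x * h
  have h4 := congrArg f h3
  rw [map_mul, map_zero] at h4
  have h5 : IsUnit (f ((1 : C) ⊗ₜ[B] t)) := by
    have : f ((1 : C) ⊗ₜ[B] t) = (Algebra.TensorProduct.includeRight : T →ₐ[B] C ⊗[B] T) (φ t) := by
      simp [f]
    rw [this]
    exact ht.map _
  exact (h5.mul_right_eq_zero).mp h4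

/-- Reducedness in the domain case. -/
lemma isReduced_tensor_domain {P O B T C L : Type*} [CommRing P] [CommRing O] [CommRing B] [CommRing T]
    [CommRing C] [Field L]
    [Algebra P O] [Algebra P B] [Algebra B T] [Algebra P T] [Algebra O T] [IsScalarTower P B T]
    [IsScalarTower P O T] [IsNoetherianRing P] [IsNoetherianRing O] [Module.Finite P B] [Module.Flat P O]
    (m : Ideal P) [m.IsMaximal] (M : Ideal B) [M.IsMaximal] (hO : AdicCompl P m O) (hT : AdicCompl B M T)
    (hmM : m.map (algebraMap P B) ≤ M)
    [Algebra B C] [Algebra P C] [IsScalarTower P B C] [Algebra C L] [Algebra P L] [IsScalarTower P C L]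
    (hCL : Function.Injective (algebraMap C L)) (hG : IsGood P O L) : IsReduced (C ⊗[B] T) := by
  refine isReduced_tensor_of_loc (locMapB P O B T) ?_ ?_ ?_
  · intro x
    obtain ⟨y, hy⟩ := locMap_surjective m M hO hT hmM x
    exact ⟨y, by rw [locMapB_apply, hy]⟩
  · intro s hs
    simp only [locMapB_apply] at hs ⊢
    exact locMap_eq_zero m M hO hT hmM s hs
  · haveI := hG.reduced
    let f : C ⊗[P] O →ₐ[P] L ⊗[P] O :=
      Algebra.TensorProduct.map (IsScalarTower.toAlgHom P C L) (AlgHom.id P O)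
    have hf : Function.Injective f :=
      Module.Flat.rTensor_preserves_injective_linearMap (M := O) (IsScalarTower.toAlgHom P C L).toLinearMap hCL
    haveI : IsReduced (C ⊗[P] O) := isReduced_of_injective f hf
    let e := Algebra.TensorProduct.cancelBaseChange P B C C O
    exact isReduced_of_injective e e.injective

-- Part PN
lemma scaleRoots_eval_smul {S : Type*} [CommRing S] (q : Polynomial S) (c u a : S) :
    (q.scaleRoots (c * u)).eval (c * a) = c ^ q.natDegree * (q.scaleRoots u).eval a := by
  rw [mul_comm c u, Polynomial.scaleRoots_mul, mul_comm c a, mul_comm a c, Polynomial.scaleRoots_eval_mul,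
    Polynomial.natDegree_scaleRoots]

lemma mul_scaleRoots_eval_congr {S : Type*} [CommRing S] (q : Polynomial S) (η θ z : S)
    (h : η * z = θ * z) : z * (q.scaleRoots η).eval z = z * (q.scaleRoots θ).eval z := by
  have hk : ∀ k, z * η ^ k = z * θ ^ k := by
    intro k
    induction k with
    | zero => simp
    | succ k ih => rw [pow_succ, pow_succ]; linear_combination η * ih + θ ^ k * h
  rw [Polynomial.eval_eq_sum_range, Polynomial.eval_eq_sum_range, Polynomial.natDegree_scaleRoots,
    Polynomial.natDegree_scaleRoots, Finset.mul_sum, Finset.mul_sum]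
  refine Finset.sum_congr rfl fun i _ => ?_
  rw [Polynomial.coeff_scaleRoots, Polynomial.coeff_scaleRoots]
  linear_combination q.coeff i * z ^ i * hk (q.natDegree - i)

lemma exists_mul_sq_eq {O S : Type*} [CommRing O] [IsDomain O] [CommRing S] [Algebra O S] [IsReduced S]
    (u : S) (hu : IsIntegral O u) : ∃ (v : S) (δ : O), δ ≠ 0 ∧ u ^ 2 * v = algebraMap O S δ * u := by
  obtain ⟨p, hp, hpu⟩ := hu
  change Polynomial.aeval u p = 0 at hpu
  obtain ⟨p', hp'⟩ := Polynomial.X_pow_dvd_iff (f := p) (n := p.natTrailingDegree) |>.mpr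
    (fun d hd => Polynomial.coeff_eq_zero_of_lt_natTrailingDegree hd)
  have hc : p'.coeff 0 ≠ 0 := by
    have h1 : p.coeff p.natTrailingDegree = p'.coeff 0 := by
      have := Polynomial.coeff_X_pow_mul p' p.natTrailingDegree 0
      rwa [zero_add, ← hp'] at this
    rw [← h1]
    exact Polynomial.trailingCoeff_nonzero_iff_nonzero.mpr hp.ne_zero
  have h2 : u ^ p.natTrailingDegree * Polynomial.aeval u p' = 0 := by
    rw [hp'] at hpu
    simpa using hpu
  have h3 : u * Polynomial.aeval u p' = 0 := by
    refine IsReduced.eq_zero _ ⟨p.natTrailingDegree + 1, ?_⟩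
    rw [mul_pow, pow_succ, pow_succ]
    linear_combination u * Polynomial.aeval u p' ^ p.natTrailingDegree * h2
  refine ⟨-Polynomial.aeval u p'.divX, p'.coeff 0, hc, ?_⟩
  have h4 : Polynomial.aeval u p' = u * Polynomial.aeval u p'.divX + algebraMap O S (p'.coeff 0) := by
    have := congrArg (Polynomial.aeval u) (Polynomial.divX_mul_X_add p')
    rw [← this, map_add, map_mul, Polynomial.aeval_X, Polynomial.aeval_C, mul_comm]
  rw [h4] at h3
  linear_combination -h3

/-- integral elements become divisible after multiplying with some `d`, pure algebra version. -/
lemma g2_aux {P O S T W : Type*} [CommRing P] [CommRing O] [IsDomain O] [CommRing S] [CommRing T] [CommRing W]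
    [Algebra P S] [Algebra P W] [Algebra O S] [Algebra.IsIntegral O S] [Algebra O W]
    (φ : S →+* T) (hφ : Function.Surjective φ)
    (hk : ∀ s, φ s = 0 → ∃ t, IsUnit (φ t) ∧ t * s = 0) (ι : S →+* W) (hι : Function.Injective ι)
    (hιP : ∀ x, ι (algebraMap P S x) = algebraMap P W x)
    (hιO : ∀ x, ι (algebraMap O S x) = algebraMap O W x) [IsReduced W]
    (hdiv : ∀ u : O, u ≠ 0 → DivProp (algebraMap O W u))
    (htf : ∀ u : O, u ≠ 0 → ∀ w, algebraMap O W u * w = 0 → w = 0)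
    (hd : ∀ w : W, ∃ d : P, d ≠ 0 ∧ ∃ s, ι s = algebraMap P W d * w)
    (hP : (1 : P) ≠ 0)
    (a u : T) (hu : u ∈ T⁰) (q : Polynomial T) (hq : q.Monic) (h : (q.scaleRoots u).eval a = 0) :
    ∃ d : P, d ≠ 0 ∧ ∃ t, φ (algebraMap P S d) * a = u * t := by
  rcases subsingleton_or_nontrivial T with _ | _
  · exact ⟨1, hP, 0, Subsingleton.elim _ _⟩
  haveI : IsReduced S := isReduced_of_injective ι hι
  obtain ⟨u0, rfl⟩ := hφ u
  obtain ⟨a0, rfl⟩ := hφ a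
  obtain ⟨q0, hq0, hq0d, hq0m⟩ := Polynomial.lifts_and_natDegree_eq_and_monic
    (f := φ) (p := q) (by
      rw [Polynomial.mem_lifts]
      exact Polynomial.map_surjective φ hφ q) hq
  have hqd : q0.natDegree ≠ 0 := by
    intro h0
    rw [h0] at hq0d
    have : q = 1 := hq.natDegree_eq_zero.mp hq0d.symm
    rw [this] at h
    simp at h
  have h1 : φ ((q0.scaleRoots u0).eval a0) = 0 := by
    rw [← Polynomial.eval_map_apply, Polynomial.map_scaleRoots q0 u0 φ
      (by rw [hq0m.leadingCoeff, map_one]; exact one_ne_zero), hq0]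
    exact h
  obtain ⟨t, ht, hts⟩ := hk _ h1
  set a1 := t * a0 with ha1
  set u1 := t * u0 with hu1
  have h2 : (q0.scaleRoots u1).eval a1 = 0 := by
    rw [ha1, hu1, scaleRoots_eval_smul]
    obtain ⟨k, hk'⟩ := Nat.exists_eq_succ_of_ne_zero hqd
    rw [hk', pow_succ, mul_assoc, hts, mul_zero]
  obtain ⟨v, δ, hδ, hv⟩ := exists_mul_sq_eq (O := O) u1 (Algebra.IsIntegral.isIntegral u1)
  set δ' := algebraMap O S δ with hδ'
  set z0 := (u1 * v ^ 2) * a1 with hz0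
  set η := (u1 * v ^ 2) * u1 with hη
  have h3 : (q0.scaleRoots η).eval z0 = 0 := by
    rw [hz0, hη, scaleRoots_eval_smul, h2, mul_zero]
  have h30 : u1 ^ 3 * v ^ 2 = δ' ^ 2 * u1 := by
    linear_combination (u1 * v + δ') * hv
  have h4 : η * z0 = δ' ^ 2 * z0 := by
    rw [hη, hz0]
    linear_combination v ^ 2 * a1 * h30
  have h5 : ((q0 * Polynomial.X).scaleRoots (δ' ^ 2)).eval z0 = 0 := by
    have h6 : (q0 * Polynomial.X).scaleRoots (δ' ^ 2) =
        q0.scaleRoots (δ' ^ 2) * (Polynomial.X : Polynomial S).scaleRoots (δ' ^ 2) := by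
      rcases subsingleton_or_nontrivial S with _ | _
      · exact Subsingleton.elim _ _
      exact Polynomial.mul_scaleRoots' _ _ _ (by rw [hq0m.leadingCoeff, Polynomial.leadingCoeff_X]; simp)
    have h7 : (Polynomial.X : Polynomial S).scaleRoots (δ' ^ 2) = Polynomial.X := by
      simpa using Polynomial.X_add_C_scaleRoots (0 : S) (δ' ^ 2)
    rw [h6, h7, Polynomial.eval_mul, Polynomial.eval_X, mul_comm, ← mul_scaleRoots_eval_congr _ _ _ _ h4,
      h3, mul_zero]
  have h8 := eval_scaleRoots_map ι _ (hq0m.mul Polynomial.monic_X) _ _ h5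
  have h9 : ι (δ' ^ 2) = algebraMap O W (δ ^ 2) := by rw [hδ', map_pow, hιO, map_pow]
  rw [h9] at h8
  obtain ⟨s, hs⟩ := hdiv (δ ^ 2) (pow_ne_zero _ hδ) _ _ ((hq0m.mul Polynomial.monic_X).map _) h8
  obtain ⟨d, hd0, s', hs'⟩ := hd s
  have h10 : algebraMap P S d * z0 = δ' ^ 2 * s' := by
    apply hι
    rw [map_mul ι (algebraMap P S d), map_mul ι (δ' ^ 2), hs', hιP, h9, hs]
    ring
  have h11 : u1 * a1 * algebraMap P S d = u1 ^ 2 * s' := by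
    rw [← sub_eq_zero]
    apply hι
    rw [map_zero]
    refine htf (δ ^ 2) (pow_ne_zero _ hδ) _ ?_
    rw [← h9, ← map_mul, ← map_zero ι]
    congr 1
    rw [hz0] at h10
    linear_combination (-a1 * algebraMap P S d) * h30 + u1 ^ 2 * h10
  refine ⟨d, hd0, φ s', ?_⟩
  have h12 := congrArg φ h11
  simp only [map_mul, map_pow, hu1, ha1] at h12
  obtain ⟨t', ht'⟩ := ht.exists_right_inv
  have h13 : (φ u0) * (φ (algebraMap P S d) * φ a0 - φ u0 * φ s') = 0 := by
    linear_combination t' ^ 2 * h12 + (φ u0 * φ a0 * φ (algebraMap P S d) - φ u0 ^ 2 * φ s') * (-(1 + φ t * t')) * ht'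
  have h14 := (mul_left_mem_nonZeroDivisors_eq_zero_iff hu).mp h13
  exact sub_eq_zero.mp h14

-- Part PO
lemma exists_den_tensor {P O B L : Type*} [CommRing P] [CommRing O] [CommRing B] [Field L] [IsDomain P]
    [IsDomain B] [Algebra P O] [Algebra P B] [Algebra P L] [Algebra B L] [IsFractionRing B L]
    [IsScalarTower P B L] [Algebra.IsIntegral P B] (w : L ⊗[P] O) :
    ∃ d : P, d ≠ 0 ∧ ∃ s : B ⊗[P] O, Algebra.TensorProduct.map (IsScalarTower.toAlgHom P B L) (AlgHom.id P O) s
      = algebraMap P (L ⊗[P] O) d * w := by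
  induction w using TensorProduct.induction_on with
  | zero => exact ⟨1, one_ne_zero, 0, by simp⟩
  | add x y hx hy =>
    obtain ⟨d, hd, s, hs⟩ := hx
    obtain ⟨d', hd', s', hs'⟩ := hy
    refine ⟨d * d', mul_ne_zero hd hd', d' • s + d • s', ?_⟩
    rw [map_add, map_smul, map_smul, hs, hs', map_mul, Algebra.smul_def, Algebra.smul_def]
    ring
  | tmul l o =>
    obtain ⟨b, c, hc, rfl⟩ := IsFractionRing.div_surjective (A := B) l
    obtain ⟨d, hd, c', hc'⟩ := IsAlgebraic.exists_nonzero_dvd (R := P) (S := B) (s := c)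
      (by
        haveI : Algebra.IsAlgebraic P B := inferInstance
        exact Algebra.IsAlgebraic.isAlgebraic c) hc
    refine ⟨d, hd, (b * c') ⊗ₜ o, ?_⟩
    have hc0 : algebraMap B L c ≠ 0 := IsFractionRing.to_map_ne_zero_of_mem_nonZeroDivisors hc
    rw [Algebra.TensorProduct.map_tmul, ← Algebra.smul_def, TensorProduct.smul_tmul', Algebra.smul_def]
    congr 1
    rw [IsScalarTower.algebraMap_apply P B L, hc']
    simp only [IsScalarTower.coe_toAlgHom', map_mul]
    field_simp

lemma g2_domain {P O B T L : Type*} [CommRing P] [CommRing O] [CommRing B] [CommRing T]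
    [Field L] [IsDomain P] [IsDomain O] [IsDomain B]
    [Algebra P O] [Algebra P B] [Algebra B T] [Algebra P T] [Algebra O T] [IsScalarTower P B T]
    [IsScalarTower P O T] [IsNoetherianRing P] [IsNoetherianRing O] [Module.Finite P B] [Module.Flat P O]
    (m : Ideal P) [m.IsMaximal] (M : Ideal B) [M.IsMaximal] (hO : AdicCompl P m O) (hT : AdicCompl B M T)
    (hmM : m.map (algebraMap P B) ≤ M) [Algebra B L] [IsFractionRing B L]
    [Algebra P L] [IsScalarTower P B L] [Module.Flat P L]
    (hG : IsGood P O L)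
    (a u : T) (hu : u ∈ T⁰) (q : Polynomial T) (hq : q.Monic) (h : (q.scaleRoots u).eval a = 0) :
    ∃ d : P, d ≠ 0 ∧ ∃ t, algebraMap P T d * a = u * t := by
  letI : Algebra O (B ⊗[P] O) := Algebra.TensorProduct.rightAlgebra
  letI : Algebra O (L ⊗[P] O) := Algebra.TensorProduct.rightAlgebra
  haveI : Algebra.IsIntegral O (B ⊗[P] O) := by
    have h0 : (Algebra.TensorProduct.includeRight : O →ₐ[P] B ⊗[P] O).toRingHom.IsIntegral := by
      intro x
      induction x using TensorProduct.induction_on with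
      | zero => exact RingHom.isIntegralElem_zero _
      | add x y hx hy => exact RingHom.IsIntegralElem.add _ hx hy
      | tmul b o =>
        have h1 : b ⊗ₜ[P] o = (b ⊗ₜ[P] (1 : O)) * ((1 : B) ⊗ₜ[P] o) := by simp
        rw [h1]
        refine RingHom.IsIntegralElem.mul _ ?_ ?_
        · obtain ⟨p, hp, hpb⟩ := Algebra.IsIntegral.isIntegral (R := P) b
          refine ⟨p.map (algebraMap P O), hp.map _, ?_⟩
          rw [Polynomial.eval₂_map]
          have h2 := congrArg (Algebra.TensorProduct.includeLeft : B →ₐ[P] B ⊗[P] O).toRingHom hpb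
          rw [map_zero, Polynomial.hom_eval₂] at h2
          have h3 := (Algebra.TensorProduct.includeRight : O →ₐ[P] B ⊗[P] O).comp_algebraMap.trans
            (Algebra.TensorProduct.includeLeft : B →ₐ[P] B ⊗[P] O).comp_algebraMap.symm
          exact (congrArg (fun f => Polynomial.eval₂ f (b ⊗ₜ[P] (1 : O)) p) h3).trans h2
        · exact RingHom.isIntegralElem_map (Algebra.TensorProduct.includeRight : O →ₐ[P] B ⊗[P] O).toRingHom
    exact ⟨h0⟩
  haveI := hG.reduced
  let ι : B ⊗[P] O →ₐ[P] L ⊗[P] O :=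
    Algebra.TensorProduct.map (IsScalarTower.toAlgHom P B L) (AlgHom.id P O)
  have hι : Function.Injective ι :=
    Module.Flat.rTensor_preserves_injective_linearMap (M := O) (IsScalarTower.toAlgHom P B L).toLinearMap
      (IsFractionRing.injective B L)
  obtain ⟨d, hd, t, ht⟩ := g2_aux (P := P) (O := O) (locMap P O B T).toRingHom
    (locMap_surjective m M hO hT hmM)
    (locMap_eq_zero m M hO hT hmM) ι.toRingHom hι (fun x => ι.commutes x) (fun x => by
      change ι ((1 : B) ⊗ₜ[P] x) = (1 : L) ⊗ₜ[P] x
      simp [ι]) (fun u hu => hG.div u hu) (fun u hu w hw => by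
      have h1 : Function.Injective (LinearMap.mulLeft P u : O →ₗ[P] O) := mul_right_injective₀ hu
      have h2 := Module.Flat.lTensor_preserves_injective_linearMap (M := L) _ h1
      have h3 : ∀ w, LinearMap.lTensor L (LinearMap.mulLeft P u : O →ₗ[P] O) w = (1 : L) ⊗ₜ[P] u * w := by
        intro w
        induction w using TensorProduct.induction_on with
        | zero => simp
        | add x y hx hy => rw [map_add, hx, hy, mul_add]
        | tmul l o => simp
      apply h2
      rw [h3, map_zero]
      exact hw) exists_den_tensor one_ne_zero a u hu q hq h
  refine ⟨d, hd, t, ?_⟩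
  rw [← ht]
  congr 1
  exact ((locMap P O B T).commutes d).symm

-- Part PQ
lemma finiteDimensional_aux {A k L C : Type*} [CommRing A] [Field k] [Field L] [CommRing C] [IsDomain C]
    [Algebra A k] [Algebra k L] [Algebra A L] [IsScalarTower A k L] [Algebra A C] [Algebra C L]
    [IsScalarTower A C L] [IsFractionRing C L] [Module.Finite A C] : FiniteDimensional k L := by
  obtain ⟨s, hs⟩ := Module.Finite.fg_top (R := A) (M := C)
  let S : Set L := algebraMap C L '' s
  have hSf : S.Finite := s.finite_toSet.image _
  haveI : Finite S := hSf
  have hint : ∀ x ∈ S, IsIntegral k x := by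
    rintro _ ⟨c, -, rfl⟩
    have h1 : IsIntegral A c := Algebra.IsIntegral.isIntegral c
    exact (h1.map (IsScalarTower.toAlgHom A C L)).tower_top
  let E := IntermediateField.adjoin k S
  haveI : FiniteDimensional k E := IntermediateField.finiteDimensional_adjoin hint
  have hC : ∀ c : C, algebraMap C L c ∈ E := by
    intro c
    have hc : c ∈ Submodule.span A (s : Set C) := by rw [hs]; trivial
    induction hc using Submodule.span_induction with
    | mem x hx => exact IntermediateField.subset_adjoin k S ⟨x, hx, rfl⟩
    | zero => simp
    | add x y _ _ hx hy => rw [map_add]; exact add_mem hx hy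
    | smul a x _ hx =>
      rw [Algebra.smul_def, map_mul, ← IsScalarTower.algebraMap_apply A C L,
        IsScalarTower.algebraMap_apply A k L]
      exact mul_mem (E.algebraMap_mem _) hx
  have hE : E = ⊤ := by
    rw [eq_top_iff]
    intro l _
    obtain ⟨b, c, hc, rfl⟩ := IsFractionRing.div_surjective (A := C) l
    exact div_mem (hC b) (hC c)
  have e : (⊤ : IntermediateField k L) ≃ₐ[k] L := IntermediateField.topEquiv
  have hfd : FiniteDimensional k (⊤ : IntermediateField k L) := hE ▸ this
  exact Module.Finite.equiv e.toLinearEquiv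

lemma exists_mvPoly_setup (K B T kB : Type*) [Field K] [CommRing B] [IsDomain B] [Algebra K B]
    [Algebra.FiniteType K B] (M : Ideal B) [M.IsMaximal] [CommRing T] [Algebra B T] (hT : AdicCompl B M T)
    [Field kB] [Algebra B kB] [IsFractionRing B kB] :
    ∃ (n : ℕ) (g : MvPolynomial (Fin n) K →+* B) (h : MvPowerSeries (Fin n) K →+* T)
      (i : FractionRing (MvPolynomial (Fin n) K) →+* kB),
      Function.Injective g ∧ g.Finite ∧ (MvPolynomial.idealOfVars (Fin n) K).map g ≤ M ∧
      (∀ x, h (algebraMap (MvPolynomial (Fin n) K) (MvPowerSeries (Fin n) K) x) = algebraMap B T (g x)) ∧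
      (∀ x, i (algebraMap (MvPolynomial (Fin n) K) _ x) = algebraMap B kB (g x)) := by
  obtain ⟨n, g, hg, hgf, hgM⟩ := exists_noether K B M
  letI : Algebra (MvPolynomial (Fin n) K) T := ((algebraMap B T).comp g).toAlgebra
  obtain ⟨f⟩ := AdicCompl.exists_lift (AdicCompl.mvPowerSeries n K) hT (by
    change Ideal.map ((algebraMap B T).comp g) _ ≤ _
    rw [← Ideal.map_map]
    exact Ideal.map_mono hgM)
  have hinj : Function.Injective ((algebraMap B kB).comp g) := (IsFractionRing.injective B kB).comp hg
  refine ⟨n, g, f.toRingHom, IsFractionRing.lift hinj, hg, hgf, hgM, fun x => f.commutes x, fun x => ?_⟩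
  exact IsFractionRing.lift_algebraMap hinj x

theorem isReduced_domain (K B T C kB L : Type*) [Field K] [CommRing B] [IsDomain B] [Algebra K B]
    [Algebra.FiniteType K B] (M : Ideal B) [M.IsMaximal] [CommRing T] [Algebra B T] (hT : AdicCompl B M T)
    [CommRing C] [Field kB] [Field L] [Algebra B kB] [IsFractionRing B kB] [Algebra kB L]
    [FiniteDimensional kB L] [Algebra B C] [Algebra C L] [Algebra B L] [IsScalarTower B C L]
    [IsScalarTower B kB L] (hCL : Function.Injective (algebraMap C L)) : IsReduced (C ⊗[B] T) := by
  obtain ⟨n, g, h, i, hg, hgf, hgM, hh, hi⟩ := exists_mvPoly_setup K B T kB M hT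
  let P := MvPolynomial (Fin n) K
  let O := MvPowerSeries (Fin n) K
  let k := FractionRing P
  haveI : IsNoetherianRing O := MvPowerSeries.isNoetherianRing K
  haveI : Module.Flat P O := mvPowerSeries_flat n K
  letI : Algebra P B := g.toAlgebra
  letI : Algebra O T := h.toAlgebra
  letI : Algebra k kB := i.toAlgebra
  letI : Algebra P T := ((algebraMap B T).comp g).toAlgebra
  letI : Algebra P C := ((algebraMap B C).comp g).toAlgebra
  letI : Algebra P kB := ((algebraMap B kB).comp g).toAlgebra
  letI : Algebra P L := ((algebraMap B L).comp g).toAlgebra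
  letI : Algebra k L := ((algebraMap kB L).comp i).toAlgebra
  haveI : IsScalarTower P B T := .of_algebraMap_eq (fun x => rfl)
  haveI : IsScalarTower P O T := .of_algebraMap_eq (fun x => (hh x).symm)
  haveI : IsScalarTower P B C := .of_algebraMap_eq (fun x => rfl)
  haveI : IsScalarTower P B kB := .of_algebraMap_eq (fun x => rfl)
  haveI : IsScalarTower P k kB := .of_algebraMap_eq (fun x => (hi x).symm)
  haveI : IsScalarTower k kB L := .of_algebraMap_eq (fun x => rfl)
  haveI : IsScalarTower P C L := .of_algebraMap_eq (fun x => IsScalarTower.algebraMap_apply B C L (g x))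
  haveI : IsScalarTower P k L := .of_algebraMap_eq (fun x => by
    change algebraMap B L (g x) = algebraMap kB L (i (algebraMap P k x))
    rw [hi]; exact IsScalarTower.algebraMap_apply B kB L (g x))
  haveI : Module.Finite P B := hgf
  haveI : FiniteDimensional k kB := finiteDimensional_aux (A := P) (C := B)
  haveI : FiniteDimensional k L := Module.Finite.trans kB L
  haveI : (MvPolynomial.idealOfVars (Fin n) K).IsMaximal := idealOfVars_isMaximal n K
  exact isReduced_tensor_domain (P := P) (O := O) (MvPolynomial.idealOfVars (Fin n) K) M
    (AdicCompl.mvPowerSeries n K) hT hgM hCL (isGood_mvPowerSeries n K k L)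

theorem g2_field (K B T kB : Type*) [Field K] [CommRing B] [IsDomain B] [Algebra K B]
    [Algebra.FiniteType K B] (M : Ideal B) [M.IsMaximal] [CommRing T] [Algebra B T] (hT : AdicCompl B M T)
    [Field kB] [Algebra B kB] [IsFractionRing B kB]
    (a u : T) (hu : u ∈ T⁰) (q : Polynomial T) (hq : q.Monic) (hau : (q.scaleRoots u).eval a = 0) :
    ∃ d : B, d ≠ 0 ∧ ∃ t, algebraMap B T d * a = u * t := by
  obtain ⟨n, g, h, i, hg, hgf, hgM, hh, hi⟩ := exists_mvPoly_setup K B T kB M hT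
  let P := MvPolynomial (Fin n) K
  let O := MvPowerSeries (Fin n) K
  let k := FractionRing P
  haveI : IsNoetherianRing O := MvPowerSeries.isNoetherianRing K
  haveI : IsDomain O := NoZeroDivisors.to_isDomain _
  haveI : Module.Flat P O := mvPowerSeries_flat n K
  letI : Algebra P B := g.toAlgebra
  letI : Algebra O T := h.toAlgebra
  letI : Algebra k kB := i.toAlgebra
  letI : Algebra P T := ((algebraMap B T).comp g).toAlgebra
  letI : Algebra P kB := ((algebraMap B kB).comp g).toAlgebra
  haveI : IsScalarTower P B T := .of_algebraMap_eq (fun x => rfl)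
  haveI : IsScalarTower P O T := .of_algebraMap_eq (fun x => (hh x).symm)
  haveI : IsScalarTower P B kB := .of_algebraMap_eq (fun x => rfl)
  haveI : IsScalarTower P k kB := .of_algebraMap_eq (fun x => (hi x).symm)
  haveI : Module.Finite P B := hgf
  haveI : FiniteDimensional k kB := finiteDimensional_aux (A := P) (C := B)
  haveI : (MvPolynomial.idealOfVars (Fin n) K).IsMaximal := idealOfVars_isMaximal n K
  haveI : Module.Flat P k := IsLocalization.flat k P⁰
  haveI : Module.Flat P kB := Module.Flat.trans P k kB
  obtain ⟨d, hd, t, ht⟩ := g2_domain (P := P) (O := O) (L := kB) (MvPolynomial.idealOfVars (Fin n) K) M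
    (AdicCompl.mvPowerSeries n K) hT hgM (isGood_mvPowerSeries n K k kB) a u hu q hq hau
  exact ⟨g d, by rwa [map_ne_zero_iff _ hg], t, ht⟩

theorem finite_intCl_domain (K B kB : Type*) [Field K] [CommRing B] [IsDomain B] [Algebra K B]
    [Algebra.FiniteType K B]
    [Field kB] [Algebra B kB] [IsFractionRing B kB] : Module.Finite B (integralClosure B kB) := by
  obtain ⟨n, g, hg, hgf⟩ := exists_finite_inj_algHom_of_fg K B
  let P := MvPolynomial (Fin n) K
  let k := FractionRing P
  letI : Algebra P B := g.toRingHom.toAlgebra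
  letI : Algebra P kB := ((algebraMap B kB).comp g.toRingHom).toAlgebra
  have hinj : Function.Injective ((algebraMap B kB).comp g.toRingHom) := (IsFractionRing.injective B kB).comp hg
  letI : Algebra k kB := (IsFractionRing.lift hinj).toAlgebra
  haveI : IsScalarTower P B kB := .of_algebraMap_eq (fun x => rfl)
  haveI : IsScalarTower P k kB := .of_algebraMap_eq (fun x => (IsFractionRing.lift_algebraMap hinj x).symm)
  haveI : Module.Finite P B := hgf
  haveI : FiniteDimensional k kB := finiteDimensional_aux (A := P) (C := B)
  haveI : Module.Finite P (integralClosure P kB) := finite_intCl_mvPoly n K k kB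
  let f : integralClosure B kB →ₗ[P] integralClosure P kB :=
    { toFun := fun x => ⟨x, isIntegral_trans (R := P) (A := B) _ x.2⟩
      map_add' := fun x y => Subtype.ext (by simp)
      map_smul' := fun c x => Subtype.ext (by
        rw [← IsScalarTower.algebraMap_smul B c x]
        simp) }
  have hf : Function.Injective f := fun x y h => Subtype.ext (congrArg Subtype.val h :)
  haveI : Module.Finite P (integralClosure B kB) := Module.Finite.of_injective f hf
  exact Module.Finite.of_restrictScalars_finite P B _

-- Part PR
lemma AdicCompl.quot {B T : Type*} [CommRing B] [CommRing T] [IsNoetherianRing T] [Algebra B T] {M : Ideal B}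
    (h : AdicCompl B M T) (p : Ideal B) :
    AdicCompl (B ⧸ p) (M.map (Ideal.Quotient.mk p)) (T ⧸ p.map (algebraMap B T)) := by
  have := AdicCompl.quotient (B' := B ⧸ p) (T' := T ⧸ p.map (algebraMap B T)) h
    Ideal.Quotient.mk_surjective Ideal.Quotient.mk_surjective (by
      rw [Ideal.Quotient.algebraMap_eq, Ideal.Quotient.algebraMap_eq, Ideal.mk_ker, Ideal.mk_ker])
  exact this

lemma isMaximal_map_quot {B : Type*} [CommRing B] (M p : Ideal B) [hM : M.IsMaximal] (hp : p ≤ M) :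
    (M.map (Ideal.Quotient.mk p)).IsMaximal := by
  refine (Ideal.map_eq_top_or_isMaximal_of_surjective _ Ideal.Quotient.mk_surjective hM).resolve_left ?_
  intro h
  have h1 := congrArg (Ideal.comap (Ideal.Quotient.mk p)) h
  rw [Ideal.comap_map_of_surjective _ Ideal.Quotient.mk_surjective, Ideal.comap_top] at h1
  refine hM.ne_top (top_le_iff.mp ?_)
  rw [← h1]
  refine sup_le le_rfl ?_
  rw [← RingHom.ker_eq_comap_bot, Ideal.mk_ker]
  exact hp

universe uR in
lemma exists_fractionField (R : Type uR) [CommRing R] [IsDomain R] :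
    ∃ (k : Type uR) (_ : Field k) (_ : Algebra R k), IsFractionRing R k :=
  ⟨FractionRing R, inferInstance, inferInstance, inferInstance⟩

theorem h1_domain (K : Type*) {B A T C : Type*} [Field K] [CommRing B] [Algebra K B] [Algebra.FiniteType K B]
    (M : Ideal B) [M.IsMaximal] [CommRing A] [Algebra B A] [IsLocalization.AtPrime A M] [CommRing T]
    [Algebra A T] [Algebra B T] [IsScalarTower B A T] [IsNoetherianRing T] (hT : AdicCompl B M T)
    [CommRing C] [IsDomain C] [Algebra A C] [Module.Finite A C] : IsReduced (C ⊗[A] T) := by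
  letI : Algebra B C := ((algebraMap A C).comp (algebraMap B A)).toAlgebra
  haveI : IsScalarTower B A C := .of_algebraMap_eq (fun x => rfl)
  haveI := IsLocalization.tensorProduct_compatibleSMul M.primeCompl A C T
  have e1 : C ⊗[A] T ≃ₐ[C] C ⊗[B] T := Algebra.TensorProduct.equivOfCompatibleSMul B A C C T
  suffices IsReduced (C ⊗[B] T) from isReduced_of_injective e1 e1.injective
  let p : Ideal B := RingHom.ker (algebraMap B C)
  haveI : p.IsPrime := RingHom.ker_isPrime _
  have hpM : ∀ b ∉ M, algebraMap B C b ≠ 0 := by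
    intro b hb h0
    have h1 : IsUnit (algebraMap B A b) := IsLocalization.map_units A (⟨b, hb⟩ : M.primeCompl)
    have h2 : IsUnit (algebraMap B C b) := h1.map (algebraMap A C)
    exact h2.ne_zero h0
  have hp : p ≤ M := by
    intro b hb
    by_contra hbM
    exact hpM b hbM hb
  let jC : B ⧸ p →+* C := Ideal.Quotient.lift p (algebraMap B C) (fun a ha => ha)
  have hjC : Function.Injective jC := RingHom.kerLift_injective (algebraMap B C)
  obtain ⟨kB, _, _, _⟩ := exists_fractionField (B ⧸ p)
  obtain ⟨L, _, _, _⟩ := exists_fractionField C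
  letI : Algebra (B ⧸ p) C := jC.toAlgebra
  letI : Algebra (B ⧸ p) L := ((algebraMap C L).comp jC).toAlgebra
  haveI : IsScalarTower (B ⧸ p) C L := .of_algebraMap_eq (fun x => rfl)
  have hjL : Function.Injective ((algebraMap C L).comp jC) := (IsFractionRing.injective C L).comp hjC
  letI : Algebra kB L := (IsFractionRing.lift hjL).toAlgebra
  haveI : IsScalarTower (B ⧸ p) kB L := .of_algebraMap_eq
    (fun x => (IsFractionRing.lift_algebraMap hjL x).symm)
  haveI : IsScalarTower B (B ⧸ p) C := .of_algebraMap_eq (fun x => rfl)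
  have hu : ∀ y : M.primeCompl, IsUnit (((algebraMap (B ⧸ p) kB).comp (Ideal.Quotient.mk p)) y) := by
    intro y
    refine IsUnit.mk0 _ ?_
    intro h0
    have h1 : Ideal.Quotient.mk p (y : B) = 0 := by
      apply IsFractionRing.injective (B ⧸ p) kB
      rw [map_zero]; exact h0
    rw [Ideal.Quotient.eq_zero_iff_mem] at h1
    exact hpM y y.2 h1
  letI : Algebra A kB := (IsLocalization.lift (M := M.primeCompl) hu).toAlgebra
  letI : Algebra A L := ((algebraMap C L).comp (algebraMap A C)).toAlgebra
  haveI : IsScalarTower A C L := .of_algebraMap_eq (fun x => rfl)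
  haveI : IsScalarTower A kB L := IsScalarTower.of_algebraMap_eq' (by
    refine IsLocalization.ringHom_ext M.primeCompl ?_
    ext b
    change algebraMap C L (algebraMap B C b) =
      algebraMap kB L (IsLocalization.lift (M := M.primeCompl) hu (algebraMap B A b))
    rw [IsLocalization.lift_eq]
    exact (IsFractionRing.lift_algebraMap hjL (Ideal.Quotient.mk p b)).symm)
  haveI : FiniteDimensional kB L := finiteDimensional_aux (A := A) (C := C)
  haveI := isMaximal_map_quot M p hp
  have hred : IsReduced (C ⊗[B ⧸ p] (T ⧸ p.map (algebraMap B T))) :=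
    isReduced_domain K (B ⧸ p) _ C kB L (M.map (Ideal.Quotient.mk p)) (hT.quot p)
      (IsFractionRing.injective C L)
  have e2 := (Algebra.TensorProduct.cancelBaseChange B (B ⧸ p) C C T).symm.trans
    (Algebra.TensorProduct.congr (AlgEquiv.refl (R := C) (A₁ := C))
      (Algebra.TensorProduct.quotIdealMapEquivQuotTensor T p).symm)
  exact isReduced_of_injective e2 e2.injective

theorem h1_general {A T : Type*} [CommRing A] [CommRing T] [Algebra A T] [Module.Flat A T] (C : Type*) [CommRing C]
    [Algebra A C] [IsNoetherianRing C] [IsReduced C]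
    (H : ∀ q : Ideal C, q.IsPrime → IsReduced ((C ⧸ q) ⊗[A] T)) : IsReduced (C ⊗[A] T) := by
  haveI hfin : Finite (minimalPrimes C) := (minimalPrimes.finite_of_isNoetherianRing C)
  classical
  haveI := Fintype.ofFinite (minimalPrimes C)
  suffices IsReduced (T ⊗[A] C) by
    let e := Algebra.TensorProduct.comm A C T
    exact isReduced_of_injective e e.injective
  let f : C →ₗ[A] (∀ q : minimalPrimes C, C ⧸ (q : Ideal C)) :=
    LinearMap.pi (fun q => (Ideal.Quotient.mkₐ A (q : Ideal C)).toLinearMap)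
  have hf : Function.Injective f := by
    rw [injective_iff_map_eq_zero]
    intro x hx
    have h1 : x ∈ sInf (minimalPrimes C) := by
      rw [Submodule.mem_sInf]
      intro q hq
      have := congrFun hx ⟨q, hq⟩
      exact Ideal.Quotient.eq_zero_iff_mem.mp this
    have h2 : sInf (minimalPrimes C) = (⊥ : Ideal C) := by
      have := Ideal.sInf_minimalPrimes (I := (⊥ : Ideal C))
      rw [minimalPrimes]
      rw [this]
      exact nilradical_eq_zero C
    rw [h2] at h1
    exact h1
  have hf2 := Module.Flat.lTensor_preserves_injective_linearMap (M := T) f hf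
  refine ⟨fun x hx => ?_⟩
  apply hf2
  apply (TensorProduct.piRight A A T (fun q : minimalPrimes C => C ⧸ (q : Ideal C))).injective
  rw [map_zero, map_zero]
  funext q
  have hcomp : ∀ x, TensorProduct.piRight A A T (fun q : minimalPrimes C => C ⧸ (q : Ideal C)) (LinearMap.lTensor T f x) q
      = Algebra.TensorProduct.map (AlgHom.id A T) (Ideal.Quotient.mkₐ A (q : Ideal C)) x := by
    intro x
    induction x using TensorProduct.induction_on with
    | zero => simp
    | add x y hx hy => rw [map_add, map_add, Pi.add_apply, hx, hy, map_add]
    | tmul t c => rfl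
  rw [hcomp]
  haveI := H q q.2.1.1
  haveI : IsReduced (T ⊗[A] (C ⧸ (q : Ideal C))) := by
    let e := Algebra.TensorProduct.comm A T (C ⧸ (q : Ideal C))
    exact isReduced_of_injective e e.injective
  exact (hx.map (Algebra.TensorProduct.map (AlgHom.id A T) (Ideal.Quotient.mkₐ A (q : Ideal C)))).eq_zero

-- Part PS
lemma eq_zero_of_mem_minimalPrimes {A : Type*} [CommRing A] [IsReduced A] (x : A)
    (h : ∀ p ∈ minimalPrimes A, x ∈ p) : x = 0 := by
  have h1 : x ∈ sInf (minimalPrimes A) := by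
    rw [Submodule.mem_sInf]
    exact h
  have h2 : sInf (minimalPrimes A) = (⊥ : Ideal A) := by
    have := Ideal.sInf_minimalPrimes (I := (⊥ : Ideal A))
    rw [minimalPrimes]
    rw [this]
    exact nilradical_eq_zero A
  rw [h2] at h1
  exact h1

lemma exists_separator {A : Type*} [CommRing A] [IsNoetherianRing A]
    (p : Ideal A) (hp : p ∈ minimalPrimes A) :
    ∃ z : A, z ∉ p ∧ ∀ q ∈ minimalPrimes A, q ≠ p → z ∈ q := by
  classical
  let s := (minimalPrimes.finite_of_isNoetherianRing A).toFinset.erase p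
  haveI := hp.1.1
  have h : ¬ (s.inf id ≤ p) := by
    intro h
    rw [Ideal.IsPrime.inf_le' hp.1.1] at h
    obtain ⟨q, hq, hqp⟩ := h
    rw [Finset.mem_erase, Set.Finite.mem_toFinset] at hq
    exact hq.1 (le_antisymm hqp (hp.2 hq.2.1 hqp))
  obtain ⟨z, hz, hzp⟩ := SetLike.not_le_iff_exists.mp h
  refine ⟨z, hzp, fun q hq hne => ?_⟩
  have : s.inf id ≤ q := Finset.inf_le (f := id) (by
    rw [Finset.mem_erase, Set.Finite.mem_toFinset]; exact ⟨hne, hq⟩)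
  exact this hz

theorem h2_prime (K : Type*) {B A T : Type*} [Field K] [CommRing B] [Algebra K B] [Algebra.FiniteType K B]
    (M : Ideal B) [M.IsMaximal] [CommRing A] [Algebra B A] [IsLocalization.AtPrime A M] [CommRing T]
    [Algebra A T] [Algebra B T] [IsScalarTower B A T] [IsNoetherianRing T] [Module.Flat A T]
    (hT : AdicCompl B M T) (p' : Ideal A) [p'.IsPrime] (z : A) (hz : ∀ x, z * x = 0 ↔ x ∈ p')
    (a u : T) (hu : u ∈ T⁰) (q : Polynomial T) (hq : q.Monic) (hau : (q.scaleRoots u).eval a = 0) :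
    ∃ d : A, d ∉ p' ∧ ∃ t, algebraMap A T (z * d) * a = u * t := by
  let p : Ideal B := p'.comap (algebraMap B A)
  haveI : p.IsPrime := Ideal.comap_isPrime _ _
  have hp : p ≤ M := by
    intro b hb
    by_contra hbM
    have h1 : IsUnit (algebraMap B A b) := IsLocalization.map_units A (⟨b, hbM⟩ : M.primeCompl)
    exact ‹p'.IsPrime›.ne_top (Ideal.eq_top_of_isUnit_mem _ hb h1)
  have hpp : p.map (algebraMap B T) = p'.map (algebraMap A T) := by
    rw [IsScalarTower.algebraMap_eq B A T, ← Ideal.map_map]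
    congr 1
    exact IsLocalization.map_under M.primeCompl A p'
  have hzT : ∀ t : T, t ∈ p.map (algebraMap B T) → algebraMap A T z * t = 0 := by
    intro t ht
    rw [hpp] at ht
    have : p'.map (algebraMap A T) ≤ LinearMap.ker (LinearMap.mulLeft T (algebraMap A T z)) := by
      rw [Ideal.map_le_iff_le_comap]
      intro x hx
      change algebraMap A T z * algebraMap A T x = 0
      rw [← map_mul, (hz x).mpr hx, map_zero]
    exact this ht
  have hTz : ∀ t : T, algebraMap A T z * t = 0 → t ∈ p.map (algebraMap B T) := by
    intro t ht
    rw [hpp]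
    refine flat_colon (ι := Unit) (⊥ : Ideal A) p' (fun _ => z) (fun x hx => ?_) t (fun _ => ?_)
    · exact (hz x).mp (by simpa using hx ())
    · simp [ht]
  let mk := Ideal.Quotient.mk (p.map (algebraMap B T))
  have hu' : mk u ∈ (T ⧸ p.map (algebraMap B T))⁰ := by
    rw [mem_nonZeroDivisors_iff_right]
    intro x hx
    obtain ⟨x, rfl⟩ := Ideal.Quotient.mk_surjective x
    rw [← map_mul, Ideal.Quotient.eq_zero_iff_mem] at hx
    rw [Ideal.Quotient.eq_zero_iff_mem]
    apply hTz
    have h1 := hzT _ hx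
    rw [← mul_assoc] at h1
    exact (mem_nonZeroDivisors_iff_right.mp hu) _ h1
  obtain ⟨kB, _, _, _⟩ := exists_fractionField (B ⧸ p)
  haveI := isMaximal_map_quot M p hp
  have hau' : ((q.map mk).scaleRoots (mk u)).eval (mk a) = 0 := by
    by_cases hnt : Subsingleton (T ⧸ p.map (algebraMap B T))
    · exact Subsingleton.elim _ _
    have hnt' : Nontrivial (T ⧸ p.map (algebraMap B T)) := not_subsingleton_iff_nontrivial.mp hnt
    rw [← Polynomial.map_scaleRoots, Polynomial.eval_map, Polynomial.eval₂_at_apply, hau, map_zero]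
    rw [hq.leadingCoeff, map_one]
    exact one_ne_zero
  obtain ⟨d, hd, t, ht⟩ := g2_field K (B ⧸ p) (T ⧸ p.map (algebraMap B T)) kB
    (M.map (Ideal.Quotient.mk p)) (hT.quot p) (mk a) (mk u) hu' (q.map mk) (hq.map mk) hau'
  obtain ⟨d, rfl⟩ := Ideal.Quotient.mk_surjective d
  obtain ⟨t, rfl⟩ := Ideal.Quotient.mk_surjective t
  refine ⟨algebraMap B A d, ?_, algebraMap A T z * t, ?_⟩
  · intro h
    exact hd (Ideal.Quotient.eq_zero_iff_mem.mpr h)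
  · have h1 : mk (algebraMap B T d * a - u * t) = 0 := by
      rw [map_sub, map_mul, map_mul, sub_eq_zero]
      exact ht
    have h2 := hzT _ (Ideal.Quotient.eq_zero_iff_mem.mp h1)
    rw [map_mul, ← IsScalarTower.algebraMap_apply]
    linear_combination h2

theorem h2_general (K : Type*) {B A T : Type*} [Field K] [CommRing B] [Algebra K B] [Algebra.FiniteType K B]
    (M : Ideal B) [M.IsMaximal] [CommRing A] [IsReduced A] [IsNoetherianRing A] [Algebra B A]
    [IsLocalization.AtPrime A M] [CommRing T]
    [Algebra A T] [Algebra B T] [IsScalarTower B A T] [IsNoetherianRing T] [Module.Flat A T]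
    (hT : AdicCompl B M T) (y : FractionRing T) (hy : IsIntegral T y) :
    ∃ d ∈ A⁰, ∃ t : T, algebraMap T (FractionRing T) (algebraMap A T d) * y =
      algebraMap T (FractionRing T) t := by
  classical
  obtain ⟨a, ⟨u, hu⟩, rfl⟩ := IsLocalization.exists_mk'_eq T⁰ y
  obtain ⟨q, hq, hqy⟩ := hy
  have hau : (q.scaleRoots u).eval a = 0 := by
    apply IsFractionRing.injective T (FractionRing T)
    rw [map_zero, ← Polynomial.eval₂_at_apply]
    have h1 := Polynomial.scaleRoots_eval₂_mul (p := q) (algebraMap T (FractionRing T))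
      (IsLocalization.mk' (FractionRing T) a (⟨u, hu⟩ : T⁰)) u
    rw [hqy, mul_zero, IsLocalization.mk'_spec'_mk] at h1
    exact h1
  haveI : Finite (minimalPrimes A) := minimalPrimes.finite_of_isNoetherianRing A
  cases nonempty_fintype (minimalPrimes A)
  choose z hz hzq using fun p : minimalPrimes A => exists_separator p.1 p.2
  have hz' : ∀ p : minimalPrimes A, ∀ x, z p * x = 0 ↔ x ∈ p.1 := by
    intro p x
    haveI := p.2.1.1
    constructor
    · intro h
      exact ((this.mem_or_mem (h ▸ p.1.zero_mem : z p * x ∈ p.1)).resolve_left (hz p))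
    · intro h
      apply eq_zero_of_mem_minimalPrimes
      intro r hr
      by_cases hrp : r = p.1
      · rw [hrp]; exact Ideal.mul_mem_left _ _ h
      · exact Ideal.mul_mem_right _ _ (hzq p r hr hrp)
  have key : ∀ p : minimalPrimes A, ∃ d : A, d ∉ p.1 ∧ ∃ t, algebraMap A T (z p * d) * a = u * t := by
    intro p
    haveI := p.2.1.1
    exact h2_prime K M hT p.1 (z p) (hz' p) a u hu q hq hau
  choose d hd t ht using key
  refine ⟨∑ p, z p * d p, ?_, ∑ p, t p, ?_⟩
  · rw [mem_nonZeroDivisors_iff_right]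
    intro x hx
    apply eq_zero_of_mem_minimalPrimes
    intro r hr
    haveI := hr.1.1
    refine (this.mem_or_mem (hx ▸ r.zero_mem : x * (∑ p, z p * d p) ∈ r)).resolve_right ?_
    intro hmem
    rw [← Finset.add_sum_erase _ _ (Finset.mem_univ (⟨r, hr⟩ : minimalPrimes A))] at hmem
    have h2 : ∑ p ∈ Finset.univ.erase (⟨r, hr⟩ : minimalPrimes A), z p * d p ∈ r := by
      refine Ideal.sum_mem _ fun p hp => Ideal.mul_mem_right _ _ (hzq p r hr ?_)
      intro h
      exact (Finset.ne_of_mem_erase hp) (Subtype.ext h.symm)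
    rw [Ideal.add_mem_iff_left _ h2] at hmem
    exact (this.mem_or_mem hmem).elim (hz ⟨r, hr⟩) (hd ⟨r, hr⟩)
  · have h3 : algebraMap A T (∑ p, z p * d p) * a = u * ∑ p, t p := by
      rw [map_sum, Finset.sum_mul, Finset.mul_sum]
      exact Finset.sum_congr rfl fun p _ => ht p
    rw [IsLocalization.mul_mk'_eq_mk'_of_mul, IsLocalization.mk'_eq_iff_eq_mul, h3, ← map_mul, mul_comm]

-- Part PU
theorem AdicCompl.isNoetherianRing (K : Type*) {B T : Type*} [Field K] [CommRing B] [Algebra K B]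
    [Algebra.FiniteType K B] (M : Ideal B) [M.IsMaximal] [CommRing T] [Algebra B T] (hT : AdicCompl B M T) :
    IsNoetherianRing T := by
  obtain ⟨n, g, hg, hgf, hgM⟩ := exists_noether K B M
  let P := MvPolynomial (Fin n) K
  let O := MvPowerSeries (Fin n) K
  letI : Algebra P T := ((algebraMap B T).comp g).toAlgebra
  obtain ⟨f⟩ := AdicCompl.exists_lift (AdicCompl.mvPowerSeries n K) hT (by
    change Ideal.map ((algebraMap B T).comp g) _ ≤ _
    rw [← Ideal.map_map]
    exact Ideal.map_mono hgM)
  haveI : IsNoetherianRing O := MvPowerSeries.isNoetherianRing K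
  letI : Algebra P B := g.toAlgebra
  letI : Algebra O T := f.toRingHom.toAlgebra
  haveI : IsScalarTower P B T := .of_algebraMap_eq (fun x => rfl)
  haveI : IsScalarTower P O T := .of_algebraMap_eq (fun x => (f.commutes x).symm)
  haveI : Module.Finite P B := hgf
  haveI : (MvPolynomial.idealOfVars (Fin n) K).IsMaximal := idealOfVars_isMaximal n K
  have hs := locMap_surjective (P := P) (O := O) (MvPolynomial.idealOfVars (Fin n) K) M
    (AdicCompl.mvPowerSeries n K) hT hgM
  haveI : IsNoetherianRing (O ⊗[P] B) := IsNoetherianRing.of_finite O _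
  haveI : IsNoetherianRing (B ⊗[P] O) := isNoetherianRing_of_ringEquiv (O ⊗[P] B)
    (Algebra.TensorProduct.comm P O B).toRingEquiv
  exact isNoetherianRing_of_surjective _ _ (locMap P O B T).toRingHom hs

universe uB in
theorem h3_prime (K : Type*) {B : Type uB} {A : Type*} [Field K] [CommRing B] [Algebra K B]
    [Algebra.FiniteType K B]
    (M : Ideal B) [M.IsMaximal] [CommRing A] [IsNoetherianRing A] [Algebra B A] [IsLocalization.AtPrime A M]
    (p' : Ideal A) [p'.IsPrime] :
    ∃ (k : Type uB) (_ : Field k) (_ : Algebra A k), RingHom.ker (algebraMap A k) = p' ∧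
      Module.Finite A (integralClosure A k) := by
  let p : Ideal B := p'.comap (algebraMap B A)
  haveI : p.IsPrime := Ideal.comap_isPrime _ _
  have hpM : ∀ b ∉ M, b ∉ p := by
    intro b hbM hb
    have h1 : IsUnit (algebraMap B A b) := IsLocalization.map_units A (⟨b, hbM⟩ : M.primeCompl)
    exact ‹p'.IsPrime›.ne_top (Ideal.eq_top_of_isUnit_mem _ hb h1)
  obtain ⟨k, _, _, _⟩ := exists_fractionField (B ⧸ p)
  have hk0 : ∀ b : B, ((algebraMap (B ⧸ p) k).comp (Ideal.Quotient.mk p)) b = 0 ↔ b ∈ p := by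
    intro b
    rw [RingHom.comp_apply, map_eq_zero_iff _ (IsFractionRing.injective (B ⧸ p) k),
      Ideal.Quotient.eq_zero_iff_mem]
  have hu : ∀ y : M.primeCompl, IsUnit (((algebraMap (B ⧸ p) k).comp (Ideal.Quotient.mk p)) y) := by
    intro y
    refine IsUnit.mk0 _ ?_
    rw [Ne, hk0]
    exact hpM y y.2
  letI : Algebra A k := (IsLocalization.lift (M := M.primeCompl) hu).toAlgebra
  letI : Algebra B k := ((algebraMap (B ⧸ p) k).comp (Ideal.Quotient.mk p)).toAlgebra
  haveI : IsScalarTower B (B ⧸ p) k := .of_algebraMap_eq (fun x => rfl)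
  haveI : IsScalarTower B A k := .of_algebraMap_eq (fun x =>
    (IsLocalization.lift_eq (M := M.primeCompl) hu x).symm)
  refine ⟨k, inferInstance, inferInstance, ?_, ?_⟩
  · ext x
    obtain ⟨b, s, rfl⟩ := IsLocalization.exists_mk'_eq M.primeCompl x
    rw [RingHom.mem_ker, IsLocalization.mk'_mem_iff]
    change IsLocalization.lift (M := M.primeCompl) hu _ = 0 ↔ b ∈ p
    rw [IsLocalization.lift_mk'_spec, mul_zero, hk0]
  · have hfin : Module.Finite (B ⧸ p) (integralClosure (B ⧸ p) k) := finite_intCl_domain K (B ⧸ p) k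
    obtain ⟨s, hs⟩ := hfin.1
    let N : Submodule A k := Submodule.span A ((fun x : integralClosure (B ⧸ p) k => (x : k)) '' (s : Set _))
    have hN : ∀ x : k, IsIntegral (B ⧸ p) x → x ∈ N := by
      intro x hx
      have h1 : (⟨x, hx⟩ : integralClosure (B ⧸ p) k) ∈ Submodule.span (B ⧸ p) (s : Set _) := by
        rw [hs]; trivial
      have h2 : ∀ y : integralClosure (B ⧸ p) k, y ∈ Submodule.span (B ⧸ p) (s : Set (integralClosure (B ⧸ p) k)) → (y : k) ∈ N := by
        intro y hy
        induction hy using Submodule.span_induction with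
        | mem y hy => exact Submodule.subset_span ⟨y, hy, rfl⟩
        | zero => exact N.zero_mem
        | add y z _ _ hy hz => exact N.add_mem hy hz
        | smul c y _ hy =>
          obtain ⟨c, rfl⟩ := Ideal.Quotient.mk_surjective c
          have h3 : ((Ideal.Quotient.mk p c • y : integralClosure (B ⧸ p) k) : k) = algebraMap B A c • (y : k) := by
            rw [algebraMap_smul]
            change Ideal.Quotient.mk p c • (y : k) = _
            rw [Algebra.smul_def, Algebra.smul_def]
            rfl
          rw [h3]
          exact N.smul_mem _ hy
      exact h2 _ h1
    have hle : (Subalgebra.toSubmodule (integralClosure A k)) ≤ N := by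
      intro x hx
      obtain ⟨m, hm⟩ := IsIntegral.exists_multiple_integral_of_isLocalization M.primeCompl x
        (show IsIntegral A x from hx)
      have h1 : (m : B) • x ∈ N := hN _ (hm.tower_top)
      obtain ⟨v, hv⟩ := (IsLocalization.map_units A m)
      have h2 : x = (↑v⁻¹ : A) • ((m : B) • x) := by
        rw [← algebraMap_smul A (m : B) x, ← hv, smul_smul, Units.inv_mul, one_smul]
      rw [h2]
      exact N.smul_mem _ h1
    haveI : Module.Finite A N := Module.Finite.span_of_finite A (s.finite_toSet.image _)
    haveI : Module.Finite A (Subalgebra.toSubmodule (integralClosure A k)) :=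
      Module.Finite.of_injective (Submodule.inclusion hle) (Submodule.inclusion_injective hle)
    exact this

universe uB in
theorem h3_general (K : Type*) {B : Type uB} {A : Type*} [Field K] [CommRing B] [Algebra K B]
    [Algebra.FiniteType K B]
    (M : Ideal B) [M.IsMaximal] [CommRing A] [IsNoetherianRing A] [IsReduced A] [Algebra B A]
    [IsLocalization.AtPrime A M] : Module.Finite A (integralClosure A (FractionRing A)) := by
  have key : ∀ p : minimalPrimes A, ∃ (N : Type uB) (_ : AddCommGroup N) (_ : Module A N)
      (f : integralClosure A (FractionRing A) →ₗ[A] N), Module.Finite A N ∧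
        ∀ (x : integralClosure A (FractionRing A)) (a : A) (s : A⁰),
          (x : FractionRing A) = IsLocalization.mk' (FractionRing A) a s → f x = 0 → a ∈ p.1 := by
    intro p
    haveI := p.2.1.1
    obtain ⟨k, _, _, hker, hfin⟩ := h3_prime K M (A := A) p.1
    have hu : ∀ s : A⁰, IsUnit (algebraMap A k s) := by
      intro s
      refine IsUnit.mk0 _ ?_
      rw [Ne, ← RingHom.mem_ker, hker]
      intro hs
      exact Set.disjoint_left.mp (Ideal.disjoint_nonZeroDivisors_of_mem_minimalPrimes p.2) hs s.2
    let θ : FractionRing A →ₐ[A] k :=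
      { IsLocalization.lift (M := A⁰) hu with
        commutes' := fun a => IsLocalization.lift_eq (M := A⁰) hu a }
    let f : integralClosure A (FractionRing A) →ₗ[A] integralClosure A k :=
      (θ.toLinearMap ∘ₗ (integralClosure A (FractionRing A)).val.toLinearMap).codRestrict
        (Subalgebra.toSubmodule (integralClosure A k))
        (fun x => IsIntegral.map θ x.2)
    refine ⟨integralClosure A k, inferInstance, inferInstance, f, hfin, ?_⟩
    intro x a s hx h0
    have h1 : θ (x : FractionRing A) = 0 := congrArg Subtype.val h0
    rw [hx] at h1
    rw [← hker, RingHom.mem_ker]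
    have h2 : IsLocalization.lift (M := A⁰) hu (IsLocalization.mk' (FractionRing A) a s) = 0 := h1
    rw [IsLocalization.lift_mk'_spec, mul_zero] at h2
    exact h2
  choose N i1 i2 f hfin hf using key
  haveI : Finite (minimalPrimes A) := minimalPrimes.finite_of_isNoetherianRing A
  let F : integralClosure A (FractionRing A) →ₗ[A] (∀ p, N p) := LinearMap.pi f
  refine Module.Finite.of_injective F ?_
  rw [injective_iff_map_eq_zero]
  intro x hx
  obtain ⟨a, s, has⟩ := IsLocalization.exists_mk'_eq A⁰ (x : FractionRing A)
  have : a = 0 := by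
    apply eq_zero_of_mem_minimalPrimes
    intro p hp
    exact hf ⟨p, hp⟩ x a s has.symm (congrFun hx ⟨p, hp⟩)
  apply Subtype.ext
  rw [← has, this, IsLocalization.mk'_zero]
  rfl

universe uB in
theorem main_aux (K : Type*) {B A : Type uB} {T : Type*} [Field K] [CommRing B] [IsReduced B] [Algebra K B]
    [Algebra.FiniteType K B]
    (M : Ideal B) [M.IsMaximal] [CommRing A] [Algebra B A] [IsLocalization.AtPrime A M] [CommRing T]
    [Algebra A T] [Algebra B T] [IsScalarTower B A T] [Module.Flat A T] (hT : AdicCompl B M T) :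
    IsReduced T ∧ (conductorIdeal A).map (algebraMap A T) = conductorIdeal T := by
  haveI : IsNoetherianRing B := Algebra.FiniteType.isNoetherianRing K B
  haveI : IsNoetherianRing A := IsLocalization.isNoetherianRing M.primeCompl A inferInstance
  haveI : IsReduced A := isReduced_localizationPreserves M.primeCompl A inferInstance
  haveI : IsNoetherianRing T := hT.isNoetherianRing K M
  have H1 : ∀ (C : Type _) [CommRing C] [Algebra A C] [Module.Finite A C] [IsReduced C],
      IsReduced (C ⊗[A] T) := by
    intro C _ _ _ _
    haveI : IsNoetherianRing C := IsNoetherianRing.of_finite A C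
    refine h1_general C fun q hq => ?_
    exact h1_domain K M hT
  refine ⟨?_, conductor_flat H1 (fun y hy => h2_general K M hT y hy) (h3_general K M)⟩
  haveI := H1 A
  let e := (Algebra.TensorProduct.lid A T).symm
  exact isReduced_of_injective e e.injective

/-- Let `K` be a field, `B` a reduced finitely generated `K`-algebra,
`M ⊆ B` a maximal ideal, `A = B_M`, and `Â` the completion of `A` at its maximal
ideal. Then `Â` is reduced and the conductor commutes with completion:
`C_A·Â = C_Â`. -/
theorem conductor_commutes_with_completion
    (K : Type*) [Field K] (B : Type*) [CommRing B] [IsReduced B] [Algebra K B]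
    [Algebra.FiniteType K B] (M : Ideal B) [M.IsMaximal] :
    IsReduced (AdicCompletion
        (IsLocalRing.maximalIdeal (Localization.AtPrime M)) (Localization.AtPrime M)) ∧
      (conductorIdeal (Localization.AtPrime M)).map
          (algebraMap (Localization.AtPrime M)
            (AdicCompletion
              (IsLocalRing.maximalIdeal (Localization.AtPrime M))
              (Localization.AtPrime M)))
        = conductorIdeal (AdicCompletion
            (IsLocalRing.maximalIdeal (Localization.AtPrime M))
            (Localization.AtPrime M)) := by
  haveI : IsNoetherianRing B := Algebra.FiniteType.isNoetherianRing K B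
  haveI : IsNoetherianRing (Localization.AtPrime M) :=
    IsLocalization.isNoetherianRing M.primeCompl _ inferInstance
  exact main_aux K M (AdicCompl.of_localization (A := Localization.AtPrime M) M
    (AdicCompl.adicCompletion _ (IsNoetherian.noetherian _)))
end
end

section
/- Let A be a reduced Noetherian commutative ring whose integral closure Ā in Q(A) is a finite A-module, let W ⊆ Spec(A), and let J ⊆ A be an ideal. Then: (i) if J is a test ideal at W and P ∈ W, then the localized ideal J_P is a test ideal for A_P; (ii) if W contains the non-normal locus N(A), then J is a test ideal for A if and only if J is a test ideal at W. -/
set_option synthInstance.maxHeartbeats 1000000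
set_option maxHeartbeats 1000000

open scoped nonZeroDivisors

noncomputable section

/-- A test ideal for `A`. -/
def IsTestIdeal (A : Type*) [CommRing A] (J : Ideal A) : Prop :=
  (∃ g ∈ J, g ∈ A⁰) ∧ J.IsRadical ∧
    PrimeSpectrum.zeroLocus (conductorIdeal A : Set A) ⊆
      PrimeSpectrum.zeroLocus (J : Set A)

/-- A test ideal at a subset `W ⊆ Spec A`: it contains a non-zerodivisor, is radical,
and satisfies `V(C_{A_P}) ⊆ V(J_P)` in `Spec A_P` for every `P ∈ W`. -/
def IsTestIdealAt (A : Type*) [CommRing A] (W : Set (PrimeSpectrum A))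
    (J : Ideal A) : Prop :=
  (∃ g ∈ J, g ∈ A⁰) ∧ J.IsRadical ∧
    ∀ P ∈ W,
      PrimeSpectrum.zeroLocus
          (conductorIdeal (Localization.AtPrime P.asIdeal) :
            Set (Localization.AtPrime P.asIdeal)) ⊆
        PrimeSpectrum.zeroLocus
          (J.map (algebraMap A (Localization.AtPrime P.asIdeal)) :
            Set (Localization.AtPrime P.asIdeal))

/-- The non-normal locus of `A`. -/
def nonNormalLocus (A : Type*) [CommRing A] : Set (PrimeSpectrum A) :=
  {P | integralClosure (Localization.AtPrime P.asIdeal)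
      (FractionRing (Localization.AtPrime P.asIdeal)) ≠ ⊥}

lemma aux_nzd {A : Type*} [CommRing A] [IsReduced A] [IsNoetherianRing A] (t : A) :
    ∃ a i : A, i * t = 0 ∧ a * t + i ∈ A⁰ := by
  by_contra hcon
  push Not at hcon
  have hdis : Disjoint ((Ideal.span {t} ⊔ (Ideal.span {t}).annihilator : Ideal A) : Set A)
      (nonZeroDivisors A : Set A) := by
    rw [Set.disjoint_left]
    intro x hx hx'
    obtain ⟨y, hy, z, hz, rfl⟩ := Submodule.mem_sup.mp hx
    obtain ⟨a, rfl⟩ := Ideal.mem_span_singleton'.mp hy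
    rw [Submodule.mem_annihilator_span_singleton, smul_eq_mul] at hz
    exact hcon a z hz hx'
  have h := Ideal.bot_lt_annihilator_of_disjoint_nonZeroDivisors hdis
  obtain ⟨x, hx, hx0⟩ := SetLike.exists_of_lt h
  apply hx0
  change x ∈ Submodule.annihilator _ at hx
  rw [Submodule.mem_annihilator] at hx
  have h1 : x * t = 0 := hx t (Ideal.mem_sup_left (Ideal.mem_span_singleton_self t))
  have h2 : x * x = 0 := hx x (Ideal.mem_sup_right
    ((Submodule.mem_annihilator_span_singleton _ _).mpr h1))
  have : x = 0 := by
    apply IsReduced.eq_zero x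
    exact ⟨2, by rw [pow_two, h2]⟩
  simp [this]

section aux
variable {A B K L : Type*} [CommRing A] [CommRing B] [CommRing K] [CommRing L]
  [Algebra A B] [Algebra A K] [Algebra A L] [Algebra B L] [Algebra K L]
  [IsScalarTower A B L] [IsScalarTower A K L] [IsFractionRing A K] [IsFractionRing B L]

lemma aux_loc [IsReduced A] [IsNoetherianRing A] (M : Submonoid A) [IsLocalization M B] :
    IsLocalization (Algebra.algebraMapSubmonoid K M) L := by
  have hAL : ∀ a : A, algebraMap K L (algebraMap A K a) = algebraMap B L (algebraMap A B a) := by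
    intro a
    rw [← IsScalarTower.algebraMap_apply, ← IsScalarTower.algebraMap_apply]
  refine ⟨⟨?_, ?_, ?_⟩⟩
  · rintro ⟨_, f, hf, rfl⟩
    rw [hAL]
    exact (IsLocalization.map_units B (⟨f, hf⟩ : M)).map _
  · intro z
    obtain ⟨b, ⟨t, ht⟩, rfl⟩ := IsLocalization.exists_mk'_eq B⁰ z
    obtain ⟨b, s, rfl⟩ := IsLocalization.exists_mk'_eq M b
    obtain ⟨t, s', rfl⟩ := IsLocalization.exists_mk'_eq M t
    obtain ⟨a, i, hi, hn⟩ := aux_nzd t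
    have hi0 : algebraMap A B i = 0 := by
      have := mul_right_mem_nonZeroDivisors_eq_zero_iff ht (x := algebraMap A B i)
      apply this.mp
      rw [IsLocalization.mul_mk'_eq_mk'_of_mul, hi, IsLocalization.mk'_zero]
    refine ⟨⟨IsLocalization.mk' K (b * s' * a) ⟨_, hn⟩, ⟨algebraMap A K s, s, s.2, rfl⟩⟩, ?_⟩
    have hu : IsUnit (algebraMap K L (algebraMap A K (a * t + i))) :=
      (IsLocalization.map_units K (⟨_, hn⟩ : A⁰)).map _
    apply hu.mul_left_injective
    dsimp only
    rw [← map_mul, IsLocalization.mk'_spec' K (b * s' * a) ⟨_, hn⟩ |> (mul_comm _ _).trans]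
    simp only [hAL, map_add, map_mul, hi0, map_zero, add_zero]
    have e1 : algebraMap B L (IsLocalization.mk' B b s) * algebraMap B L (algebraMap A B s)
        = algebraMap B L (algebraMap A B b) := by
      rw [← map_mul, IsLocalization.mk'_spec]
    have e2 : algebraMap B L (IsLocalization.mk' B t s') * algebraMap B L (algebraMap A B s')
        = algebraMap B L (algebraMap A B t) := by
      rw [← map_mul, IsLocalization.mk'_spec]
    have e3 := IsLocalization.mk'_spec L (IsLocalization.mk' B b s) ⟨_, ht⟩
    dsimp only at e3
    rw [← e1, ← e2, ← e3]
    ring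
  · intro x y hxy
    obtain ⟨x, y, t, rfl, rfl⟩ : ∃ x' y' : A, ∃ t : A⁰, x = IsLocalization.mk' K x' t ∧
        y = IsLocalization.mk' K y' t := by
      obtain ⟨x, t, rfl⟩ := IsLocalization.exists_mk'_eq A⁰ x
      obtain ⟨y, u, rfl⟩ := IsLocalization.exists_mk'_eq A⁰ y
      exact ⟨x * u, y * t, t * u, (IsLocalization.mk'_cancel _ _ _).symm, by
        rw [mul_comm t u]; exact (IsLocalization.mk'_cancel _ _ _).symm⟩
    have h := congrArg (· * algebraMap K L (algebraMap A K t)) hxy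
    rw [← map_mul, ← map_mul, IsLocalization.mk'_spec, IsLocalization.mk'_spec, hAL, hAL] at h
    have h := IsFractionRing.injective B L h
    obtain ⟨c, hc⟩ := (IsLocalization.eq_iff_exists M B).mp h
    refine ⟨⟨algebraMap A K c, c, c.2, rfl⟩, ?_⟩
    dsimp only
    rw [IsLocalization.mul_mk'_eq_mk'_of_mul, IsLocalization.mul_mk'_eq_mk'_of_mul, hc]

/-- (C_A) B ⊆ C_B -/
lemma aux_cond1 [IsReduced A] [IsNoetherianRing A] (M : Submonoid A) [IsLocalization M B]
    (c : A) (hc : ∀ x ∈ integralClosure A K, algebraMap A K c * x ∈ (algebraMap A K).range)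
    (x : L) (hx : x ∈ integralClosure B L) :
    algebraMap B L (algebraMap A B c) * x ∈ (algebraMap B L).range := by
  have hAL : ∀ a : A, algebraMap K L (algebraMap A K a) = algebraMap B L (algebraMap A B a) := by
    intro a
    rw [← IsScalarTower.algebraMap_apply, ← IsScalarTower.algebraMap_apply]
  have : IsLocalization (Algebra.algebraMapSubmonoid K M) L := aux_loc (B := B) M
  obtain ⟨⟨y, _, m₁, hm₁, rfl⟩, e⟩ := IsLocalization.surj (Algebra.algebraMapSubmonoid K M) x
  dsimp only at e
  rw [hAL] at e
  obtain ⟨⟨m₂, hm₂⟩, h2⟩ := IsIntegral.exists_multiple_integral_of_isLocalization M x hx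
  simp only [Submonoid.smul_def, Algebra.smul_def] at h2
  obtain ⟨m₃, hm₃, h3⟩ := IsLocalization.exists_isIntegral_smul_of_isIntegral_map (Sₘ := L)
      M (x := m₂ • y) <| by
        rw [Algebra.smul_def, map_mul, ← e, ← IsScalarTower.algebraMap_apply, ← mul_assoc,
          ← IsScalarTower.algebraMap_apply]
        exact h2.mul isIntegral_algebraMap
  obtain ⟨d, hd⟩ := hc _ h3
  have hd' := congrArg (algebraMap K L) hd
  simp only [Algebra.smul_def, map_mul, hAL, ← e] at hd'
  refine ⟨IsLocalization.mk' B d ⟨m₁ * m₂ * m₃, mul_mem (mul_mem hm₁ hm₂) hm₃⟩, ?_⟩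
  have hu : IsUnit (algebraMap B L (algebraMap A B (m₁ * m₂ * m₃))) :=
    (IsLocalization.map_units B
      (⟨m₁ * m₂ * m₃, mul_mem (mul_mem hm₁ hm₂) hm₃⟩ : M)).map _
  apply hu.mul_left_injective
  dsimp only
  rw [← map_mul, IsLocalization.mk'_spec B d
    (⟨m₁ * m₂ * m₃, mul_mem (mul_mem hm₁ hm₂) hm₃⟩ : M), hd']
  simp only [map_mul]
  ring

/-- C_B ∩ A ⊆ C_A up to `M` -/
lemma aux_cond2 [IsReduced A] [IsNoetherianRing A] (M : Submonoid A) [IsLocalization M B]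
    [Module.Finite A (integralClosure A K)]
    (c : A) (hc : ∀ x ∈ integralClosure B L,
      algebraMap B L (algebraMap A B c) * x ∈ (algebraMap B L).range) :
    ∃ s ∈ M, ∀ x ∈ integralClosure A K, algebraMap A K (s * c) * x ∈ (algebraMap A K).range := by
  have hAL : ∀ a : A, algebraMap K L (algebraMap A K a) = algebraMap B L (algebraMap A B a) := by
    intro a
    rw [← IsScalarTower.algebraMap_apply, ← IsScalarTower.algebraMap_apply]
  have : IsLocalization (Algebra.algebraMapSubmonoid K M) L := aux_loc (B := B) M
  have h1 : ∀ y : integralClosure A K, ∃ s ∈ M,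
      algebraMap A K (s * c) * y ∈ (algebraMap A K).range := by
    rintro ⟨y, hy⟩
    have hy' : algebraMap K L y ∈ integralClosure B L :=
      (IsIntegral.map (IsScalarTower.toAlgHom A K L) hy : IsIntegral A _).tower_top
    obtain ⟨b, hb⟩ := hc _ hy'
    obtain ⟨a, s, rfl⟩ := IsLocalization.exists_mk'_eq M b
    have hb2 := congrArg (· * algebraMap B L (algebraMap A B s)) hb
    simp only [← map_mul, IsLocalization.mk'_spec] at hb2
    have hb3 : algebraMap K L (algebraMap A K a) = algebraMap K L (algebraMap A K (s * c) * y) := by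
      rw [hAL, hb2]
      simp only [map_mul, hAL]
      ring
    obtain ⟨⟨_, m, hm, rfl⟩, h⟩ :=
      (IsLocalization.eq_iff_exists (Algebra.algebraMapSubmonoid K M) _).mp hb3
    refine ⟨m * s, mul_mem hm s.2, m * a, ?_⟩
    dsimp only at h
    rw [map_mul, h]
    simp only [map_mul]
    ring
  choose s hs h using h1
  obtain ⟨F, hF⟩ := Module.Finite.fg_top (R := A) (M := integralClosure A K)
  refine ⟨∏ y ∈ F, s y, prod_mem fun y _ => hs y, ?_⟩
  intro x hx
  have hx' : (⟨x, hx⟩ : integralClosure A K) ∈ Submodule.span A (F : Set (integralClosure A K)) := by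
    rw [hF]; trivial
  have key : ∀ z ∈ Submodule.span A (F : Set (integralClosure A K)),
      algebraMap A K ((∏ y ∈ F, s y) * c) * (z : K) ∈ (algebraMap A K).range := by
    intro z hz
    induction hz using Submodule.span_induction with
    | mem y hy =>
      obtain ⟨d, hd⟩ := Finset.dvd_prod_of_mem s hy
      rw [hd, show s y * d * c = d * (s y * c) by ring, map_mul, mul_assoc]
      exact mul_mem ⟨d, rfl⟩ (h y)
    | zero => simp
    | add u v _ _ hu hv =>
      rw [show ((u + v : integralClosure A K) : K) = u + v from rfl, mul_add]
      exact add_mem hu hv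
    | smul a u _ hu =>
      rw [show ((a • u : integralClosure A K) : K) = a • (u : K) from rfl, Algebra.smul_def,
        mul_left_comm]
      exact mul_mem ⟨a, rfl⟩ hu
  exact key _ hx'
end aux

lemma cond_loc (A : Type*) [CommRing A] [IsReduced A] [IsNoetherianRing A]
    (P : PrimeSpectrum A) :
    (∀ c ∈ conductorIdeal A, algebraMap A (Localization.AtPrime P.asIdeal) c ∈
      conductorIdeal (Localization.AtPrime P.asIdeal)) ∧
    (Module.Finite A (integralClosure A (FractionRing A)) →
      ∀ c, algebraMap A (Localization.AtPrime P.asIdeal) c ∈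
      conductorIdeal (Localization.AtPrime P.asIdeal) →
      ∃ s ∉ P.asIdeal, s * c ∈ conductorIdeal A) := by
  let B := Localization.AtPrime P.asIdeal
  let f : FractionRing A →+* FractionRing B :=
    IsLocalization.map (FractionRing B) (algebraMap A B)
      (IsLocalization.nonZeroDivisors_le_comap P.asIdeal.primeCompl B)
  let _ : Algebra (FractionRing A) (FractionRing B) := f.toAlgebra
  have : IsScalarTower A B (FractionRing B) := inferInstance
  have : IsScalarTower A (FractionRing A) (FractionRing B) := IsScalarTower.of_algebraMap_eq
    fun x => by
      rw [IsScalarTower.algebraMap_apply A B (FractionRing B)]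
      exact (IsLocalization.map_eq _ x).symm
  constructor
  · intro c hc x hx
    exact aux_cond1 (K := FractionRing A) P.asIdeal.primeCompl c hc x hx
  · intro _ c hc
    exact aux_cond2 (K := FractionRing A) P.asIdeal.primeCompl c hc

/-- Let `A` be a reduced Noetherian ring with finite normalization,
`W ⊆ Spec A` and `J ⊆ A` an ideal. (i) If `J` is a test ideal at `W` and `P ∈ W`,
then `J_P` is a test ideal for `A_P`. (ii) If `W ⊇ N(A)`, then `J` is a test ideal
for `A` iff it is a test ideal at `W`. -/
theorem test_ideal_localization
    (A : Type*) [CommRing A] [IsReduced A] [IsNoetherianRing A]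
    [Module.Finite A (integralClosure A (FractionRing A))]
    (W : Set (PrimeSpectrum A)) (J : Ideal A) :
    (IsTestIdealAt A W J → ∀ P ∈ W,
        IsTestIdeal (Localization.AtPrime P.asIdeal)
          (J.map (algebraMap A (Localization.AtPrime P.asIdeal)))) ∧
      (nonNormalLocus A ⊆ W → (IsTestIdeal A J ↔ IsTestIdealAt A W J)) := by
  have hI : ∀ P : PrimeSpectrum A, (∃ g ∈ J, g ∈ A⁰) →
      ∃ g ∈ J.map (algebraMap A (Localization.AtPrime P.asIdeal)),
        g ∈ (Localization.AtPrime P.asIdeal)⁰ := by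
    rintro P ⟨g, hg, hg'⟩
    exact ⟨_, Ideal.mem_map_of_mem _ hg,
      IsLocalization.nonZeroDivisors_le_comap P.asIdeal.primeCompl _ hg'⟩
  refine ⟨?_, ?_⟩
  · rintro ⟨h1, h2, h3⟩ P hP
    refine ⟨hI P h1, ?_, h3 P hP⟩
    have := IsLocalization.map_radical P.asIdeal.primeCompl
      (Localization.AtPrime P.asIdeal) J
    rw [h2.radical] at this
    rw [this]
    exact Ideal.radical_isRadical _
  · intro hW
    refine ⟨?_, ?_⟩
    · rintro ⟨h1, h2, h3⟩
      refine ⟨h1, h2, fun P hP Q hQ => ?_⟩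
      have hQ' : PrimeSpectrum.comap (algebraMap A (Localization.AtPrime P.asIdeal)) Q ∈
          PrimeSpectrum.zeroLocus (conductorIdeal A : Set A) := fun c hc =>
        hQ ((cond_loc A P).1 c hc)
      exact Ideal.map_le_iff_le_comap.mpr (h3 hQ')
    · rintro ⟨h1, h2, h3⟩
      refine ⟨h1, h2, fun P hP => ?_⟩
      have hC : ∀ b ∈ conductorIdeal (Localization.AtPrime P.asIdeal),
          b ∈ IsLocalRing.maximalIdeal (Localization.AtPrime P.asIdeal) := by
        intro b hb
        obtain ⟨c, s, rfl⟩ := IsLocalization.exists_mk'_eq P.asIdeal.primeCompl b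
        have hc : algebraMap A (Localization.AtPrime P.asIdeal) c ∈
            conductorIdeal (Localization.AtPrime P.asIdeal) := by
          rw [← IsLocalization.mk'_spec (Localization.AtPrime P.asIdeal) c s]
          exact Ideal.mul_mem_right _ _ hb
        obtain ⟨s', hs', hsc⟩ := (cond_loc A P).2 inferInstance c hc
        have hcP : c ∈ P.asIdeal := (P.isPrime.mem_or_mem (hP hsc)).resolve_left hs'
        exact (IsLocalization.AtPrime.mk'_mem_maximal_iff _ P.asIdeal c s).mpr hcP
      have hPN : P ∈ nonNormalLocus A := by
        intro hbot
        apply (Ideal.ne_top_iff_one _).mp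
          (IsLocalRing.maximalIdeal.isMaximal (Localization.AtPrime P.asIdeal)).ne_top
        apply hC
        intro x hx
        rw [hbot] at hx
        obtain ⟨y, hy⟩ := Algebra.mem_bot.mp hx
        exact ⟨y, by rw [map_one, one_mul, hy]⟩
      have h := h3 P (hW hPN) (show (⟨IsLocalRing.maximalIdeal (Localization.AtPrime P.asIdeal),
        inferInstance⟩ : PrimeSpectrum _) ∈ _ from hC)
      have h' := Ideal.map_le_iff_le_comap.mp
        (show J.map _ ≤ IsLocalRing.maximalIdeal (Localization.AtPrime P.asIdeal) from h)
      intro a ha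
      exact (IsLocalization.AtPrime.to_map_mem_maximal_iff _ P.asIdeal a).mp (h' ha)
end
end
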